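/- Assume ε = 1/6 or ε = −1/6. Then there exist h₀ > 0 and C > 0, depending only on V₁ and V₂, such that for every C^∞ 1-periodic φ : ℝ → ℂ and every positive integer N with h = 1/N ≤ h₀, the Nyström system with data g = Wφ has a unique solution (φ₀,…,φ_{N−1}), and for every step function χ_h ∈ S_h whose Fourier coefficients satisfy χ̂_h(m) = φ̂(m) for all integers m with −N/2 < m ≤ N/2, one has ‖φ_h − χ_h‖₀ ≤ C h² ‖φ‖₃, where φ_h = Σ_{j=0}^{N−1} φ_j χ_j. -/

import Mathlib

/-!
Everything is expressed through Fourier coefficients. A smooth doubly periodic kernel is expanded in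
the variables `s` and `t - s` (`SPK.expansion`), with coefficients decaying faster than any power. In
these terms the operator `W` sends the exponential with frequency `m` to a series over the frequencies
`n + m` whose coefficients form a symbol `wS n m` (`KData.Wop_hasSum`), and the Nyström matrix acts on
grid values of exponentials through an analogous symbol `wD n m` (`KData.Wmat_ew`), in which
derivatives are replaced by centred differences and the Fourier coefficients `-1/|n|` of
`log sin² (π x)` by their discrete counterparts `FN`. On grid values of trigonometric polynomials the
matrix becomes the convolution-type operator `TN` (`KData.Wmat_TN`).

The choice `ε = ±1/6` enters through `FN`. By aliasing, `FN n` differs from `-1/|n|` by a series over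
the frequencies `n + pN`, `p ≠ 0`, whose value at `n = 0` is proportional to `log (4 sin² (π ε))` and
hence vanishes, because `4 sin² (π ε) = 1`. The error is therefore `O(|n|/N²)` instead of `O(1/N)`
(`FN_hasSum`, `FN_consist`), and pairing the aliases `±p` shows `|FN n| ≥ 1/(2|n|)` for `|n| ≤ N/2`
(`FN_lower`).

Stability. As the diagonal of `A₁` is the nonzero constant `α`, the symbol `wD n m` is bounded for
`n ≠ 0`, with rapid decay in `n`, while `|wD 0 m|` grows at least like `|m|`, uniformly in `N`
(`wD_off`, `wD_diag`). This gives a discrete elliptic estimate. If stability failed, a sequence of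
unit vectors with images tending to zero would be tight in frequency, and its limit would be a
nonzero null sequence of `W`; by elliptic regularity it decays rapidly, so it is the sequence of Fourier
coefficients of a smooth null function of `W`, contradicting injectivity (`tightness`, `regularity`,
`abstract_stability`, `KData.seq_injective`).

Consistency. The symbols satisfy `|wD n m - wS n m| ≤ a(n) |m|³ / N²` up to replacing `|m|` by
`1 + |m|` (`wD_consist`); with the discrete Parseval identity this bounds the residual of the sampled
central Fourier part of `φ` by `C N⁻² ‖φ‖₃` (`KData.consistency`). Finally, a step function with the central
Fourier coefficients of `φ` has grid values whose discrete coefficients differ from those of `φ` by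
the factor `sin (πm/N) / (πm/N)`, again an error of second order (`step_coeff_close`). The triangle inequality
combines the two estimates.
-/

noncomputable section

/-- Smooth kernel data, 1-periodic in each variable. -/
def SPK (A : ℝ → ℝ → ℂ) : Prop :=
  ContDiff ℝ (⊤ : ℕ∞) (fun p : ℝ × ℝ => A p.1 p.2) ∧
    (∀ s t, A (s + 1) t = A s t) ∧ (∀ s t, A s (t + 1) = A s t)

/-- Logarithmic kernel `V(s,t) = (i/(2π)) A(s,t) log(sin²(π(s−t))) + K(s,t)`. -/
def logKer (A K : ℝ → ℝ → ℂ) (s t : ℝ) : ℂ :=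
  Complex.I / (2 * Real.pi) * A s t * (Real.log (Real.sin (Real.pi * (s - t)) ^ 2) : ℂ) + K s t

/-- Grid point `s_{j+ε} = (j − 1/2 + ε)h`. -/
def sg (h ε : ℝ) (j : ℤ) : ℝ := ((j : ℝ) - 1 / 2 + ε) * h

/-- Grid point `t_{j+ε} = (j + ε)h`. -/
def tg (h ε : ℝ) (j : ℤ) : ℝ := ((j : ℝ) + ε) * h

/-- Integral operator with kernel `V`. -/
def Vop (V : ℝ → ℝ → ℂ) (φ : ℝ → ℂ) (s : ℝ) : ℂ := ∫ t in (0:ℝ)..1, V s t * φ t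

/-- Hypersingular operator `W = −D V₁ D + V₂`. -/
def Wop (V1 V2 : ℝ → ℝ → ℂ) (φ : ℝ → ℂ) (s : ℝ) : ℂ :=
  -deriv (Vop V1 (deriv φ)) s + Vop V2 φ s

/-- Nyström matrix entries `W^ε_{ij}`. -/
def Wmat (V1 V2 : ℝ → ℝ → ℂ) (h ε : ℝ) (i j : ℤ) : ℂ :=
  V1 (sg h ε (i + 1)) (sg h 0 (j + 1)) - V1 (sg h ε i) (sg h 0 (j + 1))
    - V1 (sg h ε (i + 1)) (sg h 0 j) + V1 (sg h ε i) (sg h 0 j)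
    + (h : ℂ) ^ 2 * V2 (tg h ε i) (tg h 0 j)

/-- Fourier coefficient of a 1-periodic function. -/
def fc (u : ℝ → ℂ) (m : ℤ) : ℂ :=
  ∫ t in (0:ℝ)..1, u t * Complex.exp (-(2 * Real.pi * Complex.I * (m : ℂ) * (t : ℂ)))

/-- Periodic Sobolev norm of order `r`. -/
def sobNorm (r : ℝ) (u : ℝ → ℂ) : ℝ :=
  Real.sqrt (‖fc u 0‖ ^ 2 +
    ∑' m : ℤ, if m = 0 then 0 else |(m : ℝ)| ^ (2 * r) * ‖fc u m‖ ^ 2)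

/-- 1-periodic step function on the ε-shifted grid with coefficients `v`. -/
def stepf (N : ℕ) (ε : ℝ) (v : ZMod N → ℂ) (s : ℝ) : ℂ :=
  v ((⌊s * N + 1 / 2 - ε⌋ : ℤ) : ZMod N)

/-- Midpoint quadrature error matrix entries `E^ε_{ij}`. -/
def Emat (V2 : ℝ → ℝ → ℂ) (h ε : ℝ) (i j : ℤ) : ℂ :=
  (∫ s in (sg h ε i)..(sg h ε (i + 1)), ∫ t in (sg h 0 j)..(sg h 0 (j + 1)), V2 s t)
    - (h : ℂ) ^ 2 * V2 (tg h ε i) (tg h 0 j)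

/-- Spectral (ℓ²-operator) norm of a complex `N×N` matrix. -/
def specNorm {N : ℕ} (M : Matrix (Fin N) (Fin N) ℂ) : ℝ :=
  ‖LinearMap.toContinuousLinearMap (Matrix.toEuclideanLin M)‖

/-- The function `C̄₁(t) = −(1/(2πi)) log(4 sin²(πt))`. -/
def Cbar1 (t : ℝ) : ℂ :=
  -(1 / (2 * Real.pi * Complex.I)) * (Real.log (4 * Real.sin (Real.pi * t) ^ 2) : ℂ)

end

/-- The Nyström linear system with data `g = Wφ`:
`Σ_j W^ε_{ij} v_j = h (Wφ)(t_{i+ε})`, `i = 0,…,N−1`. -/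
def Nys (V1 V2 : ℝ → ℝ → ℂ) (ε : ℝ) (N : ℕ) [NeZero N] (φ : ℝ → ℂ)
    (v : ZMod N → ℂ) : Prop :=
  ∀ i : ZMod N,
    (∑ j : ZMod N,
        Wmat V1 V2 (1 / (N : ℝ)) ε ((i.val : ℕ) : ℤ) ((j.val : ℕ) : ℤ) * v j)
      = (1 / (N : ℂ)) * Wop V1 V2 φ (tg (1 / (N : ℝ)) ε ((i.val : ℕ) : ℤ))

noncomputable section

open Filter Topology

/-! ### Exponentials and discrete Fourier analysis on the grid -/

/-- The exponential `e^{2πinx}`. -/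
def ew (n : ℤ) (x : ℝ) : ℂ := Complex.exp (2 * Real.pi * Complex.I * (n : ℂ) * (x : ℂ))

/-- The weight `1 + |n|`; unlike `max 1 |n|` it is submultiplicative without a constant. -/
def jb (n : ℤ) : ℝ := 1 + |(n : ℝ)|

lemma one_le_jb (n : ℤ) : 1 ≤ jb n := by unfold jb; linarith [abs_nonneg (n : ℝ)]

lemma jb_pos (n : ℤ) : 0 < jb n := lt_of_lt_of_le one_pos (one_le_jb n)

lemma abs_le_jb (n : ℤ) : |(n : ℝ)| ≤ jb n := by unfold jb; linarith

lemma jb_add_le (m n : ℤ) : jb (m + n) ≤ jb m * jb n := by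
  unfold jb
  push_cast
  have := abs_add_le (m : ℝ) n
  nlinarith [abs_nonneg (m : ℝ), abs_nonneg (n : ℝ), mul_nonneg (abs_nonneg (m : ℝ)) (abs_nonneg (n : ℝ))]

lemma jb_neg (n : ℤ) : jb (-n) = jb n := by simp [jb]

lemma jb_le_add (m n : ℤ) : jb m ≤ jb (m + n) * jb n := by
  have := jb_add_le (m + n) (-n)
  rwa [jb_neg, add_neg_cancel_right] at this

lemma norm_ew (n : ℤ) (x : ℝ) : ‖ew n x‖ = 1 := by
  unfold ew
  rw [show (2 * Real.pi * Complex.I * (n : ℂ) * (x : ℂ)) =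
    ((2 * Real.pi * n * x : ℝ) : ℂ) * Complex.I by push_cast; ring]
  exact Complex.norm_exp_ofReal_mul_I _

lemma ew_ne_zero (n : ℤ) (x : ℝ) : ew n x ≠ 0 := Complex.exp_ne_zero _

lemma ew_add (m n : ℤ) (x : ℝ) : ew (m + n) x = ew m x * ew n x := by
  unfold ew; rw [← Complex.exp_add]; push_cast; ring_nf

lemma ew_add_arg (n : ℤ) (x y : ℝ) : ew n (x + y) = ew n x * ew n y := by
  unfold ew; rw [← Complex.exp_add]; push_cast; ring_nf

@[simp] lemma ew_zero (x : ℝ) : ew 0 x = 1 := by simp [ew]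

@[simp] lemma ew_zero_arg (n : ℤ) : ew n 0 = 1 := by simp [ew]

lemma ew_neg (n : ℤ) (x : ℝ) : ew (-n) x = ew n (-x) := by
  unfold ew; push_cast; ring_nf

lemma ew_int (n k : ℤ) : ew n k = 1 := by
  unfold ew
  rw [Complex.exp_eq_one_iff]
  exact ⟨n * k, by push_cast; ring⟩

lemma ew_periodic (n : ℤ) : Function.Periodic (ew n) 1 := by
  intro x
  have := ew_int n 1
  rw [ew_add_arg, show (1 : ℝ) = ((1 : ℤ) : ℝ) by simp, this, mul_one]

lemma ew_neg_mul (n : ℤ) (x : ℝ) : ew (-n) x * ew n x = 1 := by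
  rw [← ew_add]; simp

lemma conj_ew (n : ℤ) (x : ℝ) : (starRingEnd ℂ) (ew n x) = ew (-n) x := by
  unfold ew
  rw [← Complex.exp_conj]
  simp [map_ofNat (starRingEnd ℂ) 2]

lemma continuous_ew (n : ℤ) : Continuous (ew n) := by
  unfold ew; fun_prop

lemma hasDerivAt_ew (n : ℤ) (x : ℝ) :
    HasDerivAt (ew n) (2 * Real.pi * Complex.I * n * ew n x) x := by
  have h : HasDerivAt (fun y : ℝ => 2 * Real.pi * Complex.I * (n : ℂ) * (y : ℂ))
      (2 * Real.pi * Complex.I * (n : ℂ)) x := by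
    simpa using (Complex.ofRealCLM.hasDerivAt (x := x)).const_mul (2 * Real.pi * Complex.I * (n : ℂ))
  have := h.cexp
  unfold ew
  convert this using 1
  ring

lemma contDiff_ew (n : ℤ) : ContDiff ℝ (⊤ : ℕ∞) (ew n) := by
  unfold ew
  have : ContDiff ℝ (⊤ : ℕ∞) (fun x : ℝ => (x : ℂ)) := Complex.ofRealCLM.contDiff
  fun_prop

/-- Values of a mode at the shifted grid points, through the standard character of `ZMod N`. -/
lemma ew_grid (N : ℕ) [NeZero N] (n : ℤ) (ε : ℝ) (k : ZMod N) :
    ew n (((k.val : ℝ) + ε) / N) = ew n (ε / N) * ZMod.stdAddChar ((n : ZMod N) * k) := by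
  have hN : (N : ℂ) ≠ 0 := by exact_mod_cast NeZero.ne N
  have : ((n : ZMod N) * k) = ((n * (k.val : ℤ) : ℤ) : ZMod N) := by simp
  rw [this, ZMod.stdAddChar_coe, add_div, add_comm, ew_add_arg]
  congr 1
  unfold ew
  congr 1
  push_cast
  field_simp

lemma sum_ew_grid (N : ℕ) [NeZero N] (n : ℤ) (ε : ℝ) :
    ∑ k : ZMod N, ew n (((k.val : ℝ) + ε) / N) =
      if (n : ZMod N) = 0 then (N : ℂ) * ew n (ε / N) else 0 := by
  simp_rw [ew_grid]
  rw [← Finset.mul_sum]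
  have := AddChar.sum_mulShift (n : ZMod N) (ZMod.isPrimitive_stdAddChar N)
  simp_rw [mul_comm _ (n : ZMod N)] at this
  rw [this]
  split_ifs <;> simp [ZMod.card, mul_comm]

/-- Discrete Parseval identity for a family of modes hitting every residue class once. -/
lemma parseval_grid (N : ℕ) [NeZero N] (ε : ℝ) (b : ZMod N → ℤ) (d : ZMod N)
    (hb : ∀ r, (b r : ZMod N) = r + d) (x : ZMod N → ℂ) :
    ∑ i : ZMod N, ‖∑ r, x r * ew (b r) (((i.val : ℝ) + ε) / N)‖ ^ 2 = N * ∑ r, ‖x r‖ ^ 2 := by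
  have key : ∀ r r' : ZMod N, ∑ i : ZMod N, ew (b r + -b r') (((i.val : ℝ) + ε) / N) =
      if r = r' then (N : ℂ) else 0 := by
    intro r r'
    rw [sum_ew_grid]
    by_cases h : r = r'
    · subst h; simp
    · rw [if_neg h, if_neg]
      push_cast
      rw [hb, hb]
      intro h'
      apply h
      linear_combination h'
  apply Complex.ofReal_injective
  push_cast
  simp_rw [← Complex.mul_conj', map_sum, map_mul, conj_ew, Finset.sum_mul_sum]
  rw [Finset.sum_comm]
  calc _ = ∑ r, ∑ r', x r * (starRingEnd ℂ) (x r') *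
        ∑ i : ZMod N, ew (b r + -b r') (((i.val : ℝ) + ε) / N) := by
        refine Finset.sum_congr rfl fun r _ => ?_
        rw [Finset.sum_comm]
        refine Finset.sum_congr rfl fun r' _ => ?_
        rw [Finset.mul_sum]
        refine Finset.sum_congr rfl fun i _ => ?_
        rw [ew_add]; ring
    _ = _ := by
        simp_rw [key]
        simp [Finset.mul_sum, mul_comm]

/-- A 1-periodic function on a shifted grid only sees the index modulo `N`. -/
lemma periodic_grid {β : Type*} (N : ℕ) [NeZero N] (g : ℝ → β) (hg : Function.Periodic g 1) (ε : ℝ)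
    (a : ℤ) : g (((a : ℝ) + ε) / N) = g (((((a : ZMod N)).val : ℝ) + ε) / N) := by
  have hN : (N : ℝ) ≠ 0 := by exact_mod_cast NeZero.ne N
  have h1 : (((a : ZMod N).val : ℤ) : ZMod N) = (a : ZMod N) := by simp
  rw [ZMod.intCast_eq_intCast_iff_dvd_sub] at h1
  obtain ⟨c, hc⟩ := h1
  have hc' : (a : ℝ) = ((a : ZMod N).val : ℝ) + N * c := by
    have : (a : ℝ) - (((a : ZMod N).val : ℤ) : ℝ) = N * c := by exact_mod_cast hc
    push_cast at this
    linarith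
  have : ((a : ℝ) + ε) / N = (((a : ZMod N).val : ℝ) + ε) / N + c * 1 := by
    rw [hc']; field_simp; ring
  rw [this]
  exact hg.int_mul c _

lemma rep_bound (N : ℕ) [NeZero N] (r : ZMod N) : 2 * |(r.valMinAbs : ℝ)| ≤ N := by
  have h := r.valMinAbs_mem_Ioc
  have h1 : (-(N : ℤ) : ℝ) < r.valMinAbs * 2 := by exact_mod_cast h.1
  have h2 : (r.valMinAbs * 2 : ℝ) ≤ N := by exact_mod_cast h.2
  push_cast at h1
  rcases abs_cases (r.valMinAbs : ℝ) with ⟨h, _⟩ | ⟨h, _⟩ <;> rw [h] <;> linarith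

lemma rep_of_small (N : ℕ) [NeZero N] (k : ℤ) (hk : 2 * |k| < N) :
    ((k : ZMod N)).valMinAbs = k := by
  rw [ZMod.valMinAbs_spec]
  refine ⟨rfl, ?_, ?_⟩ <;> rcases abs_cases k with ⟨h, _⟩ | ⟨h, _⟩ <;> omega

/-- The vector of grid values at `t_{j+ε}` of the trigonometric polynomial with coefficients `u`
at the central frequencies. -/
def synth (N : ℕ) [NeZero N] (ε : ℝ) (u : ZMod N → ℂ) (i : ZMod N) : ℂ :=
  ∑ r : ZMod N, u r * ew r.valMinAbs (((i.val : ℝ) + ε) / N)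

lemma synth_parseval (N : ℕ) [NeZero N] (ε : ℝ) (u : ZMod N → ℂ) :
    ∑ i, ‖synth N ε u i‖ ^ 2 = N * ∑ r, ‖u r‖ ^ 2 :=
  parseval_grid N ε (fun r => r.valMinAbs) 0 (by simp) u

/-- `synth` as a linear map. -/
def synthL (N : ℕ) [NeZero N] (ε : ℝ) : (ZMod N → ℂ) →ₗ[ℂ] (ZMod N → ℂ) where
  toFun := synth N ε
  map_add' u v := by ext i; simp [synth, add_mul, Finset.sum_add_distrib]
  map_smul' c u := by ext i; simp [synth, Finset.mul_sum, mul_assoc]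

lemma synthL_injective (N : ℕ) [NeZero N] (ε : ℝ) : Function.Injective (synthL N ε) := by
  rw [← LinearMap.ker_eq_bot, LinearMap.ker_eq_bot']
  intro u hu
  have h := synth_parseval N ε u
  have h0 : ∀ i, synth N ε u i = 0 := fun i => congrFun hu i
  simp only [h0, norm_zero] at h
  have hN : (N : ℝ) ≠ 0 := by exact_mod_cast NeZero.ne N
  have h2 : ∑ r, ‖u r‖ ^ 2 = 0 := by
    simpa [hN] using h.symm
  ext r
  rw [Finset.sum_eq_zero_iff_of_nonneg (fun _ _ => by positivity)] at h2
  simpa using h2 r (Finset.mem_univ r)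

lemma synthL_surjective (N : ℕ) [NeZero N] (ε : ℝ) : Function.Surjective (synthL N ε) :=
  LinearMap.injective_iff_surjective.mp (synthL_injective N ε)

/-! ### Discrete operators in Fourier coordinates -/

/-- Nonnegative sequences decaying faster than any power of the frequency. -/
def Rapid (a : ℤ → ℝ) : Prop :=
  (∀ n, 0 ≤ a n) ∧ ∀ j : ℕ, Summable (fun n => jb n ^ j * a n)

lemma Rapid.summable {a : ℤ → ℝ} (ha : Rapid a) : Summable a := by
  simpa using ha.2 0

/-- Minkowski inequality for infinite sums of vectors, in coordinates. -/
lemma l2_tsum {ι κ : Type*} [Fintype κ] (X : ι → κ → ℂ) (b : ι → ℝ) (hb : Summable b)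
    (hb0 : ∀ i, 0 ≤ b i) (hX : ∀ i, ∑ k, ‖X i k‖ ^ 2 ≤ b i ^ 2) :
    ∑ k, ‖∑' i, X i k‖ ^ 2 ≤ (∑' i, b i) ^ 2 := by
  let Y : ι → EuclideanSpace ℂ κ := fun i => WithLp.toLp 2 (X i)
  have hY : ∀ i, ‖Y i‖ ≤ b i := by
    intro i
    rw [EuclideanSpace.norm_eq]
    exact Real.sqrt_le_iff.mpr ⟨hb0 i, hX i⟩
  have hs : Summable Y := Summable.of_norm_bounded hb hY
  have hc : ∀ k, (∑' i, Y i) k = ∑' i, X i k := by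
    intro k
    exact (EuclideanSpace.proj (𝕜 := ℂ) k : EuclideanSpace ℂ κ →L[ℂ] ℂ).map_tsum hs
  have hn : ‖∑' i, Y i‖ ≤ ∑' i, b i := tsum_of_norm_bounded hb.hasSum hY
  have := pow_le_pow_left₀ (norm_nonneg _) hn 2
  rw [EuclideanSpace.norm_sq_eq] at this
  simpa only [hc] using this

/-- The discrete operator in Fourier coordinates: the symbol `w n m` sends the mode `m` to the mode
`m + n`, which on the shifted grid coincides, up to a unimodular factor, with the central
representative of its residue class. -/
def TN (N : ℕ) [NeZero N] (ε : ℝ) (w : ℤ → ℤ → ℂ) (u : ZMod N → ℂ) (k : ZMod N) : ℂ :=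
  ∑' n : ℤ, ew ((k - n).valMinAbs + n - k.valMinAbs) (ε / N) * w n (k - n).valMinAbs * u (k - n)

lemma TN_smul (N : ℕ) [NeZero N] (ε : ℝ) (w : ℤ → ℤ → ℂ) (c : ℂ) (u : ZMod N → ℂ) (k : ZMod N) :
    TN N ε w (fun k => c * u k) k = c * TN N ε w u k := by
  unfold TN
  rw [← tsum_mul_left]
  exact tsum_congr fun n => by ring

lemma TN_summable (N : ℕ) [NeZero N] (ε : ℝ) (w : ℤ → ℤ → ℂ) (a : ℤ → ℝ) (ha : Rapid a)
    (h1 : ∀ n ≠ 0, ∀ m : ℤ, 2 * |(m : ℝ)| ≤ N → ‖w n m‖ ≤ a n) (u : ZMod N → ℂ) (k : ZMod N) :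
    Summable fun n : ℤ =>
      ew ((k - n).valMinAbs + n - k.valMinAbs) (ε / N) * w n (k - n).valMinAbs * u (k - n) := by
  refine Summable.of_norm_bounded_eventually (g := fun n => a n * ∑ k, ‖u k‖)
    (ha.summable.mul_right _) ?_
  have : ∀ᶠ n : ℤ in cofinite, n ≠ 0 := by
    simpa using (Set.finite_singleton (0 : ℤ)).eventually_cofinite_notMem
  filter_upwards [this] with n hn
  rw [norm_mul, norm_mul, norm_ew, one_mul]
  exact mul_le_mul (h1 n hn _ (rep_bound N _))
    (Finset.single_le_sum (f := fun k => ‖u k‖) (fun _ _ => norm_nonneg _) (Finset.mem_univ _))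
    (norm_nonneg _) (ha.1 n)

/-- Young's inequality on `ZMod N` for convolution with a summable sequence on `ℤ`. -/
lemma conv_l2 (N : ℕ) [NeZero N] (a : ℤ → ℝ) (ha : Rapid a) (u : ZMod N → ℂ) :
    ∑ k : ZMod N, (∑' n : ℤ, a n * ‖u (k - n)‖) ^ 2 ≤
      (∑' n, a n) ^ 2 * ∑ k, ‖u k‖ ^ 2 := by
  have h0 : 0 ≤ ∑ k, ‖u k‖ ^ 2 := Finset.sum_nonneg fun _ _ => by positivity
  have hX : ∀ n : ℤ, ∑ k : ZMod N, ‖((a n * ‖u (k - n)‖ : ℝ) : ℂ)‖ ^ 2 ≤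
      (a n * Real.sqrt (∑ k, ‖u k‖ ^ 2)) ^ 2 := by
    intro n
    simp only [Complex.norm_real, Real.norm_eq_abs, sq_abs, mul_pow]
    rw [← Finset.mul_sum, Real.sq_sqrt h0]
    apply le_of_eq
    congr 1
    exact (Equiv.subRight (n : ZMod N)).sum_comp (fun k => ‖u k‖ ^ 2)
  have := l2_tsum (fun (n : ℤ) (k : ZMod N) => ((a n * ‖u (k - n)‖ : ℝ) : ℂ))
    (fun n => a n * Real.sqrt (∑ k, ‖u k‖ ^ 2)) (ha.summable.mul_right _)
    (fun n => mul_nonneg (ha.1 n) (Real.sqrt_nonneg _)) hX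
  rw [tsum_mul_right, mul_pow, Real.sq_sqrt h0] at this
  refine le_trans (le_of_eq ?_) this
  refine Finset.sum_congr rfl fun k _ => ?_
  rw [← Complex.ofReal_tsum, Complex.norm_real, Real.norm_eq_abs, sq_abs]

/-- Discrete ellipticity: one derivative of `u` is controlled by `TN u` and `u`. -/
lemma TN_elliptic (N : ℕ) [NeZero N] (ε : ℝ) (w : ℤ → ℤ → ℂ) (a : ℤ → ℝ) (ha : Rapid a)
    (c : ℝ) (hc : 0 < c)
    (h1 : ∀ n ≠ 0, ∀ m : ℤ, 2 * |(m : ℝ)| ≤ N → ‖w n m‖ ≤ a n)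
    (h2 : ∀ m : ℤ, 2 * |(m : ℝ)| ≤ N → c * |(m : ℝ)| - a 0 ≤ ‖w 0 m‖) (u : ZMod N → ℂ) :
    c ^ 2 * ∑ k : ZMod N, |(k.valMinAbs : ℝ)| ^ 2 * ‖u k‖ ^ 2 ≤
      2 * ∑ k, ‖TN N ε w u k‖ ^ 2 + 2 * ((∑' n, a n) ^ 2 * ∑ k, ‖u k‖ ^ 2) := by
  set M := ∑ k, ‖u k‖
  have huM : ∀ k, ‖u k‖ ≤ M := fun k =>
    Finset.single_le_sum (f := fun k => ‖u k‖) (fun _ _ => norm_nonneg _) (Finset.mem_univ k)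
  have hsum : ∀ k : ZMod N, Summable fun n : ℤ => a n * ‖u (k - n)‖ := fun k =>
    Summable.of_nonneg_of_le (fun n => mul_nonneg (ha.1 n) (norm_nonneg _))
      (fun n => mul_le_mul_of_nonneg_left (huM _) (ha.1 n)) (ha.summable.mul_right M)
  have hpt : ∀ k : ZMod N, c * |(k.valMinAbs : ℝ)| * ‖u k‖ ≤
      ‖TN N ε w u k‖ + ∑' n : ℤ, a n * ‖u (k - n)‖ := by
    intro k
    have hs := TN_summable N ε w a ha h1 u k
    have e1 := hs.tsum_eq_add_tsum_ite 0
    have e2 := (hsum k).tsum_eq_add_tsum_ite 0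
    have e3 : ‖∑' n : ℤ, if n = 0 then 0 else
        ew ((k - n).valMinAbs + n - k.valMinAbs) (ε / N) * w n (k - n).valMinAbs * u (k - n)‖ ≤
        ∑' n : ℤ, if n = 0 then 0 else a n * ‖u (k - n)‖ := by
      refine tsum_of_norm_bounded (Summable.hasSum ?_) ?_
      · refine Summable.of_nonneg_of_le (fun n => ?_) (fun n => ?_) (hsum k)
        · split_ifs
          · exact le_rfl
          · exact mul_nonneg (ha.1 n) (norm_nonneg _)
        · split_ifs
          · exact mul_nonneg (ha.1 n) (norm_nonneg _)
          · exact le_rfl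
      · intro n
        split_ifs with hn
        · simp
        · rw [norm_mul, norm_mul, norm_ew, one_mul]
          exact mul_le_mul_of_nonneg_right (h1 n hn _ (rep_bound N _)) (norm_nonneg _)
    have e4 : TN N ε w u k = w 0 k.valMinAbs * u k + ∑' n : ℤ, if n = 0 then 0 else
        ew ((k - n).valMinAbs + n - k.valMinAbs) (ε / N) * w n (k - n).valMinAbs * u (k - n) := by
      unfold TN
      rw [e1]; simp
    have e5 : ‖w 0 k.valMinAbs * u k‖ ≤ ‖TN N ε w u k‖ +
        ∑' n : ℤ, if n = 0 then 0 else a n * ‖u (k - n)‖ := by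
      have : w 0 k.valMinAbs * u k = TN N ε w u k - ∑' n : ℤ, if n = 0 then 0 else
        ew ((k - n).valMinAbs + n - k.valMinAbs) (ε / N) * w n (k - n).valMinAbs * u (k - n) := by
        rw [e4]; ring
      rw [this]
      exact (norm_sub_le _ _).trans (by gcongr)
    rw [norm_mul] at e5
    have e6 := mul_le_mul_of_nonneg_right (h2 _ (rep_bound N k)) (norm_nonneg (u k))
    rw [e2]
    simp only [Int.cast_zero, sub_zero]
    nlinarith
  have hconv := conv_l2 N a ha u
  rw [Finset.mul_sum]
  calc _ ≤ ∑ k, (2 * ‖TN N ε w u k‖ ^ 2 + 2 * (∑' n : ℤ, a n * ‖u (k - n)‖) ^ 2) := by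
        refine Finset.sum_le_sum fun k _ => ?_
        have h0 : 0 ≤ c * |(k.valMinAbs : ℝ)| * ‖u k‖ := by positivity
        have := pow_le_pow_left₀ h0 (hpt k) 2
        nlinarith [sq_nonneg (‖TN N ε w u k‖ - ∑' n : ℤ, a n * ‖u (k - n)‖)]
    _ ≤ _ := by
        rw [Finset.sum_add_distrib, ← Finset.mul_sum, ← Finset.mul_sum]
        linarith

/-- Elliptic regularity in Fourier coordinates: a bounded null sequence of an operator whose
diagonal grows like `|k|` and whose off-diagonal part is bounded decays faster than any power. -/
lemma regularity (w : ℤ → ℤ → ℂ) (a : ℤ → ℝ) (ha : Rapid a) (c : ℝ) (hc : 0 < c)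
    (h1 : ∀ n ≠ 0, ∀ m : ℤ, ‖w n m‖ ≤ a n)
    (h2 : ∀ m : ℤ, c * |(m : ℝ)| - a 0 ≤ ‖w 0 m‖) (u : ℤ → ℂ) (hu : ∀ k, ‖u k‖ ≤ 1)
    (hw : ∀ k : ℤ, ∑' n : ℤ, w n (k - n) * u (k - n) = 0) (j : ℕ) :
    ∃ C, ∀ k, jb k ^ j * ‖u k‖ ≤ C := by
  have hsum : ∀ k : ℤ, Summable fun n : ℤ => a n * ‖u (k - n)‖ := fun k =>
    Summable.of_nonneg_of_le (fun n => mul_nonneg (ha.1 n) (norm_nonneg _))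
      (fun n => mul_le_mul_of_nonneg_left (hu _) (ha.1 n)) (ha.summable.mul_right 1)
  have hpt : ∀ k : ℤ, c * |(k : ℝ)| * ‖u k‖ ≤ ∑' n : ℤ, a n * ‖u (k - n)‖ := by
    intro k
    have hs : Summable fun n : ℤ => w n (k - n) * u (k - n) := by
      refine Summable.of_norm_bounded_eventually (g := fun n => a n * ‖u (k - n)‖) (hsum k) ?_
      have : ∀ᶠ n : ℤ in cofinite, n ≠ 0 := by
        simpa using (Set.finite_singleton (0 : ℤ)).eventually_cofinite_notMem
      filter_upwards [this] with n hn
      rw [norm_mul]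
      exact mul_le_mul_of_nonneg_right (h1 n hn _) (norm_nonneg _)
    have e1 := hs.tsum_eq_add_tsum_ite 0
    have e2 := (hsum k).tsum_eq_add_tsum_ite 0
    rw [hw k] at e1
    have e3 : ‖∑' n : ℤ, if n = 0 then 0 else w n (k - n) * u (k - n)‖ ≤
        ∑' n : ℤ, if n = 0 then 0 else a n * ‖u (k - n)‖ := by
      refine tsum_of_norm_bounded (Summable.hasSum ?_) ?_
      · refine Summable.of_nonneg_of_le (fun n => ?_) (fun n => ?_) (hsum k)
        · split_ifs
          · exact le_rfl
          · exact mul_nonneg (ha.1 n) (norm_nonneg _)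
        · split_ifs
          · exact mul_nonneg (ha.1 n) (norm_nonneg _)
          · exact le_rfl
      · intro n
        split_ifs with hn
        · simp
        · rw [norm_mul]
          exact mul_le_mul_of_nonneg_right (h1 n hn _) (norm_nonneg _)
    have e4 : w 0 k * u k = -∑' n : ℤ, if n = 0 then 0 else w n (k - n) * u (k - n) := by
      rw [sub_zero] at e1
      linear_combination -e1
    have e5 : ‖w 0 k‖ * ‖u k‖ ≤ ∑' n : ℤ, if n = 0 then 0 else a n * ‖u (k - n)‖ := by
      rw [← norm_mul, e4, norm_neg]; exact e3
    have e6 := mul_le_mul_of_nonneg_right (h2 k) (norm_nonneg (u k))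
    rw [e2, sub_zero]
    nlinarith
  induction j with
  | zero => exact ⟨1, fun k => by simpa using hu k⟩
  | succ j ih =>
    obtain ⟨C, hC⟩ := ih
    have hC0 : 0 ≤ C := le_trans (mul_nonneg (pow_nonneg (jb_pos 0).le _) (norm_nonneg _)) (hC 0)
    refine ⟨C + (C * ∑' n, jb n ^ j * a n) / c, fun k => ?_⟩
    have h3 : jb k ^ j * ∑' n : ℤ, a n * ‖u (k - n)‖ ≤ C * ∑' n, jb n ^ j * a n := by
      rw [← tsum_mul_left, ← tsum_mul_left]
      refine Summable.tsum_le_tsum (fun n => ?_) ((hsum k).mul_left _) ((ha.2 j).mul_left _)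
      have h5 : jb k ≤ jb (k - n) * jb n := by simpa using jb_add_le (k - n) n
      have h4 : jb k ^ j ≤ jb (k - n) ^ j * jb n ^ j := by
        rw [← mul_pow]
        exact pow_le_pow_left₀ (jb_pos _).le h5 j
      calc jb k ^ j * (a n * ‖u (k - n)‖)
          ≤ (jb (k - n) ^ j * jb n ^ j) * (a n * ‖u (k - n)‖) :=
            mul_le_mul_of_nonneg_right h4 (mul_nonneg (ha.1 n) (norm_nonneg _))
        _ = (jb (k - n) ^ j * ‖u (k - n)‖) * (jb n ^ j * a n) := by ring
        _ ≤ _ := mul_le_mul_of_nonneg_right (hC _)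
            (mul_nonneg (pow_nonneg (jb_pos n).le _) (ha.1 n))
    have h6 := mul_le_mul_of_nonneg_left (hpt k) (pow_nonneg (jb_pos k).le j)
    have h7 : jb k ^ j * (|(k : ℝ)| * ‖u k‖) ≤ (C * ∑' n, jb n ^ j * a n) / c := by
      rw [le_div_iff₀ hc]; nlinarith
    calc jb k ^ (j + 1) * ‖u k‖ = jb k ^ j * ‖u k‖ + jb k ^ j * (|(k : ℝ)| * ‖u k‖) := by
          rw [pow_succ]; nth_rw 2 [jb]; ring
      _ ≤ _ := add_le_add (hC k) h7

/-! ### Stability by compactness -/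

/-- If the discrete `H¹` seminorm of a unit vector is bounded, a fixed part of its mass sits at
bounded frequencies. -/
lemma tightness (N : ℕ) [NeZero N] (u : ZMod N → ℂ) (B : ℝ) (M : ℕ) (hM : 2 * B ≤ M ^ 2)
    (hM0 : 0 < M)
    (hu : ∑ k, ‖u k‖ ^ 2 = 1) (hB : ∑ k : ZMod N, |(k.valMinAbs : ℝ)| ^ 2 * ‖u k‖ ^ 2 ≤ B) :
    1 / 2 ≤ ∑ m ∈ Finset.Icc (-(M : ℤ)) M, ‖u (m : ZMod N)‖ ^ 2 := by
  classical
  have hM' : (0 : ℝ) < (M : ℝ) ^ 2 := by positivity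
  have h1 := Finset.sum_filter_add_sum_filter_not Finset.univ
    (fun k : ZMod N => |k.valMinAbs| ≤ (M : ℤ)) (fun k => ‖u k‖ ^ 2)
  rw [hu] at h1
  have h2 : ∑ k ∈ Finset.univ.filter (fun k : ZMod N => ¬ |k.valMinAbs| ≤ (M : ℤ)), ‖u k‖ ^ 2 ≤
      1 / 2 := by
    have : ∀ k ∈ Finset.univ.filter (fun k : ZMod N => ¬ |k.valMinAbs| ≤ (M : ℤ)),
        ‖u k‖ ^ 2 ≤ (|(k.valMinAbs : ℝ)| ^ 2 * ‖u k‖ ^ 2) / (M : ℝ) ^ 2 := by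
      intro k hk
      rw [le_div_iff₀ hM', mul_comm]
      apply mul_le_mul_of_nonneg_right _ (by positivity)
      apply pow_le_pow_left₀ (by positivity)
      have := (Finset.mem_filter.mp hk).2
      push Not at this
      have h3 : ((M : ℤ) : ℝ) < ((|k.valMinAbs| : ℤ) : ℝ) := by exact_mod_cast this
      push_cast at h3
      exact h3.le
    refine (Finset.sum_le_sum this).trans ?_
    rw [← Finset.sum_div, div_le_iff₀ hM']
    refine (Finset.sum_le_sum_of_subset_of_nonneg (Finset.subset_univ _)
      (fun k _ _ => by positivity)).trans ?_
    linarith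
  have h3 : ∑ k ∈ Finset.univ.filter (fun k : ZMod N => |k.valMinAbs| ≤ (M : ℤ)), ‖u k‖ ^ 2 ≤
      ∑ m ∈ Finset.Icc (-(M : ℤ)) M, ‖u (m : ZMod N)‖ ^ 2 := by
    calc _ = ∑ m ∈ (Finset.univ.filter (fun k : ZMod N => |k.valMinAbs| ≤ (M : ℤ))).image
          ZMod.valMinAbs, ‖u (m : ZMod N)‖ ^ 2 := by
          rw [Finset.sum_image (fun a _ b _ h => ZMod.injective_valMinAbs h)]
          simp
      _ ≤ _ := by
          refine Finset.sum_le_sum_of_subset_of_nonneg ?_ (fun k _ _ => by positivity)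
          intro m hm
          obtain ⟨k, hk, rfl⟩ := Finset.mem_image.mp hm
          have := (Finset.mem_filter.mp hk).2
          rw [abs_le] at this
          simpa using this
  linarith

/-- Stability by compactness: a sequence of unit vectors with vanishing images would, along an
ultrafilter, converge frequency by frequency to a nonzero null sequence of the limit operator. -/
theorem abstract_stability (ε : ℝ) (wN : ℕ → ℤ → ℤ → ℂ) (w : ℤ → ℤ → ℂ) (a : ℤ → ℝ) (ha : Rapid a)
    (c : ℝ) (hc : 0 < c)
    (h1 : ∀ N : ℕ, 0 < N → ∀ n ≠ 0, ∀ m : ℤ, 2 * |(m : ℝ)| ≤ N → ‖wN N n m‖ ≤ a n)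
    (h2 : ∀ N : ℕ, 0 < N → ∀ m : ℤ, 2 * |(m : ℝ)| ≤ N → c * |(m : ℝ)| - a 0 ≤ ‖wN N 0 m‖)
    (h3 : ∀ n m, Tendsto (fun N => wN N n m) atTop (𝓝 (w n m)))
    (hinj : ∀ u : ℤ → ℂ, (∀ j : ℕ, ∃ C, ∀ k, jb k ^ j * ‖u k‖ ≤ C) →
      (∀ k : ℤ, ∑' n : ℤ, w n (k - n) * u (k - n) = 0) → ∀ k, u k = 0) :
    ∃ N0 : ℕ, ∃ C : ℝ, 0 < C ∧ ∀ (N : ℕ) [NeZero N], N0 ≤ N → ∀ u : ZMod N → ℂ,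
      ∑ k, ‖u k‖ ^ 2 ≤ C * ∑ k, ‖TN N ε (wN N) u k‖ ^ 2 := by
  by_contra hcon
  have hseq : ∀ j : ℕ, ∃ (N : ℕ) (_ : NeZero N), j ≤ N ∧ ∃ u : ZMod N → ℂ,
      ∑ k, ‖u k‖ ^ 2 = 1 ∧ ((j : ℝ) + 1) * ∑ k, ‖TN N ε (wN N) u k‖ ^ 2 ≤ 1 := by
    intro j
    by_contra hj
    apply hcon
    refine ⟨j, j + 1, by positivity, fun N _ hN u => ?_⟩
    by_contra hu
    push Not at hu
    apply hj
    refine ⟨N, inferInstance, hN, ?_⟩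
    set s := ∑ k, ‖u k‖ ^ 2
    have hs : 0 < s := lt_of_le_of_lt (by positivity) hu
    have hs2 : 0 < Real.sqrt s := Real.sqrt_pos.mpr hs
    have key : ‖((Real.sqrt s)⁻¹ : ℂ)‖ ^ 2 = s⁻¹ := by
      rw [← Complex.ofReal_inv, Complex.norm_real, Real.norm_eq_abs, sq_abs, inv_pow,
        Real.sq_sqrt hs.le]
    refine ⟨fun k => ((Real.sqrt s)⁻¹ : ℂ) * u k, ?_, ?_⟩
    · simp_rw [norm_mul, mul_pow, key, ← Finset.mul_sum]
      exact inv_mul_cancel₀ hs.ne'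
    · simp_rw [TN_smul, norm_mul, mul_pow, key, ← Finset.mul_sum]
      rw [mul_left_comm, inv_mul_le_iff₀ hs, mul_one]
      exact hu.le
  choose Nn inst hNn u hu1 hu2 using hseq
  have hNpos : ∀ j, 0 < Nn j := fun j => Nat.pos_of_ne_zero (inst j).ne
  have hNtend : Tendsto Nn atTop atTop := tendsto_atTop_mono hNn tendsto_id
  let 𝒰 : Ultrafilter ℕ := hyperfilter ℕ
  have h𝒰 : (𝒰 : Filter ℕ) ≤ atTop := by
    rw [← Nat.cofinite_eq_atTop]; exact hyperfilter_le_cofinite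
  -- coordinatewise limit
  have hle1 : ∀ j (k : ZMod (Nn j)), ‖u j k‖ ≤ 1 := by
    intro j k
    have := Finset.single_le_sum (f := fun k => ‖u j k‖ ^ 2) (fun _ _ => by positivity)
      (Finset.mem_univ k)
    rw [hu1 j] at this
    exact (sq_le_one_iff₀ (norm_nonneg _)).mp this
  have hlim : ∀ m : ℤ, ∃ x : ℂ, ‖x‖ ≤ 1 ∧
      Tendsto (fun j => u j (m : ZMod (Nn j))) 𝒰 (𝓝 x) := by
    intro m
    obtain ⟨x, hx, hx2⟩ := (isCompact_closedBall (0 : ℂ) 1).ultrafilter_le_nhds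
      (𝒰.map (fun j => u j (m : ZMod (Nn j)))) (by
        rw [le_principal_iff]
        refine Filter.mem_map.mpr (Eventually.of_forall fun j => ?_)
        simpa using hle1 j _)
    exact ⟨x, by simpa using hx, hx2⟩
  choose U hU1 hU2 using hlim
  -- bounds for the limit symbol
  have hw1 : ∀ n ≠ 0, ∀ m : ℤ, ‖w n m‖ ≤ a n := by
    intro n hn m
    refine le_of_tendsto (h3 n m).norm ?_
    filter_upwards [eventually_ge_atTop (2 * m.natAbs + 1)] with N hN
    refine h1 N (by omega) n hn m ?_
    have : (((2 * m.natAbs + 1 : ℕ)) : ℝ) ≤ N := by exact_mod_cast hN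
    push_cast [Nat.cast_natAbs] at this
    linarith
  have hw2 : ∀ m : ℤ, c * |(m : ℝ)| - a 0 ≤ ‖w 0 m‖ := by
    intro m
    refine ge_of_tendsto (h3 0 m).norm ?_
    filter_upwards [eventually_ge_atTop (2 * m.natAbs + 1)] with N hN
    refine h2 N (by omega) m ?_
    have : (((2 * m.natAbs + 1 : ℕ)) : ℝ) ≤ N := by exact_mod_cast hN
    push_cast [Nat.cast_natAbs] at this
    linarith
  -- the limit is a null sequence
  have heq : ∀ k : ℤ, ∑' n : ℤ, w n (k - n) * U (k - n) = 0 := by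
    intro k
    have hA : Tendsto (fun j => TN (Nn j) ε (wN (Nn j)) (u j) (k : ZMod (Nn j))) 𝒰
        (𝓝 (∑' n : ℤ, w n (k - n) * U (k - n))) := by
      unfold TN
      have hrep : ∀ m : ℤ, ∀ᶠ j in (𝒰 : Filter ℕ),
          ((m : ZMod (Nn j))).valMinAbs = m := by
        intro m
        apply h𝒰
        filter_upwards [hNtend.eventually_ge_atTop (2 * m.natAbs + 1)] with j hj
        apply rep_of_small
        rw [Int.abs_eq_natAbs]
        omega
      refine tendsto_tsum_of_dominated_convergence
        (bound := fun n => if n = 0 then ‖w 0 k‖ + 1 else a n) ?_ ?_ ?_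
      · refine ha.summable.congr_cofinite ?_
        have : ∀ᶠ n : ℤ in cofinite, n ≠ 0 := by
          simpa using (Set.finite_singleton (0 : ℤ)).eventually_cofinite_notMem
        filter_upwards [this] with n hn
        simp [hn]
      · intro n
        have := (((h3 n (k - n)).comp hNtend).mono_left h𝒰).mul (hU2 (k - n))
        refine this.congr' ?_
        filter_upwards [hrep k, hrep (k - n)] with j hj1 hj2
        rw [Int.cast_sub] at hj2 ⊢
        rw [hj1, hj2]
        simp
      · have hb : ∀ᶠ j in (𝒰 : Filter ℕ), ‖wN (Nn j) 0 k‖ ≤ ‖w 0 k‖ + 1 := by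
          have := ((h3 0 k).comp hNtend).norm.mono_left h𝒰
          exact this.eventually_le_const (by linarith)
        filter_upwards [hrep k, hb] with j hj1 hj2 n
        rw [norm_mul, norm_mul, norm_ew, one_mul]
        split_ifs with hn
        · subst hn
          simp only [Int.cast_zero, sub_zero, hj1]
          exact (mul_le_mul hj2 (hle1 _ _) (norm_nonneg _) (by positivity)).trans (by simp)
        · exact (mul_le_mul (h1 _ (hNpos j) n hn _ (rep_bound _ _)) (hle1 _ _) (norm_nonneg _)
            (ha.1 n)).trans (by simp)
    have hB : Tendsto (fun j => TN (Nn j) ε (wN (Nn j)) (u j) (k : ZMod (Nn j))) 𝒰 (𝓝 0) := by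
      refine Tendsto.mono_left ?_ h𝒰
      rw [tendsto_zero_iff_norm_tendsto_zero]
      have hsq : Tendsto (fun j => ‖TN (Nn j) ε (wN (Nn j)) (u j) (k : ZMod (Nn j))‖ ^ 2) atTop
          (𝓝 0) := by
        refine squeeze_zero (fun j => by positivity) (fun j => ?_)
          (tendsto_one_div_add_atTop_nhds_zero_nat (𝕜 := ℝ))
        rw [le_div_iff₀ (by positivity), mul_comm]
        refine le_trans ?_ (hu2 j)
        refine mul_le_mul_of_nonneg_left ?_ (by positivity)
        exact Finset.single_le_sum (f := fun k => ‖TN (Nn j) ε (wN (Nn j)) (u j) k‖ ^ 2)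
          (fun _ _ => by positivity) (Finset.mem_univ _)
      have := hsq.sqrt
      simpa using this
    exact tendsto_nhds_unique hA hB
  have hU0 := hinj U (regularity w a ha c hc hw1 hw2 U hU1 heq) heq
  -- the limit carries mass
  set B : ℝ := (2 + 2 * (∑' n, a n) ^ 2) / c ^ 2 with hBdef
  have hBj : ∀ j, ∑ k : ZMod (Nn j), |(k.valMinAbs : ℝ)| ^ 2 * ‖u j k‖ ^ 2 ≤ B := by
    intro j
    have := TN_elliptic (Nn j) ε (wN (Nn j)) a ha c hc (h1 _ (hNpos j)) (h2 _ (hNpos j)) (u j)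
    rw [hu1 j] at this
    rw [hBdef, le_div_iff₀ (by positivity)]
    have h5 : ∑ k, ‖TN (Nn j) ε (wN (Nn j)) (u j) k‖ ^ 2 ≤ 1 := by
      refine le_trans ?_ (hu2 j)
      have : 0 ≤ ∑ k, ‖TN (Nn j) ε (wN (Nn j)) (u j) k‖ ^ 2 :=
        Finset.sum_nonneg fun _ _ => by positivity
      nlinarith [(Nat.cast_nonneg j : (0 : ℝ) ≤ j)]
    linarith
  obtain ⟨M, hM⟩ := exists_nat_gt (2 * B + 1)
  have hM1 : (1 : ℝ) ≤ M := by
    have : 0 ≤ B := by positivity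
    linarith
  have hmass : ∀ j, 1 / 2 ≤ ∑ m ∈ Finset.Icc (-(M : ℤ)) M, ‖u j (m : ZMod (Nn j))‖ ^ 2 := by
    intro j
    refine tightness (Nn j) (u j) B M ?_ (by exact_mod_cast hM1) (hu1 j) (hBj j)
    nlinarith
  have hfin : Tendsto (fun j => ∑ m ∈ Finset.Icc (-(M : ℤ)) M, ‖u j (m : ZMod (Nn j))‖ ^ 2) 𝒰
      (𝓝 (∑ m ∈ Finset.Icc (-(M : ℤ)) M, ‖U m‖ ^ 2)) :=
    tendsto_finsetSum _ fun m _ => (hU2 m).norm.pow 2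
  have := ge_of_tendsto hfin (Eventually.of_forall hmass)
  simp only [hU0, norm_zero] at this
  norm_num at this

/-! ### Fourier series of smooth periodic functions -/

lemma fc_eq (g : ℝ → ℂ) (m : ℤ) : fc g m = ∫ t in (0:ℝ)..1, g t * ew (-m) t := by
  unfold fc ew
  congr 1
  ext t
  congr 2
  push_cast
  ring

lemma fourier_eq_ew (n : ℤ) (x : ℝ) : fourier n (x : AddCircle (1:ℝ)) = ew n x := by
  rw [fourier_coe_apply]
  unfold ew
  congr 1
  push_cast
  ring

/-- Pointwise convergence of an absolutely convergent Fourier series. -/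
lemma hasSum_fc (g : ℝ → ℂ) (hc : Continuous g) (hp : Function.Periodic g 1)
    (hs : Summable (fc g)) (x : ℝ) : HasSum (fun m => fc g m * ew m x) (g x) := by
  have : Fact ((0:ℝ) < 1) := ⟨one_pos⟩
  let G : C(AddCircle (1:ℝ), ℂ) := ⟨hp.lift, by
    exact continuous_coinduced_dom.mpr hc⟩
  have hG : ∀ t : ℝ, G (t : AddCircle (1:ℝ)) = g t := fun t => rfl
  have hco : ∀ m, fourierCoeff G m = fc g m := by
    intro m
    rw [fourierCoeff_eq_intervalIntegral _ _ 0, fc_eq]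
    simp only [hG, fourier_eq_ew, zero_add, smul_eq_mul]
    norm_num
    congr 1
    ext t
    ring
  have := has_pointwise_sum_fourier_series_of_summable (f := G)
    (by rw [show fourierCoeff G = fc g from funext hco]; exact hs) (x : AddCircle (1:ℝ))
  simp only [hco, hG, fourier_eq_ew, smul_eq_mul] at this
  exact this

lemma intervalIntegrable_mul_ew (g : ℝ → ℂ) (hc : Continuous g) (m : ℤ) (a b : ℝ) :
    IntervalIntegrable (fun t => g t * ew m t) MeasureTheory.volume a b :=
  (hc.mul (continuous_ew m)).intervalIntegrable _ _

lemma integral_ew (n : ℤ) : ∫ t in (0:ℝ)..1, ew n t = if n = 0 then 1 else 0 := by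
  split_ifs with h
  · subst h; simp [ew_zero]
  · have hn : (2 * Real.pi * Complex.I * n : ℂ) ≠ 0 := by
      simp [Real.pi_ne_zero, h]
    have : ∀ t ∈ Set.uIcc (0:ℝ) 1, HasDerivAt (fun t => ew n t / (2 * Real.pi * Complex.I * n))
        (ew n t) t := by
      intro t _
      have := (hasDerivAt_ew n t).div_const (2 * Real.pi * Complex.I * n)
      rwa [mul_div_cancel_left₀ _ hn] at this
    rw [intervalIntegral.integral_eq_sub_of_hasDerivAt this
      ((continuous_ew n).intervalIntegrable _ _)]
    have h1 : ew n 1 = 1 := by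
      have := ew_periodic n 0
      simpa using this
    rw [h1, ew_zero_arg, sub_self]

lemma fc_norm_le (g : ℝ → ℂ) (C : ℝ) (hC : ∀ t, ‖g t‖ ≤ C) (m : ℤ) : ‖fc g m‖ ≤ C := by
  rw [fc_eq]
  have := intervalIntegral.norm_integral_le_of_norm_le_const (a := 0) (b := 1) (C := C)
    (f := fun t => g t * ew (-m) t) (by intro t _; rw [norm_mul, norm_ew, mul_one]; exact hC t)
  simpa using this

lemma fc_deriv (g : ℝ → ℂ) (hg : ContDiff ℝ 1 g) (hp : Function.Periodic g 1) (m : ℤ) :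
    fc (deriv g) m = 2 * Real.pi * Complex.I * m * fc g m := by
  have hd : Differentiable ℝ g := hg.differentiable (by norm_num)
  have hdc : Continuous (deriv g) := hg.continuous_deriv (by norm_num)
  rw [fc_eq, fc_eq]
  have := intervalIntegral.integral_mul_deriv_eq_deriv_mul (a := 0) (b := 1)
    (u := ew (-m)) (v := g) (u' := fun t => 2 * Real.pi * Complex.I * ((-m : ℤ) : ℂ) * ew (-m) t)
    (v' := deriv g) (fun x _ => hasDerivAt_ew (-m) x) (fun x _ => (hd x).hasDerivAt)
    ((continuous_const.mul (continuous_ew _)).intervalIntegrable _ _)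
    (hdc.intervalIntegrable _ _)
  have h1 : ew (-m) 1 = 1 := by
    have := ew_periodic (-m) 0
    simpa using this
  have h2 : g 1 = g 0 := by simpa using hp 0
  rw [h1, h2, ew_zero_arg, sub_self, zero_sub] at this
  rw [show (∫ t in (0:ℝ)..1, deriv g t * ew (-m) t) = ∫ t in (0:ℝ)..1, ew (-m) t * deriv g t by
    congr 1; ext t; ring, this, ← intervalIntegral.integral_neg,
    ← intervalIntegral.integral_const_mul]
  congr 1
  ext t
  push_cast
  ring

lemma periodic_deriv (g : ℝ → ℂ) (hp : Function.Periodic g 1) : Function.Periodic (deriv g) 1 := by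
  intro x
  have : (fun y => g (y + 1)) = g := funext hp
  rw [← deriv_comp_add_const, this]

lemma periodic_bounded (g : ℝ → ℂ) (hc : Continuous g) (hp : Function.Periodic g 1) :
    ∃ C, ∀ t, ‖g t‖ ≤ C := by
  obtain ⟨C, hC⟩ := (isCompact_Icc (a := (0:ℝ)) (b := 1)).exists_bound_of_continuousOn hc.continuousOn
  refine ⟨C, fun t => ?_⟩
  obtain ⟨y, hy, h⟩ := hp.exists_mem_Ico₀ one_pos t
  rw [h]
  exact hC y (Set.Ico_subset_Icc_self hy)

lemma two_pi_norm (m : ℤ) : ‖(2 * Real.pi * Complex.I * m : ℂ)‖ = 2 * Real.pi * |(m:ℝ)| := by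
  simp [abs_of_pos Real.pi_pos]

lemma abs_le_two_pi (m : ℤ) : |(m:ℝ)| ≤ ‖(2 * Real.pi * Complex.I * m : ℂ)‖ := by
  rw [two_pi_norm]
  have := Real.pi_gt_three
  nlinarith [abs_nonneg (m:ℝ)]

lemma fc_decay (j : ℕ) : ∀ g : ℝ → ℂ, ContDiff ℝ (⊤ : ℕ∞) g → Function.Periodic g 1 →
    ∃ C, ∀ m, jb m ^ j * ‖fc g m‖ ≤ C := by
  induction j with
  | zero =>
    intro g hg hp
    obtain ⟨C, hC⟩ := periodic_bounded g hg.continuous hp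
    exact ⟨C, fun m => by simpa using fc_norm_le g C hC m⟩
  | succ j ih =>
    intro g hg hp
    obtain ⟨C, hC⟩ := ih g hg hp
    obtain ⟨C', hC'⟩ := ih (deriv g) (contDiff_infty_iff_deriv.mp hg).2 (periodic_deriv g hp)
    refine ⟨C + C', fun m => ?_⟩
    have h1 : |(m:ℝ)| * ‖fc g m‖ ≤ ‖fc (deriv g) m‖ := by
      rw [fc_deriv g (hg.of_le (by exact_mod_cast le_top)) hp, norm_mul]
      exact mul_le_mul_of_nonneg_right (abs_le_two_pi m) (norm_nonneg _)
    have := hC m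
    have h3 := hC' m
    have hj : 0 ≤ jb m ^ j := pow_nonneg (jb_pos m).le _
    calc jb m ^ (j+1) * ‖fc g m‖ = jb m ^ j * ‖fc g m‖ + jb m ^ j * (|(m:ℝ)| * ‖fc g m‖) := by
          rw [pow_succ]; nth_rewrite 2 [jb]; ring
      _ ≤ C + C' := by
          have := mul_le_mul_of_nonneg_left h1 hj
          linarith

lemma summable_jb : Summable (fun m : ℤ => (jb m ^ 2)⁻¹) := by
  have h : Summable (fun m : ℤ => |(m:ℝ)| ^ (-2 : ℝ)) :=
    (Real.summable_abs_int_rpow (by norm_num))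
  refine Summable.of_norm_bounded_eventually h ?_
  rw [Filter.eventually_cofinite]
  refine Set.Finite.subset (Set.finite_singleton (0:ℤ)) ?_
  intro m hm
  by_contra hne
  apply hm
  have h0 : 0 < |(m:ℝ)| := by simpa using hne
  rw [Real.norm_of_nonneg (by have := jb_pos m; positivity), Real.rpow_neg h0.le]
  have : |(m:ℝ)| ^ (2:ℝ) = |(m:ℝ)| ^ 2 := by norm_cast
  rw [this]
  exact inv_anti₀ (by positivity) (pow_le_pow_left₀ h0.le (abs_le_jb m) 2)

lemma rapid_of_decay (a : ℤ → ℝ) (h0 : ∀ n, 0 ≤ a n) (h : ∀ j : ℕ, ∃ C, ∀ m, jb m ^ j * a m ≤ C) :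
    Rapid a := by
  refine ⟨h0, fun j => ?_⟩
  obtain ⟨C, hC⟩ := h (j+2)
  refine Summable.of_nonneg_of_le (fun n => mul_nonneg (pow_nonneg (jb_pos n).le _) (h0 n)) ?_
    (summable_jb.mul_left C)
  intro n
  have h2 : 0 < jb n ^ 2 := pow_pos (jb_pos n) 2
  rw [← div_eq_mul_inv, le_div_iff₀ h2]
  calc _ = jb n ^ (j+2) * a n := by ring
    _ ≤ C := hC n

lemma fc_rapid (g : ℝ → ℂ) (hg : ContDiff ℝ (⊤ : ℕ∞) g) (hp : Function.Periodic g 1) :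
    Rapid (fun m => ‖fc g m‖) :=
  rapid_of_decay _ (fun _ => norm_nonneg _) (fun j => fc_decay j g hg hp)

lemma hasSum_fc_smooth (g : ℝ → ℂ) (hg : ContDiff ℝ (⊤ : ℕ∞) g) (hp : Function.Periodic g 1)
    (x : ℝ) : HasSum (fun m => fc g m * ew m x) (g x) :=
  hasSum_fc g hg.continuous hp ((fc_rapid g hg hp).summable.of_norm) x

/-- Uniqueness of the coefficients of an absolutely convergent Fourier series. -/
lemma fc_of_hasSum (u : ℤ → ℂ) (hu : Summable (fun m => ‖u m‖)) (g : ℝ → ℂ)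
    (hg : ∀ x, HasSum (fun m => u m * ew m x) (g x)) (n : ℤ) : fc g n = u n := by
  rw [fc_eq]
  have h := intervalIntegral.hasSum_integral_of_dominated_convergence
    (μ := MeasureTheory.volume) (a := 0) (b := 1)
    (F := fun m t => u m * ew m t * ew (-n) t) (f := fun t => g t * ew (-n) t)
    (fun m _ => ‖u m‖)
    (fun m => ((continuous_const.mul (continuous_ew m)).mul (continuous_ew _)).aestronglyMeasurable)
    (fun m => Filter.Eventually.of_forall (fun t _ => by simp [norm_ew]))
    (Filter.Eventually.of_forall (fun t _ => hu))
    (by simp)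
    (Filter.Eventually.of_forall (fun t _ => (hg t).mul_right _))
  have h2 : ∀ m, ∫ t in (0:ℝ)..1, u m * ew m t * ew (-n) t = if m = n then u n else 0 := by
    intro m
    have : ∀ t, u m * ew m t * ew (-n) t = u m * ew (m + -n) t := by
      intro t; rw [ew_add]; ring
    simp_rw [this]
    rw [intervalIntegral.integral_const_mul, integral_ew]
    by_cases hmn : m = n
    · subst hmn; simp
    · rw [if_neg hmn, if_neg (by omega), mul_zero]
  simp_rw [h2] at h
  have h3 : HasSum (fun m => if m = n then u n else 0) (u n) := hasSum_ite_eq n (u n)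
  exact h.unique h3

/-! ### Fourier expansion of smooth kernels -/

/-- Double Fourier coefficient of a doubly periodic kernel, as an iterated integral. -/
def fc2 (B : ℝ → ℝ → ℂ) (n q : ℤ) : ℂ := fc (fun s => fc (B s) q) n

lemma SPK.contL {B : ℝ → ℝ → ℂ} (h : SPK B) (s : ℝ) : ContDiff ℝ (⊤ : ℕ∞) (B s) :=
  h.1.comp (contDiff_const.prodMk contDiff_id)

lemma SPK.contR {B : ℝ → ℝ → ℂ} (h : SPK B) (t : ℝ) : ContDiff ℝ (⊤ : ℕ∞) (fun s => B s t) :=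
  h.1.comp (contDiff_id.prodMk contDiff_const)

lemma SPK.swap {B : ℝ → ℝ → ℂ} (h : SPK B) : SPK (fun s t => B t s) :=
  ⟨h.1.comp (contDiff_snd.prodMk contDiff_fst), fun s t => h.2.2 t s, fun s t => h.2.1 t s⟩

lemma SPK.derivR {B : ℝ → ℝ → ℂ} (h : SPK B) : SPK (fun s t => deriv (B s) t) := by
  refine ⟨?_, ?_, ?_⟩
  · have h1 : ∀ p : ℝ × ℝ, deriv (B p.1) p.2 =
        fderiv ℝ (fun p : ℝ × ℝ => B p.1 p.2) p ((0:ℝ), (1:ℝ)) := by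
      intro p
      have hd : HasFDerivAt (fun p : ℝ × ℝ => B p.1 p.2)
          (fderiv ℝ (fun p : ℝ × ℝ => B p.1 p.2) (p.1, p.2)) (p.1, p.2) :=
        (h.1.differentiable (by simp) _).hasFDerivAt
      have hc : HasDerivAt (fun t : ℝ => (p.1, t)) ((0:ℝ), (1:ℝ)) p.2 :=
        (hasDerivAt_const _ _).prodMk (hasDerivAt_id _)
      exact (hd.comp_hasDerivAt p.2 hc).deriv
    simp_rw [h1]
    exact (h.1.fderiv_right (m := (⊤:ℕ∞)) (by exact_mod_cast le_rfl)).clm_apply contDiff_const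
  · intro s t
    have : B (s+1) = B s := funext (h.2.1 s)
    simp only [this]
  · intro s t
    exact periodic_deriv (B s) (h.2.2 s) t

lemma SPK.bounded {B : ℝ → ℝ → ℂ} (h : SPK B) : ∃ C, ∀ s t, ‖B s t‖ ≤ C := by
  obtain ⟨C, hC⟩ := ((isCompact_Icc (a := (0:ℝ)) (b := 1)).prod
    (isCompact_Icc (a := (0:ℝ)) (b := 1))).exists_bound_of_continuousOn h.1.continuous.continuousOn
  refine ⟨C, fun s t => ?_⟩
  obtain ⟨y, hy, h1⟩ := (show Function.Periodic (B s) 1 from h.2.2 s).exists_mem_Ico₀ one_pos t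
  obtain ⟨x, hx, h2⟩ := (show Function.Periodic (fun s => B s y) 1 from
    fun s => h.2.1 s y).exists_mem_Ico₀ one_pos s
  rw [h1, h2]
  exact hC (x, y) ⟨Set.Ico_subset_Icc_self hx, Set.Ico_subset_Icc_self hy⟩

lemma SPK.continuous_fc {B : ℝ → ℝ → ℂ} (h : SPK B) (q : ℤ) : Continuous (fun s => fc (B s) q) := by
  simp_rw [fc_eq]
  apply intervalIntegral.continuous_parametric_intervalIntegral_of_continuous'
  exact h.1.continuous.mul ((continuous_ew _).comp continuous_snd)

lemma SPK.fc2_swap {B : ℝ → ℝ → ℂ} (h : SPK B) (n q : ℤ) :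
    fc2 (fun s t => B t s) q n = fc2 B n q := by
  unfold fc2
  simp_rw [fc_eq, ← intervalIntegral.integral_mul_const]
  rw [MeasureTheory.intervalIntegral_intervalIntegral_swap]
  · congr 1; ext s; congr 1; ext t; ring
  · have hc : Continuous (Function.uncurry fun x t => B t x * ew (-n) t * ew (-q) x) :=
      (h.swap.1.continuous.mul ((continuous_ew _).comp continuous_snd)).mul
        ((continuous_ew _).comp continuous_fst)
    exact (hc.continuousOn.integrableOn_compact (isCompact_uIcc.prod isCompact_uIcc)).mono_set
      (Set.prod_mono Set.uIoc_subset_uIcc Set.uIoc_subset_uIcc)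

lemma SPK.fc2_derivR {B : ℝ → ℝ → ℂ} (h : SPK B) (n q : ℤ) :
    fc2 (fun s t => deriv (B s) t) n q = 2 * Real.pi * Complex.I * q * fc2 B n q := by
  unfold fc2
  have : ∀ s, fc (fun t => deriv (B s) t) q = 2 * Real.pi * Complex.I * q * fc (B s) q := fun s =>
    fc_deriv (B s) ((h.contL s).of_le (by exact_mod_cast le_top)) (h.2.2 s) q
  simp_rw [this]
  rw [fc_eq, fc_eq, ← intervalIntegral.integral_const_mul]
  congr 1; ext t; ring

lemma SPK.fc2_decayR (k : ℕ) : ∀ B : ℝ → ℝ → ℂ, SPK B → ∃ C, ∀ n q,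
    jb q ^ k * ‖fc2 B n q‖ ≤ C := by
  induction k with
  | zero =>
    intro B h
    obtain ⟨C, hC⟩ := h.bounded
    exact ⟨C, fun n q => by
      simpa [fc2] using fc_norm_le _ C (fun s => fc_norm_le _ C (hC s) q) n⟩
  | succ k ih =>
    intro B h
    obtain ⟨C, hC⟩ := ih B h
    obtain ⟨C', hC'⟩ := ih _ h.derivR
    refine ⟨C + C', fun n q => ?_⟩
    have h1 : |(q:ℝ)| * ‖fc2 B n q‖ ≤ ‖fc2 (fun s t => deriv (B s) t) n q‖ := by
      rw [h.fc2_derivR, norm_mul]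
      exact mul_le_mul_of_nonneg_right (abs_le_two_pi q) (norm_nonneg _)
    have h2 := mul_le_mul_of_nonneg_left h1 (pow_nonneg (jb_pos q).le k)
    calc jb q ^ (k+1) * ‖fc2 B n q‖
        = jb q ^ k * ‖fc2 B n q‖ + jb q ^ k * (|(q:ℝ)| * ‖fc2 B n q‖) := by
          rw [pow_succ]; nth_rewrite 2 [jb]; ring
      _ ≤ C + C' := by linarith [hC n q, hC' n q]

lemma SPK.fc2_decay (j k : ℕ) (B : ℝ → ℝ → ℂ) (h : SPK B) : ∃ C, ∀ n q,
    jb n ^ j * jb q ^ k * ‖fc2 B n q‖ ≤ C := by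
  obtain ⟨C1, h1⟩ := SPK.fc2_decayR (2*k) B h
  obtain ⟨C2, h2⟩ := SPK.fc2_decayR (2*j) _ h.swap
  refine ⟨C1 + C2, fun n q => ?_⟩
  have e1 := h1 n q
  have e2 := h2 q n
  rw [h.fc2_swap] at e2
  have : jb n ^ j * jb q ^ k ≤ jb n ^ (2*j) + jb q ^ (2*k) := by
    rw [mul_comm 2 j, mul_comm 2 k, pow_mul, pow_mul]
    nlinarith [sq_nonneg (jb n ^ j - jb q ^ k), sq_nonneg (jb n ^ j + jb q ^ k)]
  have := mul_le_mul_of_nonneg_right this (norm_nonneg (fc2 B n q))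
  nlinarith

lemma summable_jb2 : Summable (fun p : ℤ × ℤ => (jb p.1 ^ 2)⁻¹ * (jb p.2 ^ 2)⁻¹) :=
  summable_jb.mul_of_nonneg summable_jb (fun n => by have := jb_pos n; positivity)
    (fun n => by have := jb_pos n; positivity)

lemma summable_of_decay2 (b : ℤ → ℤ → ℂ) (C : ℝ)
    (h : ∀ n q, jb n ^ 2 * jb q ^ 2 * ‖b n q‖ ≤ C) : Summable (fun p : ℤ × ℤ => ‖b p.1 p.2‖) := by
  refine Summable.of_nonneg_of_le (fun _ => norm_nonneg _) ?_ (summable_jb2.mul_left C)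
  intro p
  have h1 := jb_pos p.1
  have h2 := jb_pos p.2
  rw [← mul_inv, ← div_eq_mul_inv, le_div_iff₀ (by positivity), mul_comm]
  exact h p.1 p.2

lemma SPK.hasSum_fc2 {B : ℝ → ℝ → ℂ} (h : SPK B) (s x : ℝ) :
    HasSum (fun p : ℤ × ℤ => fc2 B p.1 p.2 * ew p.1 s * ew p.2 x) (B s x) := by
  obtain ⟨C, hC⟩ := h.fc2_decay 2 2
  have hs := summable_of_decay2 _ C hC
  have hs2 : Summable (fun p : ℤ × ℤ => fc2 B p.1 p.2 * ew p.1 s * ew p.2 x) := by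
    apply Summable.of_norm
    simpa [norm_ew] using hs
  have hs3 : Summable (fun p : ℤ × ℤ => fc2 B p.2 p.1 * ew p.2 s * ew p.1 x) := by
    exact (Equiv.prodComm ℤ ℤ).summable_iff.mpr hs2
  have hin : ∀ q, HasSum (fun n => fc2 B n q * ew n s * ew q x) (fc (B s) q * ew q x) := by
    intro q
    refine HasSum.mul_right _ ?_
    refine hasSum_fc (fun s => fc (B s) q) (h.continuous_fc q) ?_ ?_ s
    · intro s
      have : B (s+1) = B s := funext (h.2.1 s)
      simp only [this]
    · exact Summable.of_norm (hs.prod_symm.prod_factor q)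
  have hout := hasSum_fc_smooth (B s) (h.contL s) (h.2.2 s) x
  have := hs3.hasSum.prod_fiberwise (fun q => hin q)
  have e := this.unique hout
  have h5 : HasSum (fun p : ℤ × ℤ => fc2 B p.2 p.1 * ew p.2 s * ew p.1 x) (B s x) :=
    e ▸ hs3.hasSum
  exact (Equiv.prodComm ℤ ℤ).hasSum_iff.mp h5

/-- Fourier expansion of a smooth kernel in the variables `s` and `t - s`. -/
lemma SPK.expansion {A : ℝ → ℝ → ℂ} (h : SPK A) : ∃ a : ℤ → ℤ → ℂ,
    (∀ j k : ℕ, ∃ C, ∀ n q, jb n ^ j * jb q ^ k * ‖a n q‖ ≤ C) ∧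
    ∀ s t, HasSum (fun p : ℤ × ℤ => a p.1 p.2 * ew p.1 s * ew p.2 (t - s)) (A s t) := by
  have hB : SPK (fun s x => A s (s + x)) := by
    refine ⟨h.1.comp (contDiff_fst.prodMk (contDiff_fst.add contDiff_snd)), ?_, ?_⟩
    · intro s x
      beta_reduce
      rw [h.2.1, show s + 1 + x = (s + x) + 1 by ring, h.2.2]
    · intro s x
      beta_reduce
      rw [← add_assoc, h.2.2]
  refine ⟨fc2 _, fun j k => SPK.fc2_decay j k _ hB, fun s t => ?_⟩
  have := hB.hasSum_fc2 s (t - s)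
  simpa using this

/-- On the diagonal `t = s` the expansion reduces to a Fourier series in `s`, so a constant diagonal
determines the row sums of the coefficients. -/
lemma diag_coeff {A : ℝ → ℝ → ℂ} (a : ℤ → ℤ → ℂ) (α : ℂ)
    (hd : ∃ C, ∀ n q, jb n ^ 2 * jb q ^ 2 * ‖a n q‖ ≤ C)
    (hs : ∀ s t, HasSum (fun p : ℤ × ℤ => a p.1 p.2 * ew p.1 s * ew p.2 (t - s)) (A s t))
    (hα : ∀ s, A s s = α) (n : ℤ) : ∑' q, a n q = if n = 0 then α else 0 := by
  obtain ⟨C, hC⟩ := hd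
  have hsum := summable_of_decay2 _ C hC
  have h1 : ∀ s, HasSum (fun n => (∑' q, a n q) * ew n s) α := by
    intro s
    have h2 := hs s s
    rw [hα] at h2
    simp only [sub_self, ew_zero_arg, mul_one] at h2
    refine h2.prod_fiberwise (fun n => ?_)
    exact (Summable.of_norm (hsum.prod_factor n)).hasSum.mul_right _
  have hsn : Summable (fun n => ‖∑' q, a n q‖) := by
    refine Summable.of_nonneg_of_le (fun _ => norm_nonneg _) (fun n => ?_) hsum.prod
    exact norm_tsum_le_tsum_norm (hsum.prod_factor n)
  rw [← fc_of_hasSum _ hsn (fun _ => α) h1 n, fc_eq, intervalIntegral.integral_const_mul,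
    integral_ew]
  by_cases h : n = 0 <;> simp [h]

/-! ### Fourier coefficients of `log sin²` -/

/-- The logarithm `log sin² (π x)`. -/
def lf (x : ℝ) : ℝ := Real.log (Real.sin (Real.pi * x) ^ 2)

/-- The Abel regularisation `log (|1 - r e^{2πix}|² / 4)` of `lf`. -/
def flog (r x : ℝ) : ℝ :=
  Real.log ((1 - r) ^ 2 + 4 * r * Real.sin (Real.pi * x) ^ 2) - Real.log 4

/-- Fourier coefficients of `flog r`; the term `r ^ 0 / 0` at `n = 0` vanishes. -/
def fr (r : ℝ) (n : ℤ) : ℝ :=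
  (if n = 0 then -Real.log 4 else 0) - r ^ n.natAbs / (n.natAbs : ℝ)

lemma fr_neg (r : ℝ) (n : ℤ) : fr r (-n) = fr r n := by simp [fr]

lemma normSq_one_sub (r x : ℝ) :
    ‖1 - (r : ℂ) * ew 1 x‖ ^ 2 = (1 - r) ^ 2 + 4 * r * Real.sin (Real.pi * x) ^ 2 := by
  have h : ew 1 x = (Real.cos (2 * (Real.pi * x)) : ℂ) + (Real.sin (2 * (Real.pi * x)) : ℂ) * Complex.I := by
    unfold ew
    rw [Complex.ofReal_cos, Complex.ofReal_sin, ← Complex.exp_mul_I]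
    congr 1; push_cast; ring
  rw [h, Complex.sq_norm, Complex.normSq_apply]
  simp only [Complex.sub_re, Complex.sub_im, Complex.mul_re, Complex.mul_im, Complex.add_re,
    Complex.add_im, Complex.ofReal_re, Complex.ofReal_im, Complex.I_re, Complex.I_im,
    Complex.one_re, Complex.one_im]
  have h1 := Real.sin_sq_add_cos_sq (2 * (Real.pi * x))
  have h2 : Real.cos (2 * (Real.pi * x)) = 1 - 2 * Real.sin (Real.pi * x) ^ 2 := by
    rw [Real.cos_two_mul, Real.cos_sq']; ring
  generalize Real.sin (2 * (Real.pi * x)) = S at *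
  rw [h2] at *
  generalize Real.sin (Real.pi * x) = T at *
  linear_combination r ^ 2 * h1

lemma ew_pow (n : ℕ) (x : ℝ) : ew 1 x ^ n = ew n x := by
  unfold ew
  rw [← Complex.exp_nat_mul]; congr 1; push_cast; ring

/-- The Fourier series of the Abel regularisation, from the Taylor series of `-log (1 - z)` at
`z = r e^{2πix}`. -/
lemma hasSum_abel (r : ℝ) (h0 : 0 ≤ r) (h1 : r < 1) (x : ℝ) :
    HasSum (fun n : ℤ => (fr r n : ℂ) * ew n x) (flog r x : ℂ) := by
  set w : ℂ := (r : ℂ) * ew 1 x with hw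
  have hwn : ‖w‖ = r := by simp [hw, norm_ew, abs_of_nonneg h0]
  have hL := Complex.hasSum_taylorSeries_neg_log (z := w) (by rw [hwn]; exact h1)
  have hL2 := Complex.hasSum_conj'.mpr hL
  have hne : (1 - w) ≠ 0 := by
    intro h
    have : w = 1 := by linear_combination -h
    rw [this] at hwn; simp at hwn; linarith
  have hsum : HasSum (fun n : ℤ => (-((r ^ n.natAbs / (n.natAbs : ℝ) : ℝ) : ℂ)) * ew n x)
      (-(-Complex.log (1 - w)) + -((starRingEnd ℂ) (-Complex.log (1 - w)))
        - -(((r ^ (0:ℤ).natAbs / ((0:ℤ).natAbs : ℝ) : ℝ) : ℂ)) * ew 0 x) := by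
    apply HasSum.of_nat_of_neg
    · convert hL.neg using 1
      ext n
      rw [hw, mul_pow, ew_pow]; push_cast; simp; ring
    · convert hL2.neg using 1
      ext n
      rw [hw, map_div₀, map_pow, map_mul, Complex.conj_ofReal, mul_pow, ← map_pow, ew_pow, conj_ew,
        map_natCast]; push_cast; simp; ring
  have hval : (-(-Complex.log (1 - w)) + -((starRingEnd ℂ) (-Complex.log (1 - w)))
        - -(((r ^ (0:ℤ).natAbs / ((0:ℤ).natAbs : ℝ) : ℝ) : ℂ)) * ew 0 x) =
        (Real.log (‖1 - w‖ ^ 2) : ℂ) := by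
    rw [Real.log_pow]
    have : (Complex.log (1 - w)) + (starRingEnd ℂ) (Complex.log (1 - w)) =
      2 * (Real.log ‖1 - w‖ : ℂ) := by
      rw [Complex.add_conj, Complex.log_re]; push_cast; ring
    simp [map_neg]
    simpa using this
  rw [hval, hw, normSq_one_sub] at hsum
  have h2 : HasSum (fun n : ℤ => if n = 0 then (-Real.log 4 : ℂ) else 0) (-Real.log 4 : ℂ) :=
    hasSum_ite_eq 0 _
  convert h2.add hsum using 1
  · ext n
    unfold fr
    by_cases h : n = 0
    · subst h; simp [ew_zero]
    · simp [h]
  · unfold flog; push_cast; ring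

lemma fr_norm_le (r : ℝ) (h0 : 0 ≤ r) (n : ℤ) (hn : n ≠ 0) : |fr r n| ≤ r ^ n.natAbs := by
  unfold fr
  rw [if_neg hn, zero_sub, abs_neg, abs_of_nonneg (by positivity)]
  apply div_le_self (by positivity)
  have : 1 ≤ n.natAbs := by omega
  exact_mod_cast this

lemma summable_fr (r : ℝ) (h0 : 0 ≤ r) (h1 : r < 1) : Summable (fun n : ℤ => ‖(fr r n : ℂ)‖) := by
  have := (hasSum_abel r h0 h1 0).summable.norm
  simpa using this

lemma fc_flog (r : ℝ) (h0 : 0 ≤ r) (h1 : r < 1) (n : ℤ) : fc (fun x => (flog r x : ℂ)) n = fr r n :=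
  fc_of_hasSum _ (summable_fr r h0 h1) _ (hasSum_abel r h0 h1) n

lemma sin_ne_zero_of_Ioo (x : ℝ) (h0 : 0 < x) (h1 : x < 1) : Real.sin (Real.pi * x) ≠ 0 := by
  have := Real.pi_pos
  exact (Real.sin_pos_of_pos_of_lt_pi (by positivity) (by nlinarith)).ne'

lemma flog_tendsto (x : ℝ) (hx : Real.sin (Real.pi * x) ≠ 0) :
    Tendsto (fun r => flog r x) (𝓝[<] 1) (𝓝 (lf x)) := by
  have hc : ContinuousAt (fun r : ℝ => flog r x) 1 := by
    unfold flog
    refine ContinuousAt.sub (ContinuousAt.log (by fun_prop) ?_) continuousAt_const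
    simpa using hx
  have h1 : flog 1 x = lf x := by
    unfold flog lf
    rw [← Real.log_div (by simpa using hx) (by norm_num)]
    congr 1; ring
  rw [← h1]
  exact hc.tendsto.mono_left nhdsWithin_le_nhds

lemma intervalIntegrable_lf : IntervalIntegrable lf MeasureTheory.volume 0 1 := by
  have h := (intervalIntegrable_log_sin (a := 0) (b := Real.pi)).comp_mul_left (c := Real.pi)
  have h2 := (h.const_mul 2)
  rw [zero_div, div_self Real.pi_ne_zero] at h2
  convert h2 using 1
  ext x
  simp [lf, Real.log_pow]

lemma fr_tendsto (n : ℤ) : Tendsto (fun r => fr r n) (𝓝[<] 1) (𝓝 (fr 1 n)) := by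
  have hc : Continuous (fun r : ℝ => fr r n) := by unfold fr; fun_prop
  exact hc.continuousAt.tendsto.mono_left nhdsWithin_le_nhds

lemma flog_abs_le (r x : ℝ) (h0 : 1 / 2 ≤ r) (h1 : r < 1) (hx : Real.sin (Real.pi * x) ≠ 0) :
    |flog r x| ≤ |lf x| + Real.log 2 := by
  have hs : 0 < Real.sin (Real.pi * x) ^ 2 := by positivity
  have hs1 : Real.sin (Real.pi * x) ^ 2 ≤ 1 := Real.sin_sq_le_one _
  have hup : flog r x ≤ 0 := by
    unfold flog
    rw [sub_nonpos]
    apply Real.log_le_log (by nlinarith [sq_nonneg (1 - r)])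
    nlinarith
  have hlo : lf x - Real.log 2 ≤ flog r x := by
    unfold flog lf
    rw [← Real.log_div hs.ne' (by norm_num), ← Real.log_div (by nlinarith [sq_nonneg (1 - r)]) (by norm_num)]
    apply Real.log_le_log (by positivity)
    nlinarith [sq_nonneg (1 - r)]
  rw [abs_of_nonpos hup]
  linarith [neg_le_abs (lf x)]

/-- Fourier coefficients of `log sin² (π x)`, obtained from those of `flog r` by dominated convergence
as `r → 1`. -/
lemma fc_lf (n : ℤ) : fc (fun x => (lf x : ℂ)) n = fr 1 n := by
  have h1 : Tendsto (fun r => fc (fun x => (flog r x : ℂ)) n) (𝓝[<] 1)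
      (𝓝 (fc (fun x => (lf x : ℂ)) n)) := by
    simp_rw [fc_eq]
    apply intervalIntegral.tendsto_integral_filter_of_dominated_convergence
      (fun x => |lf x| + Real.log 2)
    · have : ∀ᶠ r : ℝ in 𝓝[<] 1, r ∈ Set.Ioo (1/2:ℝ) 1 := Ioo_mem_nhdsLT (by norm_num)
      filter_upwards [this] with r hr
      have hm : Measurable (fun x => flog r x) := by unfold flog; fun_prop
      exact ((Complex.measurable_ofReal.comp hm).mul (continuous_ew _).measurable).aestronglyMeasurable
    · have : ∀ᶠ r : ℝ in 𝓝[<] 1, r ∈ Set.Ioo (1/2:ℝ) 1 := Ioo_mem_nhdsLT (by norm_num)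
      filter_upwards [this] with r hr
      have h1 : ∀ᵐ x : ℝ ∂MeasureTheory.volume, x ≠ 1 := by
        simp [MeasureTheory.ae_iff]
      filter_upwards [h1] with x hx1 hx
      rw [Set.uIoc_of_le zero_le_one] at hx
      rw [norm_mul, norm_ew, mul_one, Complex.norm_real]
      exact flog_abs_le r x hr.1.le hr.2 (sin_ne_zero_of_Ioo x hx.1 (lt_of_le_of_ne hx.2 hx1))
    · exact intervalIntegrable_lf.abs.add (by simp)
    · have h1 : ∀ᵐ x : ℝ ∂MeasureTheory.volume, x ≠ 1 := by
        simp [MeasureTheory.ae_iff]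
      filter_upwards [h1] with x hx1 hx
      rw [Set.uIoc_of_le zero_le_one] at hx
      have := flog_tendsto x (sin_ne_zero_of_Ioo x hx.1 (lt_of_le_of_ne hx.2 hx1))
      exact ((Complex.continuous_ofReal.tendsto _).comp this).mul_const _
  have h2 : Tendsto (fun r => fc (fun x => (flog r x : ℂ)) n) (𝓝[<] 1) (𝓝 (fr 1 n : ℂ)) := by
    refine Tendsto.congr' ?_ ((Complex.continuous_ofReal.tendsto _).comp (fr_tendsto n))
    have : ∀ᶠ r : ℝ in 𝓝[<] 1, r ∈ Set.Ioo (1/2:ℝ) 1 := Ioo_mem_nhdsLT (by norm_num)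
    filter_upwards [this] with r hr
    rw [fc_flog r (by linarith [hr.1]) hr.2]
    rfl
  exact tendsto_nhds_unique h1 h2

/-! ### Aliasing -/

/-- Discrete Fourier coefficient of a function on the shifted grid `(k + ε) / N`. -/
def dfc (N : ℕ) [NeZero N] (ε : ℝ) (g : ℝ → ℂ) (n : ℤ) : ℂ :=
  (1 / (N : ℂ)) * ∑ k : ZMod N, g (((k.val : ℝ) + ε) / N) * ew (-n) (((k.val : ℝ) + ε) / N)

/-- Discrete Fourier coefficients of the logarithm. -/
def FN (N : ℕ) [NeZero N] (ε : ℝ) (n : ℤ) : ℂ := dfc N ε (fun x => (lf x : ℂ)) n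

lemma ew_mul_div (N : ℕ) [NeZero N] (p : ℤ) (ε : ℝ) : ew (p * N) (ε / N) = ew p ε := by
  have : (N : ℂ) ≠ 0 := by exact_mod_cast NeZero.ne N
  unfold ew
  congr 1
  push_cast
  field_simp

/-- Aliasing formula. -/
lemma dfc_hasSum (N : ℕ) [NeZero N] (ε : ℝ) (g : ℝ → ℂ) (u : ℤ → ℂ)
    (hg : ∀ x, HasSum (fun m => u m * ew m x) (g x)) (n : ℤ) :
    HasSum (fun p : ℤ => u (n + p * N) * ew p ε) (dfc N ε g n) := by
  have hN : (N : ℂ) ≠ 0 := by exact_mod_cast NeZero.ne N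
  have h1 : HasSum (fun m => (1 / (N : ℂ)) * ∑ k : ZMod N,
      u m * ew m (((k.val : ℝ) + ε) / N) * ew (-n) (((k.val : ℝ) + ε) / N)) (dfc N ε g n) := by
    unfold dfc
    apply HasSum.mul_left
    apply hasSum_sum
    intro k _
    exact (hg _).mul_right _
  have h2 : ∀ m, (1 / (N : ℂ)) * ∑ k : ZMod N,
      u m * ew m (((k.val : ℝ) + ε) / N) * ew (-n) (((k.val : ℝ) + ε) / N) =
      if ((m - n : ℤ) : ZMod N) = 0 then u m * ew (m - n) (ε / N) else 0 := by
    intro m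
    have : ∀ k : ZMod N, u m * ew m (((k.val : ℝ) + ε) / N) * ew (-n) (((k.val : ℝ) + ε) / N) =
        u m * ew (m - n) (((k.val : ℝ) + ε) / N) := by
      intro k; rw [sub_eq_add_neg, ew_add]; ring
    simp_rw [this]
    rw [← Finset.mul_sum, sum_ew_grid]
    split_ifs
    · field_simp
    · simp
  simp_rw [h2] at h1
  have hinj : Function.Injective (fun p : ℤ => n + p * N) := by
    intro p q h
    have hN' : (N : ℤ) ≠ 0 := by exact_mod_cast NeZero.ne N
    exact mul_right_cancel₀ hN' (add_left_cancel h)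
  rw [← hinj.hasSum_iff] at h1
  · convert h1 using 1
    ext p
    simp only [Function.comp_apply, add_sub_cancel_left]
    rw [if_pos (by push_cast; simp), ew_mul_div]
  · intro m hm
    rw [if_neg]
    intro h
    rw [ZMod.intCast_zmod_eq_zero_iff_dvd] at h
    obtain ⟨p, hp⟩ := h
    exact hm ⟨p, by simp only; rw [mul_comm p]; omega⟩

lemma abel_step (r : ℝ) (h0 : 0 ≤ r) (h1 : r ≤ 1) (a : ℕ) :
    a * (1 - r) * r ^ a ≤ 1 - r ^ a := by
  induction a with
  | zero => simp
  | succ a ih =>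
    have hp : r ^ a ≤ 1 := pow_le_one₀ h0 h1
    have hp0 : 0 ≤ r ^ a := pow_nonneg h0 a
    have := mul_le_mul_of_nonneg_left ih h0
    have h5 : (1 - r) * r ^ (a+1) ≤ (1 - r) := by
      apply mul_le_of_le_one_right (by linarith) (pow_le_one₀ h0 h1)
    push_cast
    rw [pow_succ] at *
    nlinarith

/-- The Abel factors `r ^ a` do not increase the differences of `1 / a`, which gives bounds uniform in
`r` for the regularised coefficients. -/
lemma abel_mono (r : ℝ) (h0 : 0 ≤ r) (h1 : r ≤ 1) (a b : ℕ) (ha : 0 < a) (hab : a ≤ b) :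
    |r ^ a / a - r ^ b / b| ≤ 1 / (a:ℝ) - 1 / b := by
  have ha' : (0:ℝ) < a := by exact_mod_cast ha
  have hb' : (0:ℝ) < b := by exact_mod_cast lt_of_lt_of_le ha hab
  have hab' : (a:ℝ) ≤ b := by exact_mod_cast hab
  have hnn : 0 ≤ r ^ a / a - r ^ b / b := by
    rw [sub_nonneg]
    exact div_le_div₀ (pow_nonneg h0 a) (pow_le_pow_of_le_one h0 h1 hab) ha' hab'
  rw [abs_of_nonneg hnn]
  have key : (1 - r ^ b) / b ≤ (1 - r ^ a) / a := by
    clear hnn hab' hb'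
    induction b, hab using Nat.le_induction with
    | base => exact le_rfl
    | succ b hb ih =>
      refine le_trans ?_ ih
      have hb' : (0:ℝ) < b := by exact_mod_cast lt_of_lt_of_le ha hb
      rw [div_le_div_iff₀ (by positivity) hb']
      have := abel_step r h0 h1 b
      push_cast
      rw [pow_succ]
      nlinarith
  have e1 : (1 - r ^ b) / b = 1 / b - r ^ b / b := by ring
  have e2 : (1 - r ^ a) / a = 1 / a - r ^ a / a := by ring
  rw [e1, e2] at key
  linarith

lemma abel_abs (r : ℝ) (h0 : 0 ≤ r) (h1 : r ≤ 1) (a b : ℕ) (ha : 0 < a) (hb : 0 < b) :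
    |r ^ a / a - r ^ b / b| ≤ |1 / (a:ℝ) - 1 / b| := by
  rcases le_total a b with h | h
  · exact (abel_mono r h0 h1 a b ha h).trans (le_abs_self _)
  · rw [abs_sub_comm, abs_sub_comm (1 / (a:ℝ))]
    exact (abel_mono r h0 h1 b a hb h).trans (le_abs_self _)

lemma fr_sub_abs (r : ℝ) (h0 : 0 ≤ r) (h1 : r ≤ 1) (a b : ℤ) (ha : a ≠ 0) (hb : b ≠ 0) :
    |fr r a - fr r b| ≤ |(a:ℝ) - b| / (|(a:ℝ)| * |(b:ℝ)|) := by
  have ha' : 0 < |(a:ℝ)| := by simpa using ha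
  have hb' : 0 < |(b:ℝ)| := by simpa using hb
  have e : fr r a - fr r b = -(r ^ a.natAbs / a.natAbs - r ^ b.natAbs / b.natAbs) := by
    unfold fr; rw [if_neg ha, if_neg hb]; ring
  rw [e, abs_neg]
  refine (abel_abs r h0 h1 _ _ (by omega) (by omega)).trans ?_
  rw [Nat.cast_natAbs, Nat.cast_natAbs, Int.cast_abs, Int.cast_abs, div_sub_div _ _ ha'.ne' hb'.ne',
    abs_div, abs_mul, abs_abs, abs_abs]
  apply div_le_div_of_nonneg_right _ (by positivity)
  rw [one_mul, mul_one, abs_sub_comm]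
  exact abs_abs_sub_abs_le _ _

/-- Summand of the aliasing series of the logarithm, after subtraction of the term at `n = 0`. -/
def ali (N : ℕ) (ε r : ℝ) (n p : ℤ) : ℂ :=
  if p = 0 then 0 else ((fr r (n + p * N) - fr r (p * N) : ℝ) : ℂ) * ew p ε

lemma shift_lower (N : ℕ) (n p : ℤ) (hn : 4 * |(n:ℝ)| ≤ 3 * N) (hp : p ≠ 0) :
    |(p:ℝ)| * N / 4 ≤ |((n + p * N : ℤ) : ℝ)| := by
  have h1 : (1:ℝ) ≤ |(p:ℝ)| := by
    have : 1 ≤ |p| := Int.one_le_abs hp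
    exact_mod_cast this
  have h2 : |(p:ℝ) * N| = |(p:ℝ)| * N := by rw [abs_mul, Nat.abs_cast]
  have h3 : |(p:ℝ) * N| ≤ |(n:ℝ) + p * N| + |(n:ℝ)| := by
    have := abs_sub (a := (n:ℝ) + p * N) (b := (n:ℝ))
    simpa using this
  push_cast
  have hN : (0:ℝ) ≤ N := Nat.cast_nonneg N
  nlinarith

/-- The aliasing summands depend on `n` in a Lipschitz way, with constants of order `N⁻²` that are
summable in `p`; the bound is uniform in `r`, which permits the passage to the limit `r → 1`. -/
lemma ali_lip (N : ℕ) [NeZero N] (ε r : ℝ) (h0 : 0 ≤ r) (h1 : r ≤ 1) (n n' p : ℤ)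
    (hn : 4 * |(n:ℝ)| ≤ 3 * N) (hn' : 4 * |(n':ℝ)| ≤ 3 * N) :
    ‖ali N ε r n p - ali N ε r n' p‖ ≤ 64 * |(n:ℝ) - n'| / N ^ 2 * (jb p ^ 2)⁻¹ := by
  have hN : (0:ℝ) < N := by exact_mod_cast NeZero.pos N
  unfold ali
  by_cases hp : p = 0
  · simp [hp]; positivity
  rw [if_neg hp, if_neg hp, ← sub_mul, norm_mul, norm_ew, mul_one, ← Complex.ofReal_sub,
    Complex.norm_real, Real.norm_eq_abs]
  have l1 := shift_lower N n p hn hp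
  have l2 := shift_lower N n' p hn' hp
  have hp1 : (1:ℝ) ≤ |(p:ℝ)| := by
    have : 1 ≤ |p| := Int.one_le_abs hp
    exact_mod_cast this
  have hpos : 0 < |(p:ℝ)| * N / 4 := by positivity
  have ne1 : n + p * N ≠ 0 := by
    intro h; rw [h] at l1; simp at l1; linarith
  have ne2 : n' + p * N ≠ 0 := by
    intro h; rw [h] at l2; simp at l2; linarith
  have := fr_sub_abs r h0 h1 _ _ ne1 ne2
  rw [sub_sub_sub_cancel_right]
  refine this.trans ?_
  have e : |((n + p * N : ℤ) : ℝ) - ((n' + p * N : ℤ) : ℝ)| = |(n:ℝ) - n'| := by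
    push_cast; rw [add_sub_add_right_eq_sub]
  rw [e]
  calc |(n:ℝ) - n'| / (|((n + p * N : ℤ) : ℝ)| * |((n' + p * N : ℤ) : ℝ)|)
      ≤ |(n:ℝ) - n'| / ((|(p:ℝ)| * N / 4) * (|(p:ℝ)| * N / 4)) := by gcongr
    _ ≤ |(n:ℝ) - n'| / ((jb p * N / 8) * (jb p * N / 8)) := by
        have hj := jb_pos p
        have : jb p * N / 8 ≤ |(p:ℝ)| * N / 4 := by unfold jb; nlinarith
        gcongr
    _ = _ := by have hj := jb_pos p; field_simp; norm_num

lemma ali_zero (N : ℕ) (ε r : ℝ) (p : ℤ) : ali N ε r 0 p = 0 := by simp [ali]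

/-! ### Discrete Fourier coefficients of the logarithm at `ε = ±1/6` -/

lemma sin_grid_ne_zero (N : ℕ) [NeZero N] (ε : ℝ) (hε : |ε| = 1 / 6) (k : ZMod N) :
    Real.sin (Real.pi * (((k.val : ℝ) + ε) / N)) ≠ 0 := by
  have hN : (0:ℝ) < N := by exact_mod_cast NeZero.pos N
  intro h
  rw [Real.sin_eq_zero_iff] at h
  obtain ⟨j, hj⟩ := h
  have h1 : (j:ℝ) = ((k.val : ℝ) + ε) / N := by
    have := Real.pi_ne_zero
    apply mul_right_cancel₀ this
    rw [hj]; ring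
  rw [eq_div_iff hN.ne'] at h1
  have h2 : ((j * N - k.val : ℤ) : ℝ) = ε := by push_cast; linarith
  rw [← h2, ← Int.cast_abs] at hε
  have h3 : ((|j * N - k.val| * 6 : ℤ) : ℝ) = ((1:ℤ):ℝ) := by push_cast at *; rw [hε]; norm_num
  have h4 := Int.cast_injective h3
  omega

lemma sin_eps (ε : ℝ) (hε : |ε| = 1 / 6) : Real.sin (Real.pi * ε) ^ 2 = 1 / 4 := by
  rcases abs_eq (by norm_num : (0:ℝ) ≤ 1/6) |>.mp hε with h | h
  · rw [h, show Real.pi * (1/6) = Real.pi / 6 by ring, Real.sin_pi_div_six]; norm_num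
  · rw [h, show Real.pi * -(1/6) = -(Real.pi / 6) by ring, Real.sin_neg, Real.sin_pi_div_six]; norm_num

lemma fr_mul (N : ℕ) [NeZero N] (r : ℝ) (p : ℤ) (hp : p ≠ 0) :
    fr r (p * N) = (1 / (N:ℝ)) * fr (r ^ N) p := by
  have hN : (N : ℤ) ≠ 0 := by exact_mod_cast NeZero.ne N
  have hN' : (N : ℝ) ≠ 0 := by exact_mod_cast NeZero.ne N
  unfold fr
  rw [if_neg (mul_ne_zero hp hN), if_neg hp, Int.natAbs_mul, Int.natAbs_natCast, mul_comm, pow_mul]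
  have : (p.natAbs : ℝ) ≠ 0 := by simpa using hp
  push_cast
  field_simp
  ring

/-- The aliasing series for the logarithm. At `ε = ± 1/6` one has `4 sin² (π ε) = 1`, so that the
logarithmic constant of the aliasing terms vanishes. -/
lemma FN_hasSum (N : ℕ) [NeZero N] (ε : ℝ) (hε : |ε| = 1 / 6) (n : ℤ) (hn : 4 * |(n:ℝ)| ≤ 3 * N) :
    HasSum (ali N ε 1 n) (FN N ε n - fr 1 n) := by
  have hN : (0:ℝ) < N := by exact_mod_cast NeZero.pos N
  have hbs : Summable (fun p : ℤ => 64 * |(n:ℝ) - (0:ℤ)| / N ^ 2 * (jb p ^ 2)⁻¹) :=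
    summable_jb.mul_left _
  have hb : ∀ r : ℝ, 0 ≤ r → r ≤ 1 → ∀ p, ‖ali N ε r n p‖ ≤
      64 * |(n:ℝ) - (0:ℤ)| / N ^ 2 * (jb p ^ 2)⁻¹ := by
    intro r h0 h1 p
    have := ali_lip N ε r h0 h1 n 0 p hn (by simp)
    rwa [ali_zero, sub_zero] at this
  have hev : ∀ᶠ r : ℝ in 𝓝[<] 1, r ∈ Set.Ioo (1/2:ℝ) 1 := Ioo_mem_nhdsLT (by norm_num)
  have hs1 : Summable (ali N ε 1 n) :=
    Summable.of_norm_bounded hbs (hb 1 zero_le_one le_rfl)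
  have hlim : Tendsto (fun r => ∑' p, ali N ε r n p) (𝓝[<] 1) (𝓝 (∑' p, ali N ε 1 n p)) := by
    apply tendsto_tsum_of_dominated_convergence hbs
    · intro p
      have hc : Continuous (fun r => ali N ε r n p) := by
        unfold ali fr
        split_ifs <;> fun_prop
      exact hc.continuousAt.tendsto.mono_left nhdsWithin_le_nhds
    · filter_upwards [hev] with r hr
      exact hb r (by linarith [hr.1]) hr.2.le
  have hval : ∀ r : ℝ, 0 ≤ r → r < 1 → ∑' p, ali N ε r n p =
      dfc N ε (fun x => (flog r x : ℂ)) n - (1 / (N:ℂ)) * flog (r ^ N) ε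
        - (fr r n + (1 / (N:ℂ)) * Real.log 4) := by
    intro r h0 h1
    have a1 := dfc_hasSum N ε _ _ (hasSum_abel r h0 h1) n
    have a2 := (hasSum_abel (r ^ N) (pow_nonneg h0 N)
      (pow_lt_one₀ h0 h1 (NeZero.ne N)) ε).mul_left (1 / (N:ℂ))
    have a3 : HasSum (fun p : ℤ => if p = 0 then (fr r n + (1 / (N:ℂ)) * Real.log 4 : ℂ) else 0)
      _ := hasSum_ite_eq 0 _
    have a4 := (a1.sub a2).sub a3
    rw [← a4.tsum_eq]
    congr 1
    ext p
    unfold ali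
    by_cases hp : p = 0
    · subst hp
      simp [ew_zero, fr]
    · rw [if_neg hp, if_neg hp, fr_mul N r p hp]
      push_cast
      ring
  have hlim2 : Tendsto (fun r => ∑' p, ali N ε r n p) (𝓝[<] 1) (𝓝 (FN N ε n - fr 1 n)) := by
    have hsin : Real.sin (Real.pi * ε) ≠ 0 := by
      intro h
      have := sin_eps ε hε
      rw [h] at this; norm_num at this
    have t1 : Tendsto (fun r => dfc N ε (fun x => (flog r x : ℂ)) n) (𝓝[<] 1) (𝓝 (FN N ε n)) := by
      unfold FN dfc
      apply Tendsto.const_mul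
      apply tendsto_finsetSum
      intro k _
      exact ((Complex.continuous_ofReal.tendsto _).comp
        (flog_tendsto _ (sin_grid_ne_zero N ε hε k))).mul_const _
    have t2 : Tendsto (fun r : ℝ => (flog (r ^ N) ε : ℂ)) (𝓝[<] 1) (𝓝 (lf ε : ℂ)) := by
      refine (Complex.continuous_ofReal.tendsto _).comp ((flog_tendsto ε hsin).comp ?_)
      rw [tendsto_nhdsWithin_iff]
      constructor
      · have : ContinuousAt (fun r : ℝ => r ^ N) 1 := by fun_prop
        have := this.tendsto.mono_left (nhdsWithin_le_nhds (s := Set.Iio 1))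
        simpa using this
      · filter_upwards [hev] with r hr
        exact pow_lt_one₀ (by linarith [hr.1]) hr.2 (NeZero.ne N)
    have t3 : Tendsto (fun r : ℝ => (fr r n : ℂ)) (𝓝[<] 1) (𝓝 (fr 1 n : ℂ)) :=
      (Complex.continuous_ofReal.tendsto _).comp (fr_tendsto n)
    have t4 := (t1.sub (t2.const_mul (1 / (N:ℂ)))).sub (t3.add_const ((1 / (N:ℂ)) * Real.log 4))
    have e : FN N ε n - (1 / (N:ℂ)) * lf ε - (fr 1 n + (1 / (N:ℂ)) * Real.log 4) =
        FN N ε n - fr 1 n := by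
      have : lf ε = - Real.log 4 := by
        unfold lf
        rw [sin_eps ε hε, one_div, Real.log_inv]
      rw [this]; push_cast; ring
    rw [e] at t4
    refine t4.congr' ?_
    filter_upwards [hev] with r hr
    rw [hval r (by linarith [hr.1]) hr.2]
  rw [← tendsto_nhds_unique hlim hlim2]
  exact hs1.hasSum

/-- Constant in the aliasing estimates. -/
def cL : ℝ := 64 * ∑' p : ℤ, (jb p ^ 2)⁻¹

lemma cL_nonneg : 0 ≤ cL := by
  unfold cL
  have : 0 ≤ ∑' p : ℤ, (jb p ^ 2)⁻¹ := tsum_nonneg (fun p => by have := jb_pos p; positivity)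
  positivity

/-- The aliasing error varies with `n` by at most `O(|n - n'| / N²)`. -/
lemma FN_lip (N : ℕ) [NeZero N] (ε : ℝ) (hε : |ε| = 1 / 6) (n n' : ℤ) (hn : 4 * |(n:ℝ)| ≤ 3 * N)
    (hn' : 4 * |(n':ℝ)| ≤ 3 * N) :
    ‖(FN N ε n - fr 1 n) - (FN N ε n' - fr 1 n')‖ ≤ cL * |(n:ℝ) - n'| / N ^ 2 := by
  have h := (FN_hasSum N ε hε n hn).sub (FN_hasSum N ε hε n' hn')
  rw [← h.tsum_eq]
  have hs : Summable (fun p : ℤ => 64 * |(n:ℝ) - n'| / N ^ 2 * (jb p ^ 2)⁻¹) := summable_jb.mul_left _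
  refine (tsum_of_norm_bounded hs.hasSum
    (fun p => ali_lip N ε 1 zero_le_one le_rfl n n' p hn hn')).trans (le_of_eq ?_)
  rw [tsum_mul_left, cL]; ring

lemma FN_zero (N : ℕ) [NeZero N] (ε : ℝ) (hε : |ε| = 1 / 6) : FN N ε 0 - fr 1 0 = 0 := by
  have h := FN_hasSum N ε hε 0 (by simp)
  have h2 : ali N ε 1 0 = fun _ => 0 := by ext p; exact ali_zero N ε 1 p
  rw [h2] at h
  exact h.unique hasSum_zero

/-- Since the aliasing error vanishes at `n = 0`, the Lipschitz bound makes it `O(|n| / N²)`. -/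
lemma FN_sub (N : ℕ) [NeZero N] (ε : ℝ) (hε : |ε| = 1 / 6) (n : ℤ) (hn : 4 * |(n:ℝ)| ≤ 3 * N) :
    ‖FN N ε n - fr 1 n‖ ≤ cL * |(n:ℝ)| / N ^ 2 := by
  have := FN_lip N ε hε n 0 hn (by simp)
  rw [FN_zero N ε hε] at this
  simpa using this

lemma fr_one (n : ℤ) (hn : n ≠ 0) : fr 1 n = -(1 / |(n:ℝ)|) := by
  unfold fr
  rw [if_neg hn, Nat.cast_natAbs, Int.cast_abs]; simp

lemma fr_one_jb (n : ℤ) : jb n * ‖(fr 1 n : ℂ)‖ ≤ 2 := by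
  rw [Complex.norm_real, Real.norm_eq_abs]
  by_cases h : n = 0
  · subst h
    have h4 : Real.log 4 = 2 * Real.log 2 := by
      rw [show (4:ℝ) = 2 ^ 2 by norm_num, Real.log_pow]; norm_num
    have := Real.log_two_lt_d9
    have h0 := Real.log_two_gt_d9
    simp [fr, jb, h4]
    rw [abs_of_pos (by linarith)]; linarith
  · rw [fr_one n h, abs_neg, abs_of_nonneg (by positivity), mul_one_div, div_le_iff₀ (by simpa using h)]
    have : (1:ℝ) ≤ |(n:ℝ)| := by
      have : 1 ≤ |n| := Int.one_le_abs h
      exact_mod_cast this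
    unfold jb; linarith

lemma FN_period (N : ℕ) [NeZero N] (ε : ℝ) (n p : ℤ) : ‖FN N ε (n + p * N)‖ = ‖FN N ε n‖ := by
  have hN : (N : ℂ) ≠ 0 := by exact_mod_cast NeZero.ne N
  have : FN N ε (n + p * N) = ew (-p) ε * FN N ε n := by
    unfold FN dfc
    rw [mul_left_comm]
    congr 1
    rw [Finset.mul_sum]
    refine Finset.sum_congr rfl (fun k _ => ?_)
    rw [neg_add, ew_add, show -(p * (N:ℤ)) = (-p) * N by ring]
    have : ew (-p * N) (((k.val : ℝ) + ε) / N) = ew (-p) ε := by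
      rw [ew_mul_div, ew_add_arg]
      have := ew_int (-p) (k.val : ℤ)
      rw [show ((k.val : ℤ) : ℝ) = (k.val : ℝ) by simp] at this
      rw [this, one_mul]
    rw [this]; ring
  rw [this, norm_mul, norm_ew, one_mul]

lemma FN_bdd (N : ℕ) [NeZero N] (ε : ℝ) (hε : |ε| = 1 / 6) (n : ℤ) : ‖FN N ε n‖ ≤ cL + 2 := by
  have hN : (1:ℝ) ≤ N := by exact_mod_cast NeZero.pos N
  have hr := rep_bound N (n : ZMod N)
  set m := (n : ZMod N).valMinAbs with hm
  have h1 : ((n - m : ℤ) : ZMod N) = 0 := by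
    push_cast; rw [hm, ZMod.coe_valMinAbs, sub_self]
  rw [ZMod.intCast_zmod_eq_zero_iff_dvd] at h1
  obtain ⟨p, hp⟩ := h1
  have h2 : n = m + p * N := by rw [mul_comm p]; omega
  rw [h2, FN_period]
  have h3 := FN_sub N ε hε m (by linarith [abs_nonneg (m:ℝ)])
  have h4 := fr_one_jb m
  have h5 : ‖(fr 1 m : ℂ)‖ ≤ 2 := by
    have := one_le_jb m
    nlinarith [norm_nonneg (fr 1 m : ℂ)]
  have h6 : cL * |(m:ℝ)| / N ^ 2 ≤ cL := by
    rw [div_le_iff₀ (by positivity)]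
    apply mul_le_mul_of_nonneg_left _ cL_nonneg
    nlinarith [abs_nonneg (m:ℝ)]
  calc ‖FN N ε m‖ = ‖(FN N ε m - fr 1 m) + fr 1 m‖ := by rw [sub_add_cancel]
    _ ≤ _ := norm_add_le _ _
    _ ≤ _ := by linarith

/-- Consistency of the discrete logarithmic coefficients. -/
lemma FN_consist (N : ℕ) [NeZero N] (ε : ℝ) (hε : |ε| = 1 / 6) (m q : ℤ) (hm : 2 * |(m:ℝ)| ≤ N) :
    ‖FN N ε (q + m) - fr 1 (q + m)‖ ≤ (17 * cL + 64) / N ^ 2 * jb q ^ 3 * jb m := by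
  have hN : (1:ℝ) ≤ N := by exact_mod_cast NeZero.pos N
  have hc := cL_nonneg
  have hq1 := one_le_jb q
  have hm1 := one_le_jb m
  have hqa := abs_nonneg (q:ℝ)
  have hma := abs_nonneg (m:ℝ)
  have habs : |((q + m : ℤ) : ℝ)| ≤ |(q:ℝ)| + |(m:ℝ)| := by push_cast; exact abs_add_le _ _
  rw [div_mul_eq_mul_div, div_mul_eq_mul_div, le_div_iff₀ (by positivity)]
  by_cases h : 4 * |(q:ℝ)| ≤ N
  · have := FN_sub N ε hε (q + m) (by linarith)
    rw [le_div_iff₀ (by positivity)] at this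
    refine this.trans ?_
    have h3 : |((q + m : ℤ) : ℝ)| ≤ jb q * jb m := (abs_le_jb _).trans (jb_add_le q m)
    calc cL * |((q + m : ℤ) : ℝ)| ≤ cL * (jb q * jb m) := by gcongr
      _ ≤ (17 * cL + 64) * (jb q ^ 3 * jb m) := by
        have : jb q ≤ jb q ^ 3 := le_self_pow₀ hq1 (by norm_num)
        gcongr
        linarith
      _ = _ := by ring
  · push Not at h
    have h1 := FN_bdd N ε hε (q + m)
    have h2 : ‖(fr 1 (q+m) : ℂ)‖ ≤ 2 := by
      have := one_le_jb (q+m)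
      nlinarith [norm_nonneg (fr 1 (q+m) : ℂ), fr_one_jb (q+m)]
    have h3 : (N:ℝ) ^ 2 ≤ 16 * jb q ^ 2 := by
      have : (N:ℝ) ≤ 4 * jb q := by unfold jb; linarith
      nlinarith
    calc ‖FN N ε (q + m) - fr 1 (q + m)‖ * (N:ℝ) ^ 2 ≤ (cL + 4) * (16 * jb q ^ 2) := by
          gcongr
          have := norm_sub_le (FN N ε (q+m)) (fr 1 (q+m) : ℂ)
          linarith
      _ = (16 * cL + 64) * (jb q ^ 2 * 1) := by ring
      _ ≤ (17 * cL + 64) * (jb q ^ 3 * jb m) := by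
          have : jb q ^ 2 ≤ jb q ^ 3 := pow_le_pow_right₀ hq1 (by norm_num)
          gcongr
          linarith
      _ = _ := by ring

/-- Discrete smoothness of the logarithmic coefficients as a symbol. -/
lemma FN_diff (N : ℕ) [NeZero N] (ε : ℝ) (hε : |ε| = 1 / 6) (m q : ℤ) (hm : 2 * |(m:ℝ)| ≤ N) :
    jb m ^ 2 * ‖FN N ε (q + m) - FN N ε m‖ ≤ (12 * cL + 32) * jb q ^ 3 := by
  have hN : (1:ℝ) ≤ N := by exact_mod_cast NeZero.pos N
  have hc := cL_nonneg
  have hq1 := one_le_jb q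
  have hm1 := one_le_jb m
  have hqa := abs_nonneg (q:ℝ)
  have hma := abs_nonneg (m:ℝ)
  have hq3 : jb q ^ 2 ≤ jb q ^ 3 := pow_le_pow_right₀ hq1 (by norm_num)
  have hq3' : jb q ≤ jb q ^ 3 := le_self_pow₀ hq1 (by norm_num)
  have habs : |((q + m : ℤ) : ℝ)| ≤ |(q:ℝ)| + |(m:ℝ)| := by push_cast; exact abs_add_le _ _
  by_cases h : |(m:ℝ)| ≤ 2 * |(q:ℝ)|
  · have h1 := FN_bdd N ε hε (q + m)
    have h2 := FN_bdd N ε hε m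
    have h3 := norm_sub_le (FN N ε (q + m)) (FN N ε m)
    have h4 : jb m ≤ 2 * jb q := by unfold jb; linarith
    calc jb m ^ 2 * ‖FN N ε (q + m) - FN N ε m‖ ≤ (2 * jb q) ^ 2 * (2 * (cL + 2)) := by
          gcongr
          linarith
      _ = (8 * cL + 16) * jb q ^ 2 := by ring
      _ ≤ _ := by gcongr <;> linarith
  · push Not at h
    have hm0 : m ≠ 0 := by rintro rfl; simp at h; linarith
    have hmq0 : q + m ≠ 0 := by
      intro h0
      have : m = -q := by omega
      rw [this] at h; simp at h; linarith
    have ham : (1:ℝ) ≤ |(m:ℝ)| := by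
      have : 1 ≤ |m| := Int.one_le_abs hm0
      exact_mod_cast this
    have h1 := FN_lip N ε hε (q + m) m (by linarith) (by linarith)
    have h2 := fr_sub_abs 1 zero_le_one le_rfl (q + m) m hmq0 hm0
    have e : ((q + m : ℤ) : ℝ) - m = q := by push_cast; ring
    rw [e] at h1 h2
    have hlow : |(m:ℝ)| / 2 ≤ |((q + m : ℤ) : ℝ)| := by
      have := abs_sub (a := ((q + m : ℤ) : ℝ)) (b := (q:ℝ))
      rw [show ((q + m : ℤ) : ℝ) - q = m by push_cast; ring] at this
      linarith
    have h3 : |(q:ℝ)| / (|((q + m : ℤ) : ℝ)| * |(m:ℝ)|) ≤ |(q:ℝ)| / (|(m:ℝ)| / 2 * |(m:ℝ)|) := by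
      gcongr
    have h4 : FN N ε (q + m) - FN N ε m = ((FN N ε (q + m) - fr 1 (q+m)) - (FN N ε m - fr 1 m)) +
        ((fr 1 (q+m) - fr 1 m : ℝ) : ℂ) := by push_cast; ring
    have h5 : ‖FN N ε (q + m) - FN N ε m‖ ≤ cL * |(q:ℝ)| / N ^ 2 + |(q:ℝ)| / (|(m:ℝ)| / 2 * |(m:ℝ)|) := by
      rw [h4]
      refine (norm_add_le _ _).trans (add_le_add h1 ?_)
      rw [Complex.norm_real]
      exact h2.trans h3
    have h6 : jb m ^ 2 * (cL * |(q:ℝ)| / N ^ 2) ≤ 4 * cL * jb q := by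
      rw [mul_div_assoc', div_le_iff₀ (by positivity)]
      have : jb m ≤ 2 * N := by unfold jb; linarith
      calc jb m ^ 2 * (cL * |(q:ℝ)|) ≤ (2 * N) ^ 2 * (cL * jb q) := by
            gcongr; exact abs_le_jb q
        _ = _ := by ring
    have h7 : jb m ^ 2 * (|(q:ℝ)| / (|(m:ℝ)| / 2 * |(m:ℝ)|)) ≤ 8 * jb q := by
      rw [mul_div_assoc', div_le_iff₀ (by positivity)]
      have : jb m ≤ 2 * |(m:ℝ)| := by unfold jb; linarith
      calc jb m ^ 2 * |(q:ℝ)| ≤ (2 * |(m:ℝ)|) ^ 2 * jb q := by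
            gcongr; exact abs_le_jb q
        _ = _ := by ring
    calc jb m ^ 2 * ‖FN N ε (q + m) - FN N ε m‖ ≤ jb m ^ 2 * (cL * |(q:ℝ)| / N ^ 2 + |(q:ℝ)| / (|(m:ℝ)| / 2 * |(m:ℝ)|)) := by gcongr
      _ ≤ (4 * cL + 8) * jb q := by linarith
      _ ≤ _ := by gcongr <;> linarith

/-! ### Lower bound for the discrete logarithmic coefficients -/

lemma ew_add_neg (p : ℤ) (x : ℝ) : (ew (-p) x).re = (ew p x).re := by
  rw [← conj_ew, Complex.conj_re]

lemma abs_re_ew_le (p : ℤ) (x : ℝ) : |(ew p x).re| ≤ 1 := by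
  have := Complex.abs_re_le_norm (ew p x)
  rwa [norm_ew] at this

/-- The terms of first order in `n` cancel in the real part of the sum over the aliases `±(k + 1)`. -/
lemma ali_pair (N : ℕ) [NeZero N] (ε : ℝ) (n : ℤ) (hn : 2 * |(n:ℝ)| ≤ N) (k : ℕ) :
    |(ali N ε 1 n (k + 1 : ℕ) + ali N ε 1 n (-(k + 1 : ℕ))).re| ≤
      2 * (n:ℝ) ^ 2 / N ^ 3 * (1 / (k + 1 / 2) - 1 / (k + 3 / 2)) := by
  have hN : (0:ℝ) < N := by exact_mod_cast NeZero.pos N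
  have hk : (0:ℝ) ≤ k := Nat.cast_nonneg k
  have habs := abs_le.mp (show |(n:ℝ)| ≤ N / 2 by linarith)
  have p1 : 0 < (n:ℝ) + (k+1) * N := by nlinarith
  have p2 : 0 < (k+1) * N - (n:ℝ) := by nlinarith
  have p3 : 0 < ((k:ℝ)+1) * N := by positivity
  have e1 : fr 1 (n + ((k+1:ℕ):ℤ) * N) = -(1 / ((n:ℝ) + (k+1) * N)) := by
    have hc : ((n + ((k+1:ℕ):ℤ) * N : ℤ) : ℝ) = (n:ℝ) + (k+1) * N := by push_cast; ring
    rw [fr_one, hc, abs_of_pos p1]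
    intro h; rw [h] at hc; simp at hc; linarith
  have e2 : fr 1 (n + (-((k+1:ℕ):ℤ)) * N) = -(1 / ((k+1) * N - (n:ℝ))) := by
    have hc : ((n + (-((k+1:ℕ):ℤ)) * N : ℤ) : ℝ) = -((k+1) * N - (n:ℝ)) := by push_cast; ring
    rw [fr_one, hc, abs_neg, abs_of_pos p2]
    intro h; rw [h] at hc; simp at hc; linarith
  have e3 : fr 1 (((k+1:ℕ):ℤ) * N) = -(1 / (((k:ℝ)+1) * N)) := by
    have hc : ((((k+1:ℕ):ℤ) * N : ℤ) : ℝ) = ((k:ℝ)+1) * N := by push_cast; ring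
    rw [fr_one, hc, abs_of_pos p3]
    intro h; rw [h, Int.cast_zero] at hc; linarith
  have e4 : fr 1 ((-((k+1:ℕ):ℤ)) * N) = -(1 / (((k:ℝ)+1) * N)) := by
    rw [neg_mul, fr_neg, e3]
  have hne : ((k+1:ℕ):ℤ) ≠ 0 := by positivity
  have hne' : -((k+1:ℕ):ℤ) ≠ 0 := neg_ne_zero.mpr hne
  unfold ali
  rw [if_neg hne, if_neg hne', e1, e2, e3, e4, Complex.add_re, Complex.re_ofReal_mul,
    Complex.re_ofReal_mul, ew_add_neg, ← add_mul, abs_mul]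
  refine (mul_le_of_le_one_right (abs_nonneg _) (abs_re_ew_le _ _)).trans ?_
  have e5 : -(1 / ((n:ℝ) + (k+1) * N)) - -(1 / (((k:ℝ)+1) * N)) +
      (-(1 / ((k+1) * N - (n:ℝ))) - -(1 / (((k:ℝ)+1) * N))) =
      -(2 * (n:ℝ) ^ 2 / (((k:ℝ)+1) * N * (((k:ℝ)+1) ^ 2 * N ^ 2 - n ^ 2))) := by
    have : ((k:ℝ)+1) ^ 2 * N ^ 2 - n ^ 2 = ((n:ℝ) + (k+1) * N) * ((k+1) * N - (n:ℝ)) := by ring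
    rw [this]
    field_simp
    ring
  have hpos : 0 < ((k:ℝ)+1) ^ 2 * N ^ 2 - n ^ 2 := by
    have : ((k:ℝ)+1) ^ 2 * N ^ 2 - n ^ 2 = ((n:ℝ) + (k+1) * N) * ((k+1) * N - (n:ℝ)) := by ring
    rw [this]; positivity
  rw [e5, abs_neg, abs_of_nonneg (by positivity)]
  have e6 : 2 * (n:ℝ) ^ 2 / N ^ 3 * (1 / (k + 1 / 2) - 1 / (k + 3 / 2)) =
      2 * (n:ℝ) ^ 2 / (N ^ 3 * (((k:ℝ) + 1) ^ 2 - 1 / 4)) := by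
    have : ((k:ℝ) + 1) ^ 2 - 1 / 4 = (k + 1/2) * (k + 3/2) := by ring
    rw [this]
    field_simp
    ring
  rw [e6]
  have h1 : 0 < ((k:ℝ) + 1) ^ 2 - 1 / 4 := by nlinarith
  apply div_le_div_of_nonneg_left (by positivity) (by positivity)
  have h2 : (n:ℝ) ^ 2 ≤ N ^ 2 / 4 := by nlinarith
  have h3 : (N:ℝ) ^ 2 * (((k:ℝ) + 1) ^ 2 - 1 / 4) ≤ ((k:ℝ)+1) ^ 2 * N ^ 2 - n ^ 2 := by nlinarith
  calc (N:ℝ) ^ 3 * (((k:ℝ) + 1) ^ 2 - 1 / 4) = 1 * N * (N ^ 2 * (((k:ℝ) + 1) ^ 2 - 1 / 4)) := by ring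
    _ ≤ ((k:ℝ)+1) * N * (((k:ℝ)+1) ^ 2 * N ^ 2 - n ^ 2) := by
      gcongr
      linarith

/-- Lower bound for the discrete logarithmic coefficients; pairing the aliases `± p` makes the real
part of the aliasing error at most half of the main term `1 / |n|`. -/
lemma FN_lower (N : ℕ) [NeZero N] (ε : ℝ) (hε : |ε| = 1 / 6) (n : ℤ) (hn : 2 * |(n:ℝ)| ≤ N)
    (hn0 : n ≠ 0) : 1 / 2 ≤ |(n:ℝ)| * ‖FN N ε n‖ := by
  have hN : (0:ℝ) < N := by exact_mod_cast NeZero.pos N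
  have h := FN_hasSum N ε hε n (by linarith [abs_nonneg (n:ℝ)])
  have h1 := h.nat_add_neg
  have h0 : ali N ε 1 n 0 = 0 := by simp [ali]
  rw [h0, add_zero] at h1
  have h2 := Complex.hasSum_re h1
  set c : ℝ := 2 * (n:ℝ) ^ 2 / N ^ 3 with hc
  have hc0 : 0 ≤ c := by positivity
  have hpart : ∀ M : ℕ, |∑ k ∈ Finset.range (M+1),
      (ali N ε 1 n k + ali N ε 1 n (-k)).re| ≤ c * (2 - 1 / (M + 1 / 2)) := by
    intro M
    induction M with
    | zero => simp [h0]
    | succ M ih =>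
      rw [Finset.sum_range_succ]
      refine (abs_add_le _ _).trans ?_
      have := ali_pair N ε n hn M
      refine (add_le_add ih this).trans (le_of_eq ?_)
      push_cast
      have : (M:ℝ) + 1 + 1 / 2 = M + 3 / 2 := by ring
      rw [this]; ring
  have h3 : |(FN N ε n - fr 1 n).re| ≤ c * 2 := by
    have t := (h2.tendsto_sum_nat.comp (tendsto_add_atTop_nat 1)).abs
    refine le_of_tendsto' t (fun M => (hpart M).trans ?_)
    have : (0:ℝ) ≤ 1 / (M + 1 / 2) := by positivity
    nlinarith
  have ha : 0 < |(n:ℝ)| := by simpa using hn0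
  have h4 : |(n:ℝ)| * (c * 2) ≤ 1 / 2 := by
    rw [hc, ← sq_abs (n:ℝ)]
    have : |(n:ℝ)| * (2 * |(n:ℝ)| ^ 2 / N ^ 3 * 2) = 4 * (|(n:ℝ)| / N) ^ 3 := by
      field_simp; ring
    rw [this]
    have h5 : |(n:ℝ)| / N ≤ 1 / 2 := by rw [div_le_iff₀ hN]; linarith
    calc 4 * (|(n:ℝ)| / N) ^ 3 ≤ 4 * (1/2) ^ 3 := by gcongr
      _ = 1 / 2 := by norm_num
  have h5 : 1 / |(n:ℝ)| - c * 2 ≤ ‖FN N ε n‖ := by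
    refine le_trans ?_ (Complex.abs_re_le_norm _)
    rw [Complex.sub_re, Complex.ofReal_re, fr_one n hn0] at h3
    have := abs_le.mp h3
    have h6 := neg_le_abs (FN N ε n).re
    linarith
  have h6 := mul_le_mul_of_nonneg_left h5 ha.le
  rw [mul_sub, mul_one_div_cancel ha.ne'] at h6
  linarith

/-! ### Symbols of logarithmic kernels -/

/-- Rapid decay of a double sequence. -/
def Rapid2 (b : ℤ → ℤ → ℂ) : Prop :=
  ∀ j k : ℕ, ∃ C, ∀ n q, jb n ^ j * jb q ^ k * ‖b n q‖ ≤ C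

/-- Weighted row sums of a rapidly decaying double sequence. -/
def gam (b : ℤ → ℤ → ℂ) (n : ℤ) : ℝ := ∑' q, jb q ^ 3 * ‖b n q‖

/-- Coefficients `∑_q b(n,q) c(q+m)` describing the action on `e^{2πimt}` of a kernel with Fourier
coefficients `b`, multiplied by a convolution kernel with Fourier coefficients `c`. -/
def sym (b : ℤ → ℤ → ℂ) (c : ℤ → ℂ) (n m : ℤ) : ℂ := ∑' q, b n q * c (q + m)

lemma Rapid2.const_mul {b : ℤ → ℤ → ℂ} (hb : Rapid2 b) (z : ℂ) : Rapid2 (fun n q => z * b n q) := by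
  intro j k
  obtain ⟨C, hC⟩ := hb j k
  refine ⟨‖z‖ * C, fun n q => ?_⟩
  rw [norm_mul]
  have := mul_le_mul_of_nonneg_left (hC n q) (norm_nonneg z)
  linarith

lemma Rapid2.row_bound {b : ℤ → ℤ → ℂ} (hb : Rapid2 b) (j k : ℕ) : ∃ C, ∀ n q,
    jb n ^ j * (jb q ^ k * ‖b n q‖) ≤ C * (jb q ^ 2)⁻¹ := by
  obtain ⟨C, hC⟩ := hb j (k+2)
  refine ⟨C, fun n q => ?_⟩
  have hj : 0 < jb q ^ 2 := pow_pos (jb_pos q) 2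
  rw [← div_eq_mul_inv, le_div_iff₀ hj]
  calc _ = jb n ^ j * jb q ^ (k+2) * ‖b n q‖ := by ring
    _ ≤ C := hC n q

lemma Rapid2.row_summable {b : ℤ → ℤ → ℂ} (hb : Rapid2 b) (k : ℕ) (n : ℤ) :
    Summable (fun q => jb q ^ k * ‖b n q‖) := by
  obtain ⟨C, hC⟩ := hb.row_bound 0 k
  refine Summable.of_nonneg_of_le (fun q => ?_) (fun q => ?_) (summable_jb.mul_left C)
  · have := jb_pos q; positivity
  · simpa using hC n q

lemma Rapid2.summable {b : ℤ → ℤ → ℂ} (hb : Rapid2 b) : Summable (fun p : ℤ × ℤ => ‖b p.1 p.2‖) := by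
  obtain ⟨C, hC⟩ := hb 2 2
  exact summable_of_decay2 b C hC

lemma gam_nonneg (b : ℤ → ℤ → ℂ) (n : ℤ) : 0 ≤ gam b n :=
  tsum_nonneg (fun q => by have := jb_pos q; positivity)

lemma Rapid2.gam_rapid {b : ℤ → ℤ → ℂ} (hb : Rapid2 b) : Rapid (gam b) := by
  apply rapid_of_decay _ (gam_nonneg b)
  intro j
  obtain ⟨C, hC⟩ := hb.row_bound j 3
  refine ⟨∑' q, C * (jb q ^ 2)⁻¹, fun m => ?_⟩
  unfold gam
  rw [← tsum_mul_left]
  exact ((hb.row_summable 3 m).mul_left _).tsum_le_tsum (hC m) (summable_jb.mul_left C)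

lemma Rapid2.sum_bound {b : ℤ → ℤ → ℂ} (hb : Rapid2 b) (n : ℤ) (d : ℤ → ℂ) (X : ℝ)
    (hd : ∀ q, ‖d q‖ ≤ X * jb q ^ 3) :
    Summable (fun q => b n q * d q) ∧ ‖∑' q, b n q * d q‖ ≤ X * gam b n := by
  have hs := (hb.row_summable 3 n).mul_left X
  have hle : ∀ q, ‖b n q * d q‖ ≤ X * (jb q ^ 3 * ‖b n q‖) := by
    intro q
    rw [norm_mul]
    have := mul_le_mul_of_nonneg_left (hd q) (norm_nonneg (b n q))
    linarith
  refine ⟨Summable.of_norm_bounded hs hle, ?_⟩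
  refine (tsum_of_norm_bounded hs.hasSum hle).trans (le_of_eq ?_)
  rw [tsum_mul_left, gam]

/-- Fourier coefficients of the constant `1`. -/
def kap (n : ℤ) : ℂ := if n = 0 then 1 else 0

/-- Discrete Fourier coefficients of the constant `1`. -/
def kapN (N : ℕ) [NeZero N] (ε : ℝ) (n : ℤ) : ℂ := dfc N ε (fun _ => 1) n

lemma kapN_eq (N : ℕ) [NeZero N] (ε : ℝ) (n : ℤ) :
    kapN N ε n = if (n : ZMod N) = 0 then ew (-n) (ε / N) else 0 := by
  have hN : (N : ℂ) ≠ 0 := by exact_mod_cast NeZero.ne N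
  unfold kapN dfc
  simp_rw [one_mul]
  rw [sum_ew_grid]
  push_cast
  simp_rw [neg_eq_zero]
  split_ifs
  · field_simp
  · simp

lemma kapN_bdd (N : ℕ) [NeZero N] (ε : ℝ) (n : ℤ) : ‖kapN N ε n‖ ≤ 1 := by
  rw [kapN_eq]; split_ifs <;> simp [norm_ew]

lemma alias_large (N : ℕ) [NeZero N] (m q : ℤ) (hm : 2 * |(m:ℝ)| ≤ N) (h : ((q + m : ℤ) : ZMod N) = 0)
    (h0 : q + m ≠ 0) : (N:ℝ) ≤ 2 * |(q:ℝ)| := by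
  rw [ZMod.intCast_zmod_eq_zero_iff_dvd] at h
  have h1 := Int.le_of_dvd (abs_pos.mpr h0) ((dvd_abs _ _).mpr h)
  have h2 : (N:ℝ) ≤ |((q+m : ℤ):ℝ)| := by rw [← Int.cast_abs]; exact_mod_cast h1
  have h3 : |((q + m : ℤ) : ℝ)| ≤ |(q:ℝ)| + |(m:ℝ)| := by push_cast; exact abs_add_le _ _
  linarith

lemma kapN_jb (N : ℕ) [NeZero N] (ε : ℝ) (m q : ℤ) (hm : 2 * |(m:ℝ)| ≤ N) :
    jb m ^ 2 * ‖kapN N ε (q + m)‖ ≤ jb q ^ 3 := by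
  have hq := one_le_jb q
  rw [kapN_eq]
  split_ifs with h
  · rw [norm_ew, mul_one]
    have : jb m ≤ jb q := by
      by_cases h0 : q + m = 0
      · have : m = -q := by omega
        rw [this, jb_neg]
      · have := alias_large N m q hm h h0
        unfold jb; linarith
    calc jb m ^ 2 ≤ jb q ^ 2 := pow_le_pow_left₀ (jb_pos m).le this 2
      _ ≤ jb q ^ 3 := pow_le_pow_right₀ hq (by norm_num)
  · simp; positivity

lemma kap_jb (m q : ℤ) : ‖kap (q + m)‖ ≤ 2 / jb m * jb q ^ 3 := by
  have hq := one_le_jb q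
  have hm := jb_pos m
  unfold kap
  split_ifs with h0
  · have : m = -q := by omega
    rw [this, jb_neg, norm_one, div_mul_eq_mul_div, le_div_iff₀ (jb_pos q)]
    have : jb q ≤ jb q ^ 3 := le_self_pow₀ hq (by norm_num)
    linarith
  · simp; positivity

lemma kapN_consist (N : ℕ) [NeZero N] (ε : ℝ) (m q : ℤ) (hm : 2 * |(m:ℝ)| ≤ N) :
    ‖kapN N ε (q + m) - kap (q + m)‖ ≤ 4 / N ^ 2 * jb m * jb q ^ 3 := by
  have hN : (0:ℝ) < N := by exact_mod_cast NeZero.pos N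
  have hq := one_le_jb q
  have hm1 := one_le_jb m
  rw [kapN_eq]
  unfold kap
  by_cases h0 : q + m = 0
  · rw [h0]; simp [ew_zero]; positivity
  · rw [if_neg h0, sub_zero]
    split_ifs with h
    · have := alias_large N m q hm h h0
      have h2 : (N:ℝ) ≤ 2 * jb q := by unfold jb; linarith
      rw [norm_ew, div_mul_eq_mul_div, div_mul_eq_mul_div, le_div_iff₀ (by positivity), one_mul]
      calc (N:ℝ) ^ 2 ≤ (2 * jb q) ^ 2 := by gcongr
        _ = 4 * 1 * jb q ^ 2 := by ring
        _ ≤ 4 * jb m * jb q ^ 3 := by gcongr; norm_num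
    · simp; positivity

lemma frc_jb (m q : ℤ) : ‖(fr 1 (q + m) : ℂ)‖ ≤ 2 / jb m * jb q ^ 3 := by
  have hq := one_le_jb q
  have hm := jb_pos m
  have h1 := fr_one_jb (q + m)
  have h2 : jb m ≤ jb (q + m) * jb q := by rw [add_comm]; exact jb_le_add m q
  have hq3 : jb q ≤ jb q ^ 3 := le_self_pow₀ hq (by norm_num)
  rw [div_mul_eq_mul_div, le_div_iff₀ hm]
  calc ‖(fr 1 (q + m) : ℂ)‖ * jb m ≤ ‖(fr 1 (q + m) : ℂ)‖ * (jb (q + m) * jb q) := by gcongr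
    _ = (jb (q+m) * ‖(fr 1 (q + m) : ℂ)‖) * jb q := by ring
    _ ≤ 2 * jb q ^ 3 := by
      have := jb_pos (q+m)
      gcongr

/-- Symbol of the integral operator with a logarithmic kernel. -/
def gS (a k : ℤ → ℤ → ℂ) (n m : ℤ) : ℂ := sym a (fun n => (fr 1 n : ℂ)) n m + sym k kap n m

/-- Symbol of the quadrature discretisation of the integral operator with a logarithmic kernel. -/
def gN (a k : ℤ → ℤ → ℂ) (N : ℕ) [NeZero N] (ε : ℝ) (n m : ℤ) : ℂ :=
  sym a (FN N ε) n m + sym k (kapN N ε) n m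

/-- Common constant in the symbol estimates. -/
def cB : ℝ := 17 * cL + 64

lemma cB_pos : 0 < cB := by have := cL_nonneg; unfold cB; linarith

lemma gS_bound (a k : ℤ → ℤ → ℂ) (ha : Rapid2 a) (hk : Rapid2 k) (n m : ℤ) :
    ‖gS a k n m‖ ≤ cB * (gam a n + gam k n) / jb m := by
  have h1 := (ha.sum_bound n (fun q => (fr 1 (q+m) : ℂ)) (2 / jb m) (frc_jb m)).2
  have h2 := (hk.sum_bound n (fun q => kap (q+m)) (2 / jb m) (kap_jb m)).2
  have hm := jb_pos m
  have hg : 0 ≤ gam a n + gam k n := add_nonneg (gam_nonneg _ _) (gam_nonneg _ _)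
  refine (norm_add_le _ _).trans ((add_le_add h1 h2).trans ?_)
  rw [← mul_add, div_mul_eq_mul_div]
  have := cL_nonneg
  gcongr
  unfold cB; linarith

/-- Second-order consistency of the discretised symbol of a logarithmic kernel. -/
lemma gN_consist (a k : ℤ → ℤ → ℂ) (ha : Rapid2 a) (hk : Rapid2 k) (N : ℕ) [NeZero N] (ε : ℝ)
    (hε : |ε| = 1 / 6) (n m : ℤ) (hm : 2 * |(m:ℝ)| ≤ N) :
    ‖gN a k N ε n m - gS a k n m‖ ≤ cB / N ^ 2 * jb m * (gam a n + gam k n) := by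
  have hN : (0:ℝ) < N := by exact_mod_cast NeZero.pos N
  have hc := cL_nonneg
  have s1 := (ha.sum_bound n (fun q => FN N ε (q+m)) (cL + 2) (fun q => by
    refine (FN_bdd N ε hε _).trans (le_mul_of_one_le_right (by linarith) (one_le_pow₀ (one_le_jb q))))).1
  have s2 := (hk.sum_bound n (fun q => kapN N ε (q+m)) 1 (fun q => by
    refine (kapN_bdd N ε _).trans (le_mul_of_one_le_right (by linarith) (one_le_pow₀ (one_le_jb q))))).1
  have s3 := (ha.sum_bound n (fun q => (fr 1 (q+m) : ℂ)) (2 / jb m) (frc_jb m)).1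
  have s4 := (hk.sum_bound n (fun q => kap (q+m)) (2 / jb m) (kap_jb m)).1
  have e : gN a k N ε n m - gS a k n m = ∑' q, a n q * (FN N ε (q+m) - fr 1 (q+m)) +
      ∑' q, k n q * (kapN N ε (q+m) - kap (q+m)) := by
    simp_rw [mul_sub]
    rw [s1.tsum_sub s3, s2.tsum_sub s4]
    unfold gN gS sym
    ring
  rw [e]
  have h1 := (ha.sum_bound n (fun q => FN N ε (q+m) - fr 1 (q+m)) (cB / N ^ 2 * jb m) (fun q => by
    refine (FN_consist N ε hε m q hm).trans (le_of_eq ?_); unfold cB; ring)).2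
  have h2 := (hk.sum_bound n (fun q => kapN N ε (q+m) - kap (q+m)) (cB / N ^ 2 * jb m) (fun q => by
    refine (kapN_consist N ε m q hm).trans ?_
    have := jb_pos m
    have := jb_pos q
    gcongr
    unfold cB; linarith)).2
  refine (norm_add_le _ _).trans ((add_le_add h1 h2).trans (le_of_eq ?_))
  ring

lemma gN_bdd (a k : ℤ → ℤ → ℂ) (ha : Rapid2 a) (hk : Rapid2 k) (N : ℕ) [NeZero N] (ε : ℝ)
    (hε : |ε| = 1 / 6) (n m : ℤ) : ‖gN a k N ε n m‖ ≤ cB * (gam a n + gam k n) := by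
  have hc := cL_nonneg
  have s1 := (ha.sum_bound n (fun q => FN N ε (q+m)) cB (fun q => by
    refine (FN_bdd N ε hε _).trans (le_trans ?_ (le_mul_of_one_le_right cB_pos.le
      (one_le_pow₀ (one_le_jb q))))
    unfold cB; linarith)).2
  have s2 := (hk.sum_bound n (fun q => kapN N ε (q+m)) cB (fun q => by
    refine (kapN_bdd N ε _).trans (le_trans ?_ (le_mul_of_one_le_right cB_pos.le
      (one_le_pow₀ (one_le_jb q))))
    unfold cB; linarith)).2
  refine (norm_add_le _ _).trans ((add_le_add s1 s2).trans (le_of_eq ?_))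
  ring

/-- If `β` is the `n`-th Fourier coefficient of the diagonal of the logarithmic part, the symbol is
`β FN(m)` up to a term of order `-2` in `m`. -/
lemma gN_principal (a k : ℤ → ℤ → ℂ) (ha : Rapid2 a) (hk : Rapid2 k) (N : ℕ) [NeZero N] (ε : ℝ)
    (hε : |ε| = 1 / 6) (n m : ℤ) (hm : 2 * |(m:ℝ)| ≤ N) (β : ℂ) (hβ : ∑' q, a n q = β) :
    jb m ^ 2 * ‖gN a k N ε n m - β * FN N ε m‖ ≤ cB * (gam a n + gam k n) := by
  have hc := cL_nonneg
  have hj : 0 < jb m ^ 2 := pow_pos (jb_pos m) 2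
  have s1 := (ha.sum_bound n (fun q => FN N ε (q+m)) (cL + 2) (fun q => by
    refine (FN_bdd N ε hε _).trans (le_mul_of_one_le_right (by linarith) (one_le_pow₀ (one_le_jb q))))).1
  have s2 : Summable (fun q => a n q) := Summable.of_norm (by simpa using ha.row_summable 0 n)
  have e : gN a k N ε n m - β * FN N ε m = ∑' q, a n q * (FN N ε (q+m) - FN N ε m) +
      ∑' q, k n q * (kapN N ε (q+m)) := by
    simp_rw [mul_sub]
    rw [s1.tsum_sub (s2.mul_right _), tsum_mul_right, hβ]
    unfold gN sym
    ring
  have h1 := (ha.sum_bound n (fun q => FN N ε (q+m) - FN N ε m) (cB / jb m ^ 2) (fun q => by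
    rw [div_mul_eq_mul_div, le_div_iff₀ hj, mul_comm]
    refine (FN_diff N ε hε m q hm).trans ?_
    have := jb_pos q
    gcongr
    unfold cB; linarith)).2
  have h2 := (hk.sum_bound n (fun q => kapN N ε (q+m)) (cB / jb m ^ 2) (fun q => by
    rw [div_mul_eq_mul_div, le_div_iff₀ hj, mul_comm]
    refine (kapN_jb N ε m q hm).trans ?_
    have := jb_pos q
    apply le_mul_of_one_le_left (by positivity)
    unfold cB; linarith)).2
  rw [e]
  have h3 := (norm_add_le (∑' q, a n q * (FN N ε (q+m) - FN N ε m))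
      (∑' q, k n q * (kapN N ε (q+m)))).trans (add_le_add h1 h2)
  rw [← mul_add, div_mul_eq_mul_div, le_div_iff₀ hj] at h3
  linarith

/-! ### Symbols of the hypersingular operator -/

/-- Symbol `2πm` of `-i d/dt`. -/
def Ds (m : ℤ) : ℝ := 2 * Real.pi * m

/-- Symbol `2N sin(πm/N)` of the centred difference quotient with step `1/N`. -/
def DN (N : ℕ) (m : ℤ) : ℝ := 2 * N * Real.sin (Real.pi * m / N)

lemma abs_sin_sub_le_cube (x : ℝ) : |Real.sin x - x| ≤ 2 * |x| ^ 3 := by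
  by_cases h : |x| ≤ 1
  · have h1 := Real.sin_bound h
    have h0 := abs_nonneg x
    have h2 : |x| ^ 5 ≤ |x| ^ 3 := pow_le_pow_of_le_one h0 h (by norm_num)
    have e : Real.sin x - x = (Real.sin x - (x - x ^ 3 / 6)) + -(x ^ 3 / 6) := by ring
    have h3 : |-(x ^ 3 / 6)| = |x| ^ 3 / 6 := by
      rw [abs_neg, abs_div, abs_pow]; norm_num
    rw [e]
    refine (abs_add_le _ _).trans ?_
    rw [h3]
    have : 0 ≤ |x| ^ 3 := by positivity
    linarith
  · push Not at h
    have h1 : |x| ≤ |x| ^ 3 := le_self_pow₀ h.le (by norm_num)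
    have h2 := Real.abs_sin_le_abs (x := x)
    have := abs_sub (Real.sin x) x
    linarith

lemma abs_Ds_le (m : ℤ) : |Ds m| ≤ 7 * jb m := by
  unfold Ds
  rw [abs_mul, abs_of_pos Real.two_pi_pos]
  have := Real.pi_lt_d2
  have := abs_le_jb m
  have := jb_pos m
  have h : 2 * Real.pi ≤ 7 := by linarith
  calc _ ≤ 7 * |(m:ℝ)| := by gcongr
    _ ≤ _ := by gcongr

lemma abs_DN_le (N : ℕ) [NeZero N] (m : ℤ) : |DN N m| ≤ 7 * jb m := by
  have hN : (0:ℝ) < N := by exact_mod_cast NeZero.pos N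
  refine le_trans ?_ (abs_Ds_le m)
  unfold DN Ds
  rw [abs_mul, abs_of_pos (by positivity : (0:ℝ) < 2 * N)]
  have := Real.abs_sin_le_abs (x := Real.pi * m / N)
  calc _ ≤ 2 * (N:ℝ) * |Real.pi * m / N| := by gcongr
    _ = _ := by
      rw [abs_div, abs_mul, abs_mul, abs_of_pos hN, abs_of_pos Real.two_pi_pos, abs_of_pos Real.pi_pos]
      field_simp

lemma DN_sub_le (N : ℕ) [NeZero N] (m : ℤ) : |DN N m - Ds m| ≤ 128 / N ^ 2 * jb m ^ 3 := by
  have hN : (0:ℝ) < N := by exact_mod_cast NeZero.pos N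
  have e : DN N m - Ds m = 2 * N * (Real.sin (Real.pi * m / N) - Real.pi * m / N) := by
    unfold DN Ds; field_simp
  rw [e, abs_mul, abs_of_pos (by positivity : (0:ℝ) < 2 * N)]
  have h1 := abs_sin_sub_le_cube (Real.pi * m / N)
  have h2 := abs_le_jb m
  have h3 : Real.pi ^ 3 ≤ 32 := by
    have := Real.pi_lt_d2
    have := Real.pi_pos
    calc Real.pi ^ 3 ≤ 3.15 ^ 3 := by gcongr
      _ ≤ 32 := by norm_num
  calc _ ≤ 2 * (N:ℝ) * (2 * |Real.pi * m / N| ^ 3) := by gcongr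
    _ = 4 * Real.pi ^ 3 * |(m:ℝ)| ^ 3 / N ^ 2 := by
      rw [abs_div, abs_mul, abs_of_pos hN, abs_of_pos Real.pi_pos]
      field_simp; ring
    _ ≤ 4 * 32 * jb m ^ 3 / N ^ 2 := by gcongr
    _ = _ := by ring

lemma DN_lower (N : ℕ) [NeZero N] (m : ℤ) (hm : 2 * |(m:ℝ)| ≤ N) : 4 * |(m:ℝ)| ≤ |DN N m| := by
  have hN : (0:ℝ) < N := by exact_mod_cast NeZero.pos N
  have hp := Real.pi_pos
  have h : |Real.pi * m / N| = Real.pi * |(m:ℝ)| / N := by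
    rw [abs_div, abs_mul, abs_of_pos hN, abs_of_pos hp]
  have h1 := Real.mul_abs_le_abs_sin (x := Real.pi * m / N) (by
    rw [h, div_le_div_iff₀ hN (by norm_num)]; nlinarith)
  rw [h] at h1
  unfold DN
  rw [abs_mul, abs_of_pos (by positivity : (0:ℝ) < 2 * N)]
  calc 4 * |(m:ℝ)| = 2 * N * (2 / Real.pi * (Real.pi * |(m:ℝ)| / N)) := by field_simp; ring
    _ ≤ _ := by gcongr

/-- Symbol of the hypersingular operator. -/
def wS (a1 k1 a2 k2 : ℤ → ℤ → ℂ) (n m : ℤ) : ℂ :=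
  Ds m * Ds (n + m) * gS a1 k1 n m + gS a2 k2 n m

/-- Symbol of the Nyström discretisation of the hypersingular operator. -/
def wD (a1 k1 a2 k2 : ℤ → ℤ → ℂ) (N : ℕ) [NeZero N] (ε : ℝ) (n m : ℤ) : ℂ :=
  DN N m * DN N (n + m) * gN a1 k1 N ε n m + gN a2 k2 N ε n m

/-- Rapidly decaying majorant in the symbol estimates. -/
def wA (a1 k1 a2 k2 : ℤ → ℤ → ℂ) (n : ℤ) : ℝ :=
  2000 * cB * (jb n ^ 3 * (gam a1 n + gam k1 n + (gam a2 n + gam k2 n)))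

lemma wA_rapid {a1 k1 a2 k2 : ℤ → ℤ → ℂ} (ha1 : Rapid2 a1) (hk1 : Rapid2 k1) (ha2 : Rapid2 a2)
    (hk2 : Rapid2 k2) : Rapid (wA a1 k1 a2 k2) := by
  have hc := cB_pos
  refine ⟨fun n => ?_, fun j => ?_⟩
  · have := gam_nonneg a1 n; have := gam_nonneg k1 n; have := gam_nonneg a2 n
    have := gam_nonneg k2 n; have := jb_pos n
    unfold wA; positivity
  · have h := (((ha1.gam_rapid.2 (j+3)).add (hk1.gam_rapid.2 (j+3))).add
      ((ha2.gam_rapid.2 (j+3)).add (hk2.gam_rapid.2 (j+3)))).mul_left (2000 * cB)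
    refine h.congr (fun n => ?_)
    unfold wA; ring

section
variable {a1 k1 a2 k2 : ℤ → ℤ → ℂ}

lemma gam_add_nonneg (a k : ℤ → ℤ → ℂ) (n : ℤ) : 0 ≤ gam a n + gam k n :=
  add_nonneg (gam_nonneg _ _) (gam_nonneg _ _)

/-- The hypersingular operator has order one. -/
lemma wS_bound (ha1 : Rapid2 a1) (hk1 : Rapid2 k1) (ha2 : Rapid2 a2)
    (hk2 : Rapid2 k2) (n m : ℤ) : ‖wS a1 k1 a2 k2 n m‖ ≤ wA a1 k1 a2 k2 n * jb m := by
  have hc := cB_pos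
  have h1 := gS_bound a1 k1 ha1 hk1 n m
  have h2 := gS_bound a2 k2 ha2 hk2 n m
  have hG1 := gam_add_nonneg a1 k1 n
  have hG2 := gam_add_nonneg a2 k2 n
  have hm := one_le_jb m
  have hn := one_le_jb n
  have hm0 := jb_pos m
  have hn0 := jb_pos n
  have d1 := abs_Ds_le m
  have d2 : |Ds (n+m)| ≤ 7 * (jb n * jb m) := (abs_Ds_le _).trans (by gcongr; exact jb_add_le n m)
  set G1 := gam a1 n + gam k1 n
  set G2 := gam a2 n + gam k2 n
  have hj3 : jb n ≤ jb n ^ 3 := le_self_pow₀ hn (by norm_num)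
  have hj1 : 1 ≤ jb n ^ 3 := one_le_pow₀ hn
  unfold wS wA
  refine (norm_add_le _ _).trans ?_
  rw [norm_mul, norm_mul, Complex.norm_real, Complex.norm_real, Real.norm_eq_abs, Real.norm_eq_abs]
  calc |Ds m| * |Ds (n+m)| * ‖gS a1 k1 n m‖ + ‖gS a2 k2 n m‖
      ≤ (7 * jb m) * (7 * (jb n * jb m)) * (cB * G1 / jb m) + cB * G2 / jb m := by gcongr
    _ = 49 * cB * (jb n * G1) * jb m + cB * (1 * G2) * (1 / jb m) := by field_simp; ring
    _ ≤ 2000 * cB * (jb n ^ 3 * G1) * jb m + 2000 * cB * (jb n ^ 3 * G2) * jb m := by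
      have : 1 / jb m ≤ jb m := by rw [div_le_iff₀ hm0]; nlinarith
      gcongr
      · norm_num
      · linarith
    _ = _ := by ring

/-- Second-order consistency of the symbol of the Nyström matrix. -/
lemma wD_consist (ha1 : Rapid2 a1) (hk1 : Rapid2 k1) (ha2 : Rapid2 a2)
    (hk2 : Rapid2 k2) (N : ℕ) [NeZero N] (ε : ℝ) (hε : |ε| = 1 / 6) (n m : ℤ) (hm : 2 * |(m:ℝ)| ≤ N) :
    ‖wD a1 k1 a2 k2 N ε n m - wS a1 k1 a2 k2 n m‖ ≤ wA a1 k1 a2 k2 n * (1 / N ^ 2 * jb m ^ 3) := by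
  have hN : (0:ℝ) < N := by exact_mod_cast NeZero.pos N
  have hc := cB_pos
  have h0 := gS_bound a1 k1 ha1 hk1 n m
  have h1 := gN_consist a1 k1 ha1 hk1 N ε hε n m hm
  have h2 := gN_consist a2 k2 ha2 hk2 N ε hε n m hm
  have hG1 := gam_add_nonneg a1 k1 n
  have hG2 := gam_add_nonneg a2 k2 n
  have hm := one_le_jb m
  have hn := one_le_jb n
  have hm0 := jb_pos m
  have hn0 := jb_pos n
  have d1 := abs_Ds_le m
  have hjj := jb_add_le n m
  have hjj0 := jb_pos (n+m)
  have e1 := abs_DN_le N m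
  have e2 : |DN N (n+m)| ≤ 7 * (jb n * jb m) := (abs_DN_le N _).trans (by gcongr)
  have f1 := DN_sub_le N m
  have f2 : |DN N (n+m) - Ds (n+m)| ≤ 128 / N ^ 2 * (jb n * jb m) ^ 3 :=
    (DN_sub_le N _).trans (by gcongr)
  set G1 := gam a1 n + gam k1 n
  set G2 := gam a2 n + gam k2 n
  have hj3 : jb n ≤ jb n ^ 3 := le_self_pow₀ hn (by norm_num)
  have hj1 : 1 ≤ jb n ^ 3 := one_le_pow₀ hn
  have hm3 : jb m ≤ jb m ^ 3 := le_self_pow₀ hm (by norm_num)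
  have key : |DN N m * DN N (n+m) - Ds m * Ds (n+m)| ≤ 1792 / N ^ 2 * jb n ^ 3 * jb m ^ 4 := by
    have e : DN N m * DN N (n+m) - Ds m * Ds (n+m) = (DN N m - Ds m) * DN N (n+m) +
      Ds m * (DN N (n+m) - Ds (n+m)) := by ring
    rw [e]
    refine (abs_add_le _ _).trans ?_
    rw [abs_mul, abs_mul]
    calc _ ≤ (128 / N ^ 2 * jb m ^ 3) * (7 * (jb n * jb m)) +
          (7 * jb m) * (128 / N ^ 2 * (jb n * jb m) ^ 3) := by gcongr
      _ = 896 / N ^ 2 * jb n * jb m ^ 4 + 896 / N ^ 2 * jb n ^ 3 * jb m ^ 4 := by ring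
      _ ≤ 896 / N ^ 2 * jb n ^ 3 * jb m ^ 4 + 896 / N ^ 2 * jb n ^ 3 * jb m ^ 4 := by gcongr
      _ = _ := by ring
  have e : wD a1 k1 a2 k2 N ε n m - wS a1 k1 a2 k2 n m =
      ((DN N m : ℝ) : ℂ) * (DN N (n+m) : ℝ) * (gN a1 k1 N ε n m - gS a1 k1 n m) +
      ((DN N m * DN N (n+m) - Ds m * Ds (n+m) : ℝ) : ℂ) * gS a1 k1 n m +
      (gN a2 k2 N ε n m - gS a2 k2 n m) := by
    unfold wD wS; push_cast; ring
  rw [e]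
  refine (norm_add₃_le).trans ?_
  rw [norm_mul, norm_mul, norm_mul, Complex.norm_real, Complex.norm_real, Complex.norm_real,
    Real.norm_eq_abs, Real.norm_eq_abs, Real.norm_eq_abs]
  unfold wA
  calc _ ≤ (7 * jb m) * (7 * (jb n * jb m)) * (cB / N ^ 2 * jb m * G1) +
        (1792 / N ^ 2 * jb n ^ 3 * jb m ^ 4) * (cB * G1 / jb m) + cB / N ^ 2 * jb m * G2 := by gcongr
    _ = 49 * (cB * (jb n * G1) * (1 / N ^ 2 * jb m ^ 3)) +
        1792 * (cB * (jb n ^ 3 * G1) * (1 / N ^ 2 * jb m ^ 3)) +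
        1 * (cB * (1 * G2) * (1 / N ^ 2 * jb m)) := by field_simp; norm_num
    _ ≤ 49 * (cB * (jb n ^ 3 * G1) * (1 / N ^ 2 * jb m ^ 3)) +
        1792 * (cB * (jb n ^ 3 * G1) * (1 / N ^ 2 * jb m ^ 3)) +
        2000 * (cB * (jb n ^ 3 * G2) * (1 / N ^ 2 * jb m ^ 3)) := by gcongr; norm_num
    _ ≤ 2000 * (cB * (jb n ^ 3 * G1) * (1 / N ^ 2 * jb m ^ 3)) +
        2000 * (cB * (jb n ^ 3 * G2) * (1 / N ^ 2 * jb m ^ 3)) := by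
      have : 0 ≤ cB * (jb n ^ 3 * G1) * (1 / N ^ 2 * jb m ^ 3) := by positivity
      linarith
    _ = _ := by ring

/-- If the `n`-th Fourier coefficient of the diagonal vanishes, the principal part drops out and the
symbol has order zero; for a constant diagonal this covers every `n ≠ 0`. -/
lemma wD_off (ha1 : Rapid2 a1) (hk1 : Rapid2 k1) (ha2 : Rapid2 a2)
    (hk2 : Rapid2 k2) (N : ℕ) [NeZero N] (ε : ℝ) (hε : |ε| = 1 / 6) (n m : ℤ) (hm : 2 * |(m:ℝ)| ≤ N)
    (hβ : ∑' q, a1 n q = 0) : ‖wD a1 k1 a2 k2 N ε n m‖ ≤ wA a1 k1 a2 k2 n := by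
  have hc := cB_pos
  have h1 := gN_principal a1 k1 ha1 hk1 N ε hε n m hm 0 hβ
  have h2 := gN_bdd a2 k2 ha2 hk2 N ε hε n m
  have hG1 := gam_add_nonneg a1 k1 n
  have hG2 := gam_add_nonneg a2 k2 n
  have hn := one_le_jb n
  have hm0 := jb_pos m
  have hn0 := jb_pos n
  have hjj := jb_add_le n m
  have e1 := abs_DN_le N m
  have e2 : |DN N (n+m)| ≤ 7 * (jb n * jb m) := (abs_DN_le N _).trans (by gcongr)
  rw [zero_mul, sub_zero] at h1
  set G1 := gam a1 n + gam k1 n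
  set G2 := gam a2 n + gam k2 n
  have hj3 : jb n ≤ jb n ^ 3 := le_self_pow₀ hn (by norm_num)
  have hj1 : 1 ≤ jb n ^ 3 := one_le_pow₀ hn
  unfold wD wA
  refine (norm_add_le _ _).trans ?_
  rw [norm_mul, norm_mul, Complex.norm_real, Complex.norm_real, Real.norm_eq_abs, Real.norm_eq_abs]
  calc _ ≤ (7 * jb m) * (7 * (jb n * jb m)) * ‖gN a1 k1 N ε n m‖ + cB * G2 := by gcongr
    _ = 49 * jb n * (jb m ^ 2 * ‖gN a1 k1 N ε n m‖) + cB * G2 := by ring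
    _ ≤ 49 * jb n * (cB * G1) + cB * G2 := by gcongr
    _ = 49 * (cB * (jb n * G1)) + 1 * (cB * (1 * G2)) := by ring
    _ ≤ 2000 * (cB * (jb n ^ 3 * G1)) + 2000 * (cB * (jb n ^ 3 * G2)) := by gcongr <;> norm_num
    _ = _ := by ring

/-- Ellipticity of the diagonal symbol, uniformly in `N`. -/
lemma wD_diag (ha1 : Rapid2 a1) (hk1 : Rapid2 k1) (ha2 : Rapid2 a2)
    (hk2 : Rapid2 k2) (N : ℕ) [NeZero N] (ε : ℝ) (hε : |ε| = 1 / 6) (m : ℤ) (hm : 2 * |(m:ℝ)| ≤ N)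
    (β : ℂ) (hβ : ∑' q, a1 0 q = β) :
    8 * ‖β‖ * |(m:ℝ)| - wA a1 k1 a2 k2 0 ≤ ‖wD a1 k1 a2 k2 N ε 0 m‖ := by
  have hc := cB_pos
  have h1 := gN_principal a1 k1 ha1 hk1 N ε hε 0 m hm β hβ
  have h2 := gN_bdd a2 k2 ha2 hk2 N ε hε 0 m
  have hG1 := gam_add_nonneg a1 k1 0
  have hG2 := gam_add_nonneg a2 k2 0
  have hm0 := jb_pos m
  have e1 := abs_DN_le N m
  have e3 := DN_lower N m hm
  set G1 := gam a1 0 + gam k1 0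
  set G2 := gam a2 0 + gam k2 0
  have hlow : 8 * ‖β‖ * |(m:ℝ)| ≤ ‖(DN N m : ℂ) * DN N m * (β * FN N ε m)‖ := by
    rw [norm_mul, norm_mul, norm_mul, Complex.norm_real, Real.norm_eq_abs]
    by_cases h0 : m = 0
    · subst h0
      have := mul_self_nonneg (DN N 0)
      simp; positivity
    · have hF := FN_lower N ε hε m hm h0
      have := norm_nonneg β
      have hma := abs_nonneg (m:ℝ)
      calc 8 * ‖β‖ * |(m:ℝ)| = 16 * |(m:ℝ)| * ‖β‖ * (1/2) := by ring
        _ ≤ 16 * |(m:ℝ)| * ‖β‖ * (|(m:ℝ)| * ‖FN N ε m‖) := by gcongr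
        _ = (4 * |(m:ℝ)|) * (4 * |(m:ℝ)|) * (‖β‖ * ‖FN N ε m‖) := by ring
        _ ≤ _ := by gcongr
  have e : (DN N m : ℂ) * DN N m * (β * FN N ε m) = wD a1 k1 a2 k2 N ε 0 m -
      ((DN N m : ℂ) * DN N m * (gN a1 k1 N ε 0 m - β * FN N ε m) + gN a2 k2 N ε 0 m) := by
    unfold wD; rw [zero_add]; ring
  rw [e] at hlow
  have hup : ‖(DN N m : ℂ) * DN N m * (gN a1 k1 N ε 0 m - β * FN N ε m) + gN a2 k2 N ε 0 m‖ ≤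
      wA a1 k1 a2 k2 0 := by
    refine (norm_add_le _ _).trans ?_
    rw [norm_mul, norm_mul, Complex.norm_real, Real.norm_eq_abs]
    have hj : jb 0 = 1 := by simp [jb]
    unfold wA
    rw [hj]
    calc _ ≤ (7 * jb m) * (7 * jb m) * ‖gN a1 k1 N ε 0 m - β * FN N ε m‖ + cB * G2 := by gcongr
      _ = 49 * (jb m ^ 2 * ‖gN a1 k1 N ε 0 m - β * FN N ε m‖) + cB * G2 := by ring
      _ ≤ 49 * (cB * G1) + 1 * (cB * G2) := by rw [one_mul]; gcongr
      _ ≤ 2000 * (cB * G1) + 2000 * (cB * G2) := by gcongr <;> norm_num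
      _ = _ := by ring
  have := norm_sub_le (wD a1 k1 a2 k2 N ε 0 m)
    ((DN N m : ℂ) * DN N m * (gN a1 k1 N ε 0 m - β * FN N ε m) + gN a2 k2 N ε 0 m)
  linarith

/-- Stability of the Nyström discretisation in terms of Fourier coefficients. -/
lemma concrete_stability (ha1 : Rapid2 a1) (hk1 : Rapid2 k1) (ha2 : Rapid2 a2)
    (hk2 : Rapid2 k2) (ε : ℝ) (hε : |ε| = 1 / 6) (β : ℂ) (hβ0 : β ≠ 0)
    (hβ : ∀ n, ∑' q, a1 n q = if n = 0 then β else 0)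
    (hinj : ∀ u : ℤ → ℂ, (∀ j : ℕ, ∃ C, ∀ k, jb k ^ j * ‖u k‖ ≤ C) →
      (∀ k, ∑' n, wS a1 k1 a2 k2 n (k - n) * u (k - n) = 0) → ∀ k, u k = 0) :
    ∃ N0 : ℕ, ∃ C : ℝ, 0 < C ∧ ∀ (N : ℕ) [NeZero N], N0 ≤ N → ∀ u : ZMod N → ℂ,
      ∑ k, ‖u k‖ ^ 2 ≤ C * ∑ k, ‖TN N ε (wD a1 k1 a2 k2 N ε) u k‖ ^ 2 := by
  classical
  let wN : ℕ → ℤ → ℤ → ℂ := fun N n m => if h : N = 0 then 0 else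
    have : NeZero N := ⟨h⟩
    wD a1 k1 a2 k2 N ε n m
  have hwN : ∀ (N : ℕ) [NeZero N], wN N = wD a1 k1 a2 k2 N ε := by
    intro N _
    funext n m
    simp only [wN, NeZero.ne N, dif_neg, not_false_eq_true]
  have hA := wA_rapid ha1 hk1 ha2 hk2
  have hβn : 0 < ‖β‖ := norm_pos_iff.mpr hβ0
  have h1 : ∀ N : ℕ, 0 < N → ∀ n ≠ 0, ∀ m : ℤ, 2 * |(m:ℝ)| ≤ N → ‖wN N n m‖ ≤ wA a1 k1 a2 k2 n := by
    intro N hN n hn m hm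
    have : NeZero N := ⟨hN.ne'⟩
    rw [hwN]
    exact wD_off ha1 hk1 ha2 hk2 N ε hε n m hm (by rw [hβ, if_neg hn])
  have h2 : ∀ N : ℕ, 0 < N → ∀ m : ℤ, 2 * |(m:ℝ)| ≤ N → 8 * ‖β‖ * |(m:ℝ)| - wA a1 k1 a2 k2 0 ≤ ‖wN N 0 m‖ := by
    intro N hN m hm
    have : NeZero N := ⟨hN.ne'⟩
    rw [hwN]
    exact wD_diag ha1 hk1 ha2 hk2 N ε hε m hm β (by rw [hβ, if_pos rfl])
  have h3 : ∀ n m, Tendsto (fun N => wN N n m) atTop (𝓝 (wS a1 k1 a2 k2 n m)) := by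
    intro n m
    rw [tendsto_iff_norm_sub_tendsto_zero]
    have hlim : Tendsto (fun N : ℕ => wA a1 k1 a2 k2 n * (1 / (N:ℝ) ^ 2 * jb m ^ 3)) atTop (𝓝 0) := by
      have h1 : Tendsto (fun N : ℕ => (1 / (N:ℝ) ^ 2)) atTop (𝓝 0) := by
        have := (tendsto_one_div_atTop_nhds_zero_nat (𝕜 := ℝ)).pow 2
        simpa using this
      simpa using (h1.mul_const (jb m ^ 3)).const_mul (wA a1 k1 a2 k2 n)
    refine squeeze_zero' (Eventually.of_forall fun N => norm_nonneg _) ?_ hlim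
    obtain ⟨M, hM⟩ := exists_nat_ge (2 * |(m:ℝ)|)
    filter_upwards [eventually_ge_atTop (M + 1)] with N hN
    have : NeZero N := ⟨by omega⟩
    rw [hwN]
    have hMN : (M:ℝ) ≤ N := by exact_mod_cast (by omega : M ≤ N)
    exact wD_consist ha1 hk1 ha2 hk2 N ε hε n m (hM.trans hMN)
  obtain ⟨N0, C, hC, h⟩ := abstract_stability ε wN (wS a1 k1 a2 k2) (wA a1 k1 a2 k2) hA
    (8 * ‖β‖) (by positivity) h1 h2 h3 hinj
  exact ⟨N0, C, hC, fun N _ hN u => by simpa only [hwN N] using h N hN u⟩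

end

/-! ### Logarithmic kernels acting on exponentials -/

lemma hasSum_congr_iff {ι : Type*} {f g : ι → ℂ} {x : ℂ} (h : ∀ i, f i = g i) :
    HasSum f x ↔ HasSum g x := by rw [funext h]

/-- `a` is the family of Fourier coefficients of `A` in the variables `s` and `t - s`. -/
def KExp (a : ℤ → ℤ → ℂ) (A : ℝ → ℝ → ℂ) : Prop :=
  ∀ s t, HasSum (fun p : ℤ × ℤ => a p.1 p.2 * ew p.1 s * ew p.2 (t - s)) (A s t)

lemma KExp.const_mul {a : ℤ → ℤ → ℂ} {A : ℝ → ℝ → ℂ} (h : KExp a A) (z : ℂ) :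
    KExp (fun n q => z * a n q) (fun s t => z * A s t) := by
  intro s t
  have := (h s t).mul_left z
  simpa only [mul_assoc] using this

lemma sym_hasSum {a : ℤ → ℤ → ℂ} (ha : Rapid2 a) (c : ℤ → ℂ) (M : ℝ) (hc : ∀ n, ‖c n‖ ≤ M)
    (m : ℤ) (s : ℝ) (X : ℂ)
    (h : HasSum (fun p : ℤ × ℤ => a p.1 p.2 * c (p.2 + m) * ew (p.1 + m) s) X) :
    HasSum (fun n => sym a c n m * ew (n + m) s) X := by
  refine h.prod_fiberwise (fun n => ?_)
  refine HasSum.mul_right _ ?_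
  have hM : 0 ≤ M := (norm_nonneg _).trans (hc 0)
  exact (ha.sum_bound n (fun q => c (q + m)) M (fun q => (hc _).trans
    (le_mul_of_one_le_right hM (one_le_pow₀ (one_le_jb q))))).1.hasSum

lemma term_rewrite (z f : ℂ) (n q m : ℤ) (s t : ℝ) :
    z * ew n s * ew q (t - s) * f * ew m t =
      z * ew (n + m) s * (f * ew (-(q + m)) (s - t)) := by
  have e1 : ew m t = ew m s * ew m (t - s) := by rw [← ew_add_arg]; congr 1; ring
  have e2 : ew (-(q+m)) (s - t) = ew q (t - s) * ew m (t - s) := by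
    rw [ew_neg, neg_sub, ew_add]
  rw [e1, e2, ew_add]; ring

lemma intervalIntegrable_shift {f : ℝ → ℂ} (hp : Function.Periodic f 1)
    (hf : IntervalIntegrable f MeasureTheory.volume 0 1) (s : ℝ) :
    IntervalIntegrable (fun t => f (s - t)) MeasureTheory.volume 0 1 := by
  have h := hp.intervalIntegrable₀ one_ne_zero hf s (s - 1)
  have := h.comp_sub_left s
  simpa using this

lemma integral_shift {f : ℝ → ℂ} (hp : Function.Periodic f 1) (s : ℝ) :
    ∫ t in (0:ℝ)..1, f (s - t) = ∫ t in (0:ℝ)..1, f t := by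
  rw [intervalIntegral.integral_comp_sub_left]
  have := hp.intervalIntegral_add_eq (s - 1) 0
  simpa using this

/-- Action on `e^{2πimt}` of the integral operator with kernel `A(s,t) f(s-t)`. -/
lemma kernel_int {a : ℤ → ℤ → ℂ} {A : ℝ → ℝ → ℂ} (ha : Rapid2 a) (hA : KExp a A) (f : ℝ → ℂ)
    (hp : Function.Periodic f 1) (hf : IntervalIntegrable f MeasureTheory.volume 0 1)
    (M : ℝ) (hM : ∀ n, ‖fc f n‖ ≤ M) (m : ℤ) (s : ℝ) :
    HasSum (fun n => sym a (fc f) n m * ew (n + m) s) (∫ t in (0:ℝ)..1, A s t * f (s - t) * ew m t) := by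
  apply sym_hasSum ha (fc f) M hM
  have hfs := intervalIntegrable_shift hp hf s
  have hsum := ha.summable
  have h := intervalIntegral.hasSum_integral_of_dominated_convergence
    (μ := MeasureTheory.volume) (a := 0) (b := 1)
    (F := fun (p : ℤ × ℤ) t => a p.1 p.2 * ew p.1 s * ew p.2 (t - s) * f (s - t) * ew m t)
    (f := fun t => A s t * f (s - t) * ew m t)
    (fun p t => ‖a p.1 p.2‖ * ‖f (s - t)‖)
    (fun p => ((continuous_const.mul ((continuous_ew p.2).comp
      (continuous_id.sub continuous_const))).aestronglyMeasurable.mul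
      hfs.def'.aestronglyMeasurable).mul (continuous_ew m).aestronglyMeasurable)
    (fun p => Eventually.of_forall (fun t _ => by simp [norm_ew]))
    (Eventually.of_forall (fun t _ => hsum.mul_right _))
    (by simp_rw [tsum_mul_right]; exact hfs.norm.const_mul _)
    (Eventually.of_forall (fun t _ => ((hA s t).mul_right _).mul_right _))
  refine (hasSum_congr_iff fun p => ?_).mpr h
  simp_rw [term_rewrite]
  rw [intervalIntegral.integral_const_mul,
    integral_shift (f := fun x => f x * ew (-(p.2 + m)) x) (hp.mul (ew_periodic _)) s, fc_eq]
  ring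

/-- Action on `e^{2πimt}` of the quadrature discretisation of the kernel `A(s,t) f(s-t)`, on
quadrature points that form a grid shifted against the evaluation point. -/
lemma kernel_disc {a : ℤ → ℤ → ℂ} {A : ℝ → ℝ → ℂ} (ha : Rapid2 a) (hA : KExp a A) (f : ℝ → ℂ)
    (hp : Function.Periodic f 1) (N : ℕ) [NeZero N] (ε : ℝ)
    (M : ℝ) (hM : ∀ n, ‖dfc N ε f n‖ ≤ M) (m : ℤ) (s : ℝ) (y : ZMod N → ℝ) (i : ℤ)
    (hy : ∀ j : ZMod N, s - y j = (((i - (j.val : ℤ) : ℤ) : ℝ) + ε) / N) :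
    HasSum (fun n => sym a (dfc N ε f) n m * ew (n + m) s)
      ((1 / (N:ℂ)) * ∑ j, A s (y j) * f (s - y j) * ew m (y j)) := by
  apply sym_hasSum ha (dfc N ε f) M hM
  have h := (hasSum_sum (s := Finset.univ) (fun (j : ZMod N) _ =>
    (((hA s (y j)).mul_right (f (s - y j))).mul_right (ew m (y j))))).mul_left (1 / (N:ℂ))
  refine (hasSum_congr_iff fun p => ?_).mpr h
  simp_rw [term_rewrite]
  rw [← Finset.mul_sum]
  have e : ∑ j, f (s - y j) * ew (-(p.2 + m)) (s - y j) =
      ∑ k : ZMod N, f (((k.val : ℝ) + ε) / N) * ew (-(p.2 + m)) (((k.val : ℝ) + ε) / N) := by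
    rw [← (Equiv.subLeft (i : ZMod N)).sum_comp
      (fun k => f (((k.val : ℝ) + ε) / N) * ew (-(p.2 + m)) (((k.val : ℝ) + ε) / N))]
    refine Finset.sum_congr rfl (fun j _ => ?_)
    rw [hy j]
    have := periodic_grid N (fun x => f x * ew (-(p.2 + m)) x) (hp.mul (ew_periodic _)) ε
      (i - (j.val : ℤ))
    beta_reduce at this
    rw [this]
    simp
  rw [e, dfc]
  ring

lemma lf_periodic : Function.Periodic (fun x => (lf x : ℂ)) 1 := by
  intro x
  simp only [lf]
  rw [mul_add, mul_one, Real.sin_add_pi, neg_sq]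

lemma intervalIntegrable_lfc :
    IntervalIntegrable (fun x => (lf x : ℂ)) MeasureTheory.volume 0 1 :=
  ⟨intervalIntegrable_lf.1.ofReal, intervalIntegrable_lf.2.ofReal⟩

lemma fc_one (n : ℤ) : fc (fun _ => 1) n = kap n := by
  rw [fc_eq]
  simp_rw [one_mul]
  rw [integral_ew]
  simp [kap]

lemma norm_kap_le (n : ℤ) : ‖kap n‖ ≤ 1 := by unfold kap; split_ifs <;> simp

lemma norm_frc_le (n : ℤ) : ‖(fr 1 n : ℂ)‖ ≤ 2 :=
  (le_mul_of_one_le_left (norm_nonneg _) (one_le_jb n)).trans (fr_one_jb n)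

lemma logKer_eq (A K : ℝ → ℝ → ℂ) (s t : ℝ) : logKer A K s t =
    (Complex.I / (2 * Real.pi) * A s t) * (lf (s - t) : ℂ) + K s t * 1 := by
  simp only [logKer, lf, mul_one]

section
variable {a k : ℤ → ℤ → ℂ} {A K : ℝ → ℝ → ℂ}

lemma SPK.continuous_right (hA : SPK A) (s : ℝ) : Continuous (A s) :=
  (hA.contL s).continuous

lemma logKer_integrable (hA : SPK A) (hK : SPK K) (s : ℝ) :
    IntervalIntegrable (logKer A K s) MeasureTheory.volume 0 1 := by
  have h1 := intervalIntegrable_shift lf_periodic intervalIntegrable_lfc s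
  have h2 := (h1.continuousOn_mul (g := fun t => Complex.I / (2 * Real.pi) * A s t)
    (continuous_const.mul (hA.continuous_right s)).continuousOn).add
    ((hK.continuous_right s).intervalIntegrable 0 1)
  refine h2.congr (fun t _ => ?_)
  rw [logKer_eq, mul_one]

/-- The integral operator with a logarithmic kernel has the symbol `gS`. -/
lemma logKer_int (hA : SPK A) (hK : SPK K) (ha : Rapid2 a) (hk : Rapid2 k)
    (hAe : KExp a (fun s t => Complex.I / (2 * Real.pi) * A s t)) (hKe : KExp k K) (m : ℤ) (s : ℝ) :
    HasSum (fun n => gS a k n m * ew (n + m) s) (∫ t in (0:ℝ)..1, logKer A K s t * ew m t) := by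
  have hl := intervalIntegrable_lfc
  have h1 := kernel_int ha hAe (fun x => (lf x : ℂ)) lf_periodic hl 2
    (fun n => by rw [fc_lf]; exact norm_frc_le n) m s
  have h2 := kernel_int hk hKe (fun _ => 1) (fun _ => rfl) (by simp) 1
    (fun n => by rw [fc_one]; exact norm_kap_le n) m s
  have h3 := h1.add h2
  rw [← intervalIntegral.integral_add] at h3
  · convert h3 using 1
    · funext n
      unfold gS
      rw [add_mul, show fc (fun x => (lf x : ℂ)) = fun n => (fr 1 n : ℂ) from funext fc_lf,
        show fc (fun _ => (1:ℂ)) = kap from funext fc_one]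
    · refine intervalIntegral.integral_congr (fun t _ => ?_)
      rw [logKer_eq]; ring
  · have h1 := intervalIntegrable_shift lf_periodic hl s
    exact (h1.continuousOn_mul (continuous_const.mul (hA.continuous_right s)).continuousOn).mul_continuousOn
      (continuous_ew m).continuousOn
  · exact (((hK.continuous_right s).mul continuous_const).mul (continuous_ew m)).intervalIntegrable _ _

/-- The discretised operator with a logarithmic kernel has the symbol `gN`. The hypothesis on `y` says
that the observation point is shifted by `ε / N` against the quadrature grid. -/
lemma logKer_disc (ha : Rapid2 a) (hk : Rapid2 k)
    (hAe : KExp a (fun s t => Complex.I / (2 * Real.pi) * A s t)) (hKe : KExp k K)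
    (N : ℕ) [NeZero N] (ε : ℝ) (hε : |ε| = 1 / 6) (m : ℤ) (s : ℝ) (y : ZMod N → ℝ) (i : ℤ)
    (hy : ∀ j : ZMod N, s - y j = (((i - (j.val : ℤ) : ℤ) : ℝ) + ε) / N) :
    HasSum (fun n => gN a k N ε n m * ew (n + m) s)
      ((1 / (N:ℂ)) * ∑ j, logKer A K s (y j) * ew m (y j)) := by
  have h1 := kernel_disc ha hAe (fun x => (lf x : ℂ)) lf_periodic N ε (cL + 2)
    (fun n => FN_bdd N ε hε n) m s y i hy
  have h2 := kernel_disc hk hKe (fun _ => 1) (fun _ => rfl) N ε 1 (fun n => kapN_bdd N ε n) m s y i hy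
  have h3 := h1.add h2
  convert h3 using 1
  · funext n
    unfold gN
    rw [add_mul]
    rfl
  · rw [← mul_add, ← Finset.sum_add_distrib]
    congr 1
    refine Finset.sum_congr rfl (fun j _ => ?_)
    rw [logKer_eq]; ring

/-- Fourier series of the image of a function under the integral operator. -/
lemma Vop_hasSum (hA : SPK A) (hK : SPK K) (ha : Rapid2 a) (hk : Rapid2 k)
    (hAe : KExp a (fun s t => Complex.I / (2 * Real.pi) * A s t)) (hKe : KExp k K)
    (u : ℤ → ℂ) (hu : Summable (fun m => ‖u m‖)) (ψ : ℝ → ℂ)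
    (hψ : ∀ x, HasSum (fun m => u m * ew m x) (ψ x)) (s : ℝ) :
    HasSum (fun p : ℤ × ℤ => u p.1 * gS a k p.2 p.1 * ew (p.2 + p.1) s) (Vop (logKer A K) ψ s) := by
  have hint := logKer_integrable hA hK s
  have h := intervalIntegral.hasSum_integral_of_dominated_convergence
    (μ := MeasureTheory.volume) (a := 0) (b := 1)
    (F := fun m t => logKer A K s t * (u m * ew m t)) (f := fun t => logKer A K s t * ψ t)
    (fun m t => ‖u m‖ * ‖logKer A K s t‖)
    (fun m => hint.def'.aestronglyMeasurable.mul
      (continuous_const.mul (continuous_ew m)).aestronglyMeasurable)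
    (fun m => Eventually.of_forall (fun t _ => by simp [norm_ew, mul_comm]))
    (Eventually.of_forall (fun t _ => hu.mul_right _))
    (by simp_rw [tsum_mul_right]; exact hint.norm.const_mul _)
    (Eventually.of_forall (fun t _ => (hψ t).mul_left _))
  have hs : Summable (fun p : ℤ × ℤ => u p.1 * gS a k p.2 p.1 * ew (p.2 + p.1) s) := by
    have hg := ((ha.gam_rapid.summable.add hk.gam_rapid.summable).mul_left cB)
    have := hu.mul_of_nonneg hg (fun _ => norm_nonneg _)
      (fun n => mul_nonneg cB_pos.le (gam_add_nonneg a k n))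
    refine Summable.of_norm_bounded this (fun p => ?_)
    rw [norm_mul, norm_mul, norm_ew, mul_one]
    gcongr
    refine (gS_bound a k ha hk _ _).trans ?_
    exact div_le_self (mul_nonneg cB_pos.le (gam_add_nonneg a k _)) (one_le_jb _)
  have h1 := hs.hasSum.prod_fiberwise (g := fun m => u m * ∫ t in (0:ℝ)..1, logKer A K s t * ew m t)
    (fun m => by
      have := (logKer_int hA hK ha hk hAe hKe m s).mul_left (u m)
      simpa only [mul_assoc] using this)
  have h2 : HasSum (fun m => u m * ∫ t in (0:ℝ)..1, logKer A K s t * ew m t)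
      (Vop (logKer A K) ψ s) := by
    refine (hasSum_congr_iff fun m => ?_).mpr h
    rw [← intervalIntegral.integral_const_mul]
    refine intervalIntegral.integral_congr (fun t _ => ?_)
    ring
  rw [← h1.unique h2]
  exact hs.hasSum

end

/-! ### The hypersingular operator and the Nyström matrix on exponentials -/

lemma hasSum_of_eq {ι : Type*} {f g : ι → ℂ} {x y : ℂ} (h : HasSum g y) (hf : ∀ i, f i = g i)
    (hx : x = y) : HasSum f x := by rw [funext hf, hx]; exact h

/-- The kernel functions of the operator together with their Fourier coefficients. The factor
`i/(2π)` is absorbed in `a1` and `a2`. -/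
structure KData (A1 K1 A2 K2 : ℝ → ℝ → ℂ) (a1 k1 a2 k2 : ℤ → ℤ → ℂ) : Prop where
  hA1 : SPK A1
  hK1 : SPK K1
  hA2 : SPK A2
  hK2 : SPK K2
  ha1 : Rapid2 a1
  hk1 : Rapid2 k1
  ha2 : Rapid2 a2
  hk2 : Rapid2 k2
  eA1 : KExp a1 (fun s t => Complex.I / (2 * Real.pi) * A1 s t)
  eK1 : KExp k1 K1
  eA2 : KExp a2 (fun s t => Complex.I / (2 * Real.pi) * A2 s t)
  eK2 : KExp k2 K2

section
variable {A1 K1 A2 K2 : ℝ → ℝ → ℂ} {a1 k1 a2 k2 : ℤ → ℤ → ℂ}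

/-- Fourier series of the image of a smooth function under the hypersingular operator. -/
lemma KData.Wop_hasSum (D : KData A1 K1 A2 K2 a1 k1 a2 k2) (φ : ℝ → ℂ)
    (hφ : ContDiff ℝ (⊤ : ℕ∞) φ) (hp : Function.Periodic φ 1) (s : ℝ) :
    HasSum (fun p : ℤ × ℤ => fc φ p.1 * wS a1 k1 a2 k2 p.2 p.1 * ew (p.2 + p.1) s)
      (Wop (logKer A1 K1) (logKer A2 K2) φ s) := by
  have hr := fc_rapid φ hφ hp
  have hd : ContDiff ℝ (⊤ : ℕ∞) (deriv φ) := (contDiff_infty_iff_deriv.mp hφ).2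
  have hdp := periodic_deriv φ hp
  have hdf : ∀ m, fc (deriv φ) m = 2 * Real.pi * Complex.I * m * fc φ m :=
    fc_deriv φ (hφ.of_le (by exact_mod_cast le_top)) hp
  have h2 := Vop_hasSum D.hA2 D.hK2 D.ha2 D.hk2 D.eA2 D.eK2 (fc φ) hr.summable φ
    (hasSum_fc_smooth φ hφ hp) s
  have h1 := Vop_hasSum D.hA1 D.hK1 D.ha1 D.hk1 D.eA1 D.eK1 (fc (deriv φ))
    (fc_rapid _ hd hdp).summable (deriv φ) (hasSum_fc_smooth _ hd hdp)
  have hg := (((D.ha1.gam_rapid.2 1).add (D.hk1.gam_rapid.2 1)).mul_left (49 * cB))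
  have hcB := cB_pos
  have hu := (hr.2 1).mul_of_nonneg hg
    (fun n => by have := jb_pos n; positivity)
    (fun n => by
      have := gam_nonneg a1 n
      have := gam_nonneg k1 n
      have := jb_pos n
      positivity)
  have hb : ∀ (p : ℤ × ℤ) (y : ℝ), ‖fc (deriv φ) p.1 * gS a1 k1 p.2 p.1 *
      (2 * Real.pi * Complex.I * ((p.2 + p.1 : ℤ) : ℂ) * ew (p.2 + p.1) y)‖ ≤
      (jb p.1 ^ 1 * ‖fc φ p.1‖) * (49 * cB * (jb p.2 ^ 1 * gam a1 p.2 + jb p.2 ^ 1 * gam k1 p.2)) := by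
    rintro ⟨m, n⟩ y
    dsimp only
    have e1 : ‖fc (deriv φ) m‖ = |Ds m| * ‖fc φ m‖ := by
      rw [hdf]; unfold Ds; simp [abs_mul]
    have e2 : ‖2 * Real.pi * Complex.I * ((n + m : ℤ) : ℂ) * ew (n + m) y‖ = |Ds (n + m)| := by
      rw [norm_mul, norm_ew]; unfold Ds
      rw [norm_mul, Complex.norm_intCast]; simp [abs_mul]
    rw [norm_mul, norm_mul, e1, e2]
    have d1 := abs_Ds_le m
    have hm0 := jb_pos m
    have hn0 := jb_pos n
    have d2 : |Ds (n+m)| ≤ 7 * (jb n * jb m) := (abs_Ds_le _).trans (by gcongr; exact jb_add_le n m)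
    have h3 := gS_bound a1 k1 D.ha1 D.hk1 n m
    have := gam_add_nonneg a1 k1 n
    calc _ ≤ (7 * jb m * ‖fc φ m‖) * (cB * (gam a1 n + gam k1 n) / jb m) * (7 * (jb n * jb m)) := by
          gcongr
      _ = _ := by field_simp; ring
  have hder := hasDerivAt_tsum (y₀ := s) (g := fun (p : ℤ × ℤ) y => fc (deriv φ) p.1 * gS a1 k1 p.2 p.1 *
      ew (p.2 + p.1) y) (g' := fun p y => fc (deriv φ) p.1 * gS a1 k1 p.2 p.1 *
      (2 * Real.pi * Complex.I * ((p.2 + p.1 : ℤ) : ℂ) * ew (p.2 + p.1) y)) hu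
      (fun p y => (hasDerivAt_ew (p.2 + p.1) y).const_mul _) hb (h1 s).summable s
  have e : Vop (logKer A1 K1) (deriv φ) = fun z => ∑' p : ℤ × ℤ, fc (deriv φ) p.1 * gS a1 k1 p.2 p.1 *
      ew (p.2 + p.1) z := funext fun z => (h1 z).tsum_eq.symm
  have hs' : Summable (fun p : ℤ × ℤ => fc (deriv φ) p.1 * gS a1 k1 p.2 p.1 *
      (2 * Real.pi * Complex.I * ((p.2 + p.1 : ℤ) : ℂ) * ew (p.2 + p.1) s)) :=
    Summable.of_norm_bounded hu (fun p => hb p s)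
  unfold Wop
  rw [e, hder.deriv]
  refine (hasSum_congr_iff fun p => ?_).mpr (hs'.hasSum.neg.add h2)
  rw [hdf]
  unfold wS Ds
  push_cast
  linear_combination (4 * Real.pi ^ 2 * p.1 * (p.2 + p.1) * fc φ p.1 * gS a1 k1 p.2 p.1 *
    ew (p.2 + p.1) s) * Complex.I_sq

/-- Difference of exponentials at two points symmetric about `x`. -/
lemma ew_sym_diff (N : ℕ) [NeZero N] (n : ℤ) (x : ℝ) :
    ew n (x + 1 / (2 * N)) - ew n (x - 1 / (2 * N)) = Complex.I * (DN N n / N) * ew n x := by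
  have hN : (N : ℂ) ≠ 0 := by exact_mod_cast NeZero.ne N
  rw [sub_eq_add_neg x, ew_add_arg, ew_add_arg, ← mul_sub, mul_comm (ew n x)]
  congr 1
  unfold ew DN
  push_cast
  rw [Complex.sin]
  have e1 : (2 * Real.pi * Complex.I * n * (1 / (2 * N)) : ℂ) = Real.pi * n / N * Complex.I := by
    field_simp
  have e2 : (2 * Real.pi * Complex.I * n * (-(1 / (2 * N))) : ℂ) = -(Real.pi * n / N) * Complex.I := by
    field_simp
  rw [e1, e2]
  generalize Complex.exp (-(Real.pi * n / N) * Complex.I) = E1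
  generalize Complex.exp (Real.pi * n / N * Complex.I) = E2
  field_simp
  linear_combination (E2 - E1) * Complex.I_sq

/-- Action of the Nyström matrix on a discrete exponential. -/
lemma KData.Wmat_ew (D : KData A1 K1 A2 K2 a1 k1 a2 k2) (N : ℕ) [NeZero N] (ε : ℝ)
    (hε : |ε| = 1 / 6) (m i : ℤ) :
    HasSum (fun n => wD a1 k1 a2 k2 N ε n m * ew (n + m) ((i + ε) / N))
      ((N : ℂ) * ∑ j : ZMod N, Wmat (logKer A1 K1) (logKer A2 K2) (1 / (N:ℝ)) ε i ((j.val : ℕ) : ℤ) *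
        ew m (((j.val : ℝ) + 0) / N)) := by
  have hN : (N : ℂ) ≠ 0 := by exact_mod_cast NeZero.ne N
  have hNr : (N : ℝ) ≠ 0 := by exact_mod_cast NeZero.ne N
  set h : ℝ := 1 / (N:ℝ) with hh
  set x : ℝ := ((i:ℝ) + ε) / N with hx
  have σ1 : sg h ε (i + 1) = x + 1 / (2 * N) := by
    rw [hx, hh, sg]; push_cast; field_simp; ring
  have σ0 : sg h ε i = x - 1 / (2 * N) := by
    rw [hx, hh, sg]; field_simp; ring
  have h11 := logKer_disc D.ha1 D.hk1 D.eA1 D.eK1 N ε hε m (sg h ε (i+1))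
    (fun j => sg h 0 ((j.val : ℤ) + 1)) i (fun j => by simp only [sg, hh]; push_cast; field_simp; ring)
  have h01 := logKer_disc D.ha1 D.hk1 D.eA1 D.eK1 N ε hε m (sg h ε i)
    (fun j => sg h 0 ((j.val : ℤ) + 1)) (i-1) (fun j => by simp only [sg, hh]; push_cast; field_simp; ring)
  have h10 := logKer_disc D.ha1 D.hk1 D.eA1 D.eK1 N ε hε m (sg h ε (i+1))
    (fun j => sg h 0 (j.val : ℤ)) (i+1) (fun j => by simp only [sg, hh]; push_cast; field_simp; ring)
  have h00 := logKer_disc D.ha1 D.hk1 D.eA1 D.eK1 N ε hε m (sg h ε i)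
    (fun j => sg h 0 (j.val : ℤ)) i (fun j => by simp only [sg, hh]; push_cast; field_simp; ring)
  have h2 := logKer_disc D.ha2 D.hk2 D.eA2 D.eK2 N ε hε m (tg h ε i)
    (fun j => tg h 0 (j.val : ℤ)) i (fun j => by simp only [tg, hh]; push_cast; field_simp; ring)
  have y1 : ∀ j : ZMod N, ew m (((j.val : ℝ) + 0) / N) =
      ew m (sg h 0 ((j.val : ℤ) + 1)) * ew m (-(1 / (2 * N))) := fun j => by
    rw [← ew_add_arg]; congr 1; simp only [sg, hh]; push_cast; field_simp; ring
  have y0 : ∀ j : ZMod N, ew m (((j.val : ℝ) + 0) / N) =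
      ew m (sg h 0 (j.val : ℤ)) * ew m (1 / (2 * N)) := fun j => by
    rw [← ew_add_arg]; congr 1; simp only [sg, hh]; push_cast; field_simp; ring
  have y2 : ∀ j : ZMod N, ew m (((j.val : ℝ) + 0) / N) = ew m (tg h 0 (j.val : ℤ)) := fun j => by
    congr 1; simp only [tg, hh]; push_cast; field_simp
  have tx : tg h ε i = x := by simp only [tg, hh, hx]; field_simp
  have H := (((h11.sub h01).mul_left (ew m (-(1 / (2 * N))))).sub
    ((h10.sub h00).mul_left (ew m (1 / (2 * N))))).mul_left ((N:ℂ) ^ 2)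
  have H2 := H.add h2
  refine hasSum_of_eq H2 (fun n => ?_) ?_
  · have d1 := ew_sym_diff N m 0
    have d2 := ew_sym_diff N (n + m) x
    rw [zero_add, zero_sub, ew_zero_arg, mul_one] at d1
    rw [← σ1, ← σ0] at d2
    have : (N:ℂ) ^ 2 * (ew m (-(1 / (2 * N))) * (gN a1 k1 N ε n m * ew (n + m) (sg h ε (i + 1)) -
        gN a1 k1 N ε n m * ew (n + m) (sg h ε i)) - ew m (1 / (2 * N)) *
        (gN a1 k1 N ε n m * ew (n + m) (sg h ε (i + 1)) - gN a1 k1 N ε n m * ew (n + m) (sg h ε i))) =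
        -((N:ℂ) ^ 2 * gN a1 k1 N ε n m) * ((ew m (1 / (2 * N)) - ew m (-(1 / (2 * N)))) *
        (ew (n + m) (sg h ε (i + 1)) - ew (n + m) (sg h ε i))) := by ring
    rw [this, d1, d2, tx]
    unfold wD
    field_simp
    linear_combination (DN N m * DN N (n + m) * gN a1 k1 N ε n m * ew (n + m) x) * Complex.I_sq
  · have e : ∀ j : ZMod N, Wmat (logKer A1 K1) (logKer A2 K2) h ε i ((j.val : ℕ) : ℤ) *
        ew m (((j.val : ℝ) + 0) / N) =
        (logKer A1 K1 (sg h ε (i+1)) (sg h 0 ((j.val : ℤ) + 1)) * ew m (sg h 0 ((j.val : ℤ) + 1)) -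
         logKer A1 K1 (sg h ε i) (sg h 0 ((j.val : ℤ) + 1)) * ew m (sg h 0 ((j.val : ℤ) + 1))) *
          ew m (-(1 / (2 * N))) -
        (logKer A1 K1 (sg h ε (i+1)) (sg h 0 (j.val : ℤ)) * ew m (sg h 0 (j.val : ℤ)) -
         logKer A1 K1 (sg h ε i) (sg h 0 (j.val : ℤ)) * ew m (sg h 0 (j.val : ℤ))) *
          ew m (1 / (2 * N)) +
        (h:ℂ) ^ 2 * (logKer A2 K2 (tg h ε i) (tg h 0 (j.val : ℤ)) * ew m (tg h 0 (j.val : ℤ))) := by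
      intro j
      unfold Wmat
      rw [← y2]
      have z1 := y1 j
      have z0 := y0 j
      linear_combination (logKer A1 K1 (sg h ε (i+1)) (sg h 0 ((j.val : ℤ) + 1)) -
         logKer A1 K1 (sg h ε i) (sg h 0 ((j.val : ℤ) + 1))) * z1 -
         (logKer A1 K1 (sg h ε (i+1)) (sg h 0 (j.val : ℤ)) -
         logKer A1 K1 (sg h ε i) (sg h 0 (j.val : ℤ))) * z0
    simp_rw [e]
    rw [Finset.sum_add_distrib, Finset.sum_sub_distrib, ← Finset.sum_mul, ← Finset.sum_mul,
      Finset.sum_sub_distrib, Finset.sum_sub_distrib, ← Finset.mul_sum, hh]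
    push_cast
    field_simp
    try ring

end

/-! ### The Nyström matrix in Fourier coordinates -/

section
variable {A1 K1 A2 K2 : ℝ → ℝ → ℂ} {a1 k1 a2 k2 : ℤ → ℤ → ℂ}

/-- `N` times the Nyström matrix applied to the grid values of a trigonometric polynomial. -/
lemma KData.Wmat_synth (D : KData A1 K1 A2 K2 a1 k1 a2 k2) (N : ℕ) [NeZero N] (ε : ℝ)
    (hε : |ε| = 1 / 6) (u : ZMod N → ℂ) (i : ZMod N) :
    HasSum (fun n : ℤ => ∑ r : ZMod N, u r * wD a1 k1 a2 k2 N ε n r.valMinAbs *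
        ew (n + r.valMinAbs) (((i.val : ℝ) + ε) / N))
      ((N : ℂ) * ∑ j : ZMod N, Wmat (logKer A1 K1) (logKer A2 K2) (1 / (N:ℝ)) ε
        ((i.val : ℕ) : ℤ) ((j.val : ℕ) : ℤ) * synth N 0 u j) := by
  have h := hasSum_sum (s := (Finset.univ : Finset (ZMod N)))
    (fun r _ => (D.Wmat_ew N ε hε r.valMinAbs ((i.val : ℕ) : ℤ)).mul_left (u r))
  refine hasSum_of_eq h ?_ ?_
  · intro n
    refine Finset.sum_congr rfl fun r _ => ?_
    push_cast
    ring
  · simp only [synth, Finset.mul_sum]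
    rw [Finset.sum_comm]
    refine Finset.sum_congr rfl fun r _ => Finset.sum_congr rfl fun j _ => ?_
    ring

/-- On trigonometric polynomials the Nyström matrix acts as the discrete convolution operator
`TN` between Fourier coefficients. -/
lemma KData.Wmat_TN (D : KData A1 K1 A2 K2 a1 k1 a2 k2) (N : ℕ) [NeZero N] (ε : ℝ)
    (hε : |ε| = 1 / 6) (β : ℂ) (hβ : ∀ n, ∑' q, a1 n q = if n = 0 then β else 0)
    (u : ZMod N → ℂ) (i : ZMod N) :
    (N : ℂ) * ∑ j : ZMod N, Wmat (logKer A1 K1) (logKer A2 K2) (1 / (N:ℝ)) ε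
        ((i.val : ℕ) : ℤ) ((j.val : ℕ) : ℤ) * synth N 0 u j =
      synth N ε (TN N ε (wD a1 k1 a2 k2 N ε) u) i := by
  refine (D.Wmat_synth N ε hε u i).unique ?_
  have hs : ∀ k : ZMod N, HasSum (fun n : ℤ => ew ((k - n).valMinAbs + n - k.valMinAbs) (ε / N) *
      wD a1 k1 a2 k2 N ε n (k - n).valMinAbs * u (k - n)) (TN N ε (wD a1 k1 a2 k2 N ε) u k) := by
    intro k
    refine (TN_summable N ε _ _ (wA_rapid D.ha1 D.hk1 D.ha2 D.hk2) ?_ u k).hasSum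
    intro n hn m hm
    exact wD_off D.ha1 D.hk1 D.ha2 D.hk2 N ε hε n m hm (by rw [hβ, if_neg hn])
  have h := hasSum_sum (s := (Finset.univ : Finset (ZMod N)))
    (fun k _ => (hs k).mul_right (ew k.valMinAbs (((i.val : ℝ) + ε) / N)))
  refine hasSum_of_eq h ?_ rfl
  intro n
  refine Fintype.sum_equiv (Equiv.addRight (n : ZMod N)) _ _ fun r => ?_
  simp only [Equiv.coe_addRight, add_sub_cancel_right]
  -- the phase integer is divisible by `N`, so its exponential is constant on the grid
  have e : ew (r.valMinAbs + n - (r + (n : ZMod N)).valMinAbs) (((i.val : ℝ) + ε) / N) =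
      ew (r.valMinAbs + n - (r + (n : ZMod N)).valMinAbs) (ε / N) := by
    rw [ew_grid]
    simp
  rw [← e, show n + r.valMinAbs = (r.valMinAbs + n - (r + (n : ZMod N)).valMinAbs) +
    (r + (n : ZMod N)).valMinAbs by ring, ew_add]
  ring

/-- Splitting of an integer into its centred residue modulo `N` and a multiple of `N`. -/
def resEquiv (N : ℕ) [NeZero N] : ZMod N × ℤ ≃ ℤ where
  toFun p := p.1.valMinAbs + p.2 * N
  invFun m := ((m : ZMod N), (m - (m : ZMod N).valMinAbs) / N)
  left_inv p := by
    have hN : (N : ℤ) ≠ 0 := by exact_mod_cast NeZero.ne N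
    have h : ((p.1.valMinAbs + p.2 * N : ℤ) : ZMod N) = p.1 := by simp
    ext
    · exact h
    · simp only [h]
      rw [add_sub_cancel_left, Int.mul_ediv_cancel _ hN]
  right_inv m := by
    have h : (N : ℤ) ∣ m - (m : ZMod N).valMinAbs := by
      rw [← ZMod.intCast_zmod_eq_zero_iff_dvd]
      simp
    simp only
    rw [Int.ediv_mul_cancel h]
    ring

/-- Outside the central block the frequencies have size at least of order `N (1 + |l|)`. -/
lemma resEquiv_large (N : ℕ) [NeZero N] (r : ZMod N) (l : ℤ) :
    (N : ℝ) * jb l ≤ 4 * jb (resEquiv N (r, l)) ∨ l = 0 := by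
  by_cases hl : l = 0
  · exact Or.inr hl
  left
  have hN : (0:ℝ) < N := by exact_mod_cast NeZero.pos N
  have h1 : (1:ℝ) ≤ |(l:ℝ)| := by exact_mod_cast Int.one_le_abs hl
  have h2 := rep_bound N r
  simp only [resEquiv, Equiv.coe_fn_mk, jb]
  push_cast
  have h3 : |(l:ℝ)| * N ≤ |(r.valMinAbs : ℝ) + l * N| + |(r.valMinAbs : ℝ)| := by
    have := abs_sub (((r.valMinAbs : ℝ)) + l * N) (r.valMinAbs : ℝ)
    rwa [add_sub_cancel_left, abs_mul, abs_of_pos hN] at this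
  nlinarith

end

/-! ### Consistency -/

/-- The `H³`-type energy of `φ` with the weights `jb`. -/
def energy (φ : ℝ → ℂ) : ℝ := ∑' m : ℤ, (jb m ^ 3 * ‖fc φ m‖) ^ 2

lemma energy_summable (φ : ℝ → ℂ) (hφ : ContDiff ℝ (⊤ : ℕ∞) φ) (hp : Function.Periodic φ 1) :
    Summable (fun m : ℤ => (jb m ^ 3 * ‖fc φ m‖) ^ 2) := by
  have hr := (fc_rapid φ hφ hp).2 3
  have h0 : ∀ m, 0 ≤ jb m ^ 3 * ‖fc φ m‖ := fun m => by have := jb_pos m; positivity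
  refine Summable.of_nonneg_of_le (fun m => sq_nonneg _) (fun m => ?_)
    (hr.mul_left (∑' m, jb m ^ 3 * ‖fc φ m‖))
  rw [sq]
  exact mul_le_mul_of_nonneg_right (hr.le_tsum m fun j _ => h0 j) (h0 m)

lemma energy_nonneg (φ : ℝ → ℂ) : 0 ≤ energy φ := tsum_nonneg fun _ => sq_nonneg _

/-- Comparison with the Sobolev norm, from `jb m ≤ 2 |m|` for `m ≠ 0`. -/
lemma energy_le_sobNorm (φ : ℝ → ℂ) (hφ : ContDiff ℝ (⊤ : ℕ∞) φ) (hp : Function.Periodic φ 1) :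
    energy φ ≤ 64 * sobNorm 3 φ ^ 2 := by
  have hs := energy_summable φ hφ hp
  have key : ∀ m : ℤ, (if m = 0 then 0 else |(m : ℝ)| ^ (2 * 3 : ℝ) * ‖fc φ m‖ ^ 2) =
      if m = 0 then 0 else |(m : ℝ)| ^ 6 * ‖fc φ m‖ ^ 2 := by
    intro m
    split_ifs with h
    · rfl
    · rw [show (2 * 3 : ℝ) = ((6 : ℕ) : ℝ) by norm_num, Real.rpow_natCast]
  have hs' : Summable (fun m : ℤ => if m = 0 then 0 else |(m : ℝ)| ^ 6 * ‖fc φ m‖ ^ 2) := by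
    refine Summable.of_nonneg_of_le (fun m => ?_) (fun m => ?_) hs
    · split_ifs <;> positivity
    · split_ifs
      · positivity
      · rw [mul_pow, ← pow_mul]
        gcongr
        exact abs_le_jb m
  unfold sobNorm
  rw [Real.sq_sqrt (by
    refine add_nonneg (sq_nonneg _) (tsum_nonneg fun m => ?_)
    split_ifs <;> positivity)]
  simp only [key]
  have hd : HasSum (fun m : ℤ => if m = 0 then ‖fc φ 0‖ ^ 2 else 0) (‖fc φ 0‖ ^ 2) := by
    simpa using hasSum_ite_eq (0:ℤ) (‖fc φ 0‖ ^ 2)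
  have ht := (hd.add hs'.hasSum).mul_left 64
  rw [← ht.tsum_eq]
  refine hs.tsum_le_tsum (fun m => ?_) ht.summable
  by_cases hm : m = 0
  · subst hm
    simp [jb]
    nlinarith [sq_nonneg ‖fc φ 0‖]
  · simp only [if_neg hm, zero_add]
    have h1 : (1:ℝ) ≤ |(m:ℝ)| := by exact_mod_cast Int.one_le_abs hm
    have : jb m ≤ 2 * |(m:ℝ)| := by unfold jb; linarith
    calc (jb m ^ 3 * ‖fc φ m‖) ^ 2 ≤ ((2 * |(m:ℝ)|) ^ 3 * ‖fc φ m‖) ^ 2 := by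
          have := jb_pos m
          gcongr
      _ = _ := by ring

section
variable {A1 K1 A2 K2 : ℝ → ℝ → ℂ} {a1 k1 a2 k2 : ℤ → ℤ → ℂ}

/-- Consistency: the residual of the sampled central Fourier part of `φ` in the Nyström system.
Each block `(n, l)` of frequencies shifted by `n` and aliased by `l N` is estimated with the
discrete Parseval identity. -/
lemma KData.consistency (D : KData A1 K1 A2 K2 a1 k1 a2 k2) (ε : ℝ) (hε : |ε| = 1 / 6) :
    ∃ C : ℝ, 0 ≤ C ∧ ∀ φ : ℝ → ℂ, ContDiff ℝ (⊤ : ℕ∞) φ → Function.Periodic φ 1 →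
      ∀ (N : ℕ) [NeZero N],
      ∑ i : ZMod N, ‖(N : ℂ) * ∑ j : ZMod N, Wmat (logKer A1 K1) (logKer A2 K2) (1 / (N:ℝ)) ε
          ((i.val : ℕ) : ℤ) ((j.val : ℕ) : ℤ) * synth N 0 (fun r => fc φ r.valMinAbs) j -
        Wop (logKer A1 K1) (logKer A2 K2) φ (((i.val : ℝ) + ε) / N)‖ ^ 2 ≤
      N * ((C / N ^ 2) ^ 2 * energy φ) := by
  have hA := wA_rapid D.ha1 D.hk1 D.ha2 D.hk2
  have hA0 := hA.1
  have hsum : Summable (fun p : ℤ × ℤ => wA a1 k1 a2 k2 p.1 * (16 * (jb p.2 ^ 2)⁻¹)) :=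
    hA.summable.mul_of_nonneg (summable_jb.mul_left 16) hA0
      (fun l => by have := jb_pos l; positivity)
  have hb0 : ∀ p : ℤ × ℤ, 0 ≤ wA a1 k1 a2 k2 p.1 * (16 * (jb p.2 ^ 2)⁻¹) := fun p => by
    have := jb_pos p.2
    have := hA0 p.1
    positivity
  refine ⟨∑' p : ℤ × ℤ, wA a1 k1 a2 k2 p.1 * (16 * (jb p.2 ^ 2)⁻¹), tsum_nonneg hb0, ?_⟩
  intro φ hφ hp N _
  have hN : (0:ℝ) < N := by exact_mod_cast NeZero.pos N
  let Y : ℤ × ℤ → ZMod N → ℂ := fun p r => fc φ (resEquiv N (r, p.2)) *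
    ((if p.2 = 0 then wD a1 k1 a2 k2 N ε p.1 r.valMinAbs else 0) -
      wS a1 k1 a2 k2 p.1 (resEquiv N (r, p.2)))
  let X : ℤ × ℤ → ZMod N → ℂ := fun p i =>
    ∑ r, Y p r * ew (p.1 + resEquiv N (r, p.2)) (((i.val : ℝ) + ε) / N)
  have hres0 : ∀ r : ZMod N, resEquiv N (r, 0) = r.valMinAbs := fun r => by simp [resEquiv]
  have hX : ∀ i : ZMod N, HasSum (fun p => X p i)
      ((N : ℂ) * ∑ j : ZMod N, Wmat (logKer A1 K1) (logKer A2 K2) (1 / (N:ℝ)) ε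
          ((i.val : ℕ) : ℤ) ((j.val : ℕ) : ℤ) * synth N 0 (fun r => fc φ r.valMinAbs) j -
        Wop (logKer A1 K1) (logKer A2 K2) φ (((i.val : ℝ) + ε) / N)) := by
    intro i
    have h1 := D.Wmat_synth N ε hε (fun r => fc φ r.valMinAbs) i
    have hinj : Function.Injective (fun n : ℤ => (n, (0:ℤ))) := fun a b h => (Prod.mk.inj h).1
    have h1' := (hinj.hasSum_iff (f := fun p : ℤ × ℤ => if p.2 = 0 then
        ∑ r : ZMod N, fc φ r.valMinAbs * wD a1 k1 a2 k2 N ε p.1 r.valMinAbs *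
          ew (p.1 + r.valMinAbs) (((i.val : ℝ) + ε) / N) else 0) (by
      rintro ⟨n, l⟩ hl
      rw [if_neg]
      rintro rfl
      exact hl ⟨n, rfl⟩)).mp (hasSum_of_eq h1 (fun n => by simp) rfl)
    have h2 := D.Wop_hasSum φ hφ hp (((i.val : ℝ) + ε) / N)
    let e : (ℤ × ℤ) × ZMod N ≃ ℤ × ℤ :=
      { toFun := fun q => (resEquiv N (q.2, q.1.2), q.1.1)
        invFun := fun p => ((p.2, ((resEquiv N).symm p.1).2), ((resEquiv N).symm p.1).1)
        left_inv := by rintro ⟨⟨n, l⟩, r⟩; simp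
        right_inv := by rintro ⟨m, n⟩; simp }
    have h3 := (e.hasSum_iff).mpr h2
    have h4 := h3.prod_fiberwise (fun p => hasSum_fintype _)
    refine hasSum_of_eq (h1'.sub h4) ?_ rfl
    rintro ⟨n, l⟩
    simp only [X, Y, e, Function.comp_apply, Equiv.coe_fn_mk]
    by_cases hl : l = 0
    · subst hl
      simp only [if_true, hres0]
      rw [← Finset.sum_sub_distrib]
      exact Finset.sum_congr rfl fun r _ => by ring
    · simp only [if_neg hl]
      rw [zero_sub, ← Finset.sum_neg_distrib]
      exact Finset.sum_congr rfl fun r _ => by ring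
  have hY : ∀ p r, ‖Y p r‖ ≤ wA a1 k1 a2 k2 p.1 * (16 * (jb p.2 ^ 2)⁻¹) / N ^ 2 *
      (jb (resEquiv N (r, p.2)) ^ 3 * ‖fc φ (resEquiv N (r, p.2))‖) := by
    rintro ⟨n, l⟩ r
    have hA0n := hA0 n
    have hl0 := jb_pos l
    simp only [Y, norm_mul]
    by_cases hl : l = 0
    · subst hl
      simp only [if_true, hres0]
      have := wD_consist D.ha1 D.hk1 D.ha2 D.hk2 N ε hε n r.valMinAbs (rep_bound N r)
      have hj := jb_pos r.valMinAbs
      calc _ ≤ ‖fc φ r.valMinAbs‖ * (wA a1 k1 a2 k2 n * (1 / N ^ 2 * jb r.valMinAbs ^ 3)) := by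
            gcongr
        _ = wA a1 k1 a2 k2 n * 1 / N ^ 2 * (jb r.valMinAbs ^ 3 * ‖fc φ r.valMinAbs‖) := by ring
        _ ≤ _ := by
            gcongr
            norm_num [jb]
    · simp only [if_neg hl, zero_sub, norm_neg]
      have h := (resEquiv_large N r l).resolve_right hl
      have h1 := wS_bound D.ha1 D.hk1 D.ha2 D.hk2 n (resEquiv N (r, l))
      set M := resEquiv N (r, l)
      have hM := jb_pos M
      have h2 : jb M ≤ 16 * (jb l ^ 2)⁻¹ / N ^ 2 * jb M ^ 3 := by
        have : (N * jb l) ^ 2 ≤ (4 * jb M) ^ 2 := by gcongr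
        rw [show 16 * (jb l ^ 2)⁻¹ / (N:ℝ) ^ 2 * jb M ^ 3 =
          (16 * jb M ^ 3) / ((N * jb l) ^ 2) by field_simp, le_div_iff₀ (by positivity)]
        nlinarith
      calc _ ≤ ‖fc φ M‖ * (wA a1 k1 a2 k2 n * (16 * (jb l ^ 2)⁻¹ / N ^ 2 * jb M ^ 3)) := by
            gcongr
            exact h1.trans (by gcongr)
        _ = _ := by ring
  have hE := energy_nonneg φ
  have hEs : ∀ l : ℤ, ∑ r : ZMod N, (jb (resEquiv N (r, l)) ^ 3 * ‖fc φ (resEquiv N (r, l))‖) ^ 2 ≤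
      energy φ := by
    intro l
    have hin : Function.Injective (fun r : ZMod N => resEquiv N (r, l)) := fun a b h =>
      (Prod.mk.inj ((resEquiv N).injective h)).1
    rw [← tsum_fintype (L := .unconditional _)]
    exact tsum_comp_le_tsum_of_inj (energy_summable φ hφ hp) (fun _ => sq_nonneg _) hin
  have hb : ∀ p, ∑ i, ‖X p i‖ ^ 2 ≤
      (wA a1 k1 a2 k2 p.1 * (16 * (jb p.2 ^ 2)⁻¹) * (√(N * energy φ) / N ^ 2)) ^ 2 := by
    rintro ⟨n, l⟩
    have h0 := hb0 (n, l)
    rw [parseval_grid N ε (fun r => n + resEquiv N (r, l)) n (by intro r; simp [resEquiv, add_comm]),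
      mul_pow, div_pow, Real.sq_sqrt (by positivity)]
    calc (N:ℝ) * ∑ r, ‖Y (n, l) r‖ ^ 2 ≤ N * ∑ r, (wA a1 k1 a2 k2 n * (16 * (jb l ^ 2)⁻¹) / N ^ 2 *
          (jb (resEquiv N (r, l)) ^ 3 * ‖fc φ (resEquiv N (r, l))‖)) ^ 2 := by
          gcongr with r _
          exact hY (n, l) r
      _ = N * ((wA a1 k1 a2 k2 n * (16 * (jb l ^ 2)⁻¹) / N ^ 2) ^ 2 *
          ∑ r : ZMod N, (jb (resEquiv N (r, l)) ^ 3 * ‖fc φ (resEquiv N (r, l))‖) ^ 2) := by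
          simp only [mul_pow _ (jb _ ^ 3 * _), Finset.mul_sum]
      _ ≤ N * ((wA a1 k1 a2 k2 n * (16 * (jb l ^ 2)⁻¹) / N ^ 2) ^ 2 * energy φ) := by
          gcongr
          exact hEs l
      _ = _ := by ring
  have := l2_tsum X _ (hsum.mul_right (√(N * energy φ) / N ^ 2))
    (fun p => mul_nonneg (hb0 p) (by positivity)) hb
  rw [tsum_mul_right, mul_pow, div_pow, Real.sq_sqrt (by positivity)] at this
  simp only [(hX _).tsum_eq] at this
  refine this.trans (le_of_eq ?_)
  ring

end

/-! ### Injectivity in terms of Fourier coefficients -/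

lemma iteratedDeriv_mul_ew (c : ℂ) (m : ℤ) (k : ℕ) :
    iteratedDeriv k (fun x => c * ew m x) =
      fun x => c * (2 * Real.pi * Complex.I * m) ^ k * ew m x := by
  induction k with
  | zero => simp
  | succ k ih =>
    rw [iteratedDeriv_succ, ih]
    ext x
    rw [((hasDerivAt_ew m x).const_mul _).deriv]
    ring

/-- A trigonometric series with rapidly decaying coefficients is smooth. -/
lemma contDiff_series (u : ℤ → ℂ) (hu : Rapid (fun m => ‖u m‖)) :
    ContDiff ℝ (⊤ : ℕ∞) (fun x => ∑' m, u m * ew m x) := by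
  refine contDiff_tsum (v := fun k m => 7 ^ k * (jb m ^ k * ‖u m‖)) (fun m => ?_)
    (fun k _ => (hu.2 k).mul_left _) ?_
  · exact contDiff_const.mul ((contDiff_ew m).of_le (by exact_mod_cast le_top))
  · intro k m x _
    rw [norm_iteratedFDeriv_eq_norm_iteratedDeriv, iteratedDeriv_mul_ew]
    have h := abs_Ds_le m
    have e : ‖(2 * Real.pi * Complex.I * m : ℂ)‖ = |Ds m| := by
      unfold Ds
      rw [norm_mul, Complex.norm_intCast]; simp [abs_mul]
    rw [norm_mul, norm_mul, norm_pow, norm_ew, e]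
    calc ‖u m‖ * |Ds m| ^ k * 1 ≤ ‖u m‖ * (7 * jb m) ^ k * 1 := by gcongr
      _ = _ := by ring

section
variable {A1 K1 A2 K2 : ℝ → ℝ → ℂ} {a1 k1 a2 k2 : ℤ → ℤ → ℂ}

/-- Injectivity of the hypersingular operator in terms of Fourier coefficients. -/
lemma KData.seq_injective (D : KData A1 K1 A2 K2 a1 k1 a2 k2)
    (hinj : ∀ φ : ℝ → ℂ, ContDiff ℝ (⊤ : ℕ∞) φ → Function.Periodic φ 1 →
      (∀ s, Wop (logKer A1 K1) (logKer A2 K2) φ s = 0) → ∀ s, φ s = 0)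
    (u : ℤ → ℂ) (hu : ∀ j : ℕ, ∃ C, ∀ k, jb k ^ j * ‖u k‖ ≤ C)
    (h0 : ∀ k, ∑' n, wS a1 k1 a2 k2 n (k - n) * u (k - n) = 0) (k : ℤ) : u k = 0 := by
  have hr : Rapid (fun m => ‖u m‖) := rapid_of_decay _ (fun m => norm_nonneg _) hu
  let φ : ℝ → ℂ := fun x => ∑' m, u m * ew m x
  have hs : ∀ x, HasSum (fun m => u m * ew m x) (φ x) := fun x =>
    (Summable.of_norm (by simpa [norm_ew] using hr.summable)).hasSum
  have hφ : ContDiff ℝ (⊤ : ℕ∞) φ := contDiff_series u hr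
  have hp : Function.Periodic φ 1 := fun x => by
    simp only [φ]
    exact tsum_congr fun m => by rw [ew_periodic m x]
  have hfc : ∀ n, fc φ n = u n := fc_of_hasSum u hr.summable φ hs
  have hW : ∀ s, Wop (logKer A1 K1) (logKer A2 K2) φ s = 0 := by
    intro s
    have h := D.Wop_hasSum φ hφ hp s
    let e : ℤ × ℤ ≃ ℤ × ℤ :=
      { toFun := fun q => (q.1 - q.2, q.2)
        invFun := fun q => (q.1 + q.2, q.2)
        left_inv := by rintro ⟨a, b⟩; simp
        right_inv := by rintro ⟨a, b⟩; simp }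
    have h2 := e.hasSum_iff.mpr h
    have h3 := h2.prod_fiberwise (fun k => (h2.summable.prod_factor k).hasSum)
    have hz : ∀ k : ℤ, ∑' n, ((fun p : ℤ × ℤ => fc φ p.1 * wS a1 k1 a2 k2 p.2 p.1 *
        ew (p.2 + p.1) s) ∘ e) (k, n) = 0 := by
      intro k
      have : ∀ n, ((fun p : ℤ × ℤ => fc φ p.1 * wS a1 k1 a2 k2 p.2 p.1 *
        ew (p.2 + p.1) s) ∘ e) (k, n) = (wS a1 k1 a2 k2 n (k - n) * u (k - n)) * ew k s := by
        intro n
        simp only [Function.comp_apply, e, Equiv.coe_fn_mk, hfc, add_sub_cancel]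
        ring
      rw [tsum_congr this, tsum_mul_right, h0, zero_mul]
    exact h3.unique (by simpa only [hz] using hasSum_zero)
  have hzero := hinj φ hφ hp hW
  rw [← hfc k, fc_eq]
  simp [hzero]

end

/-! ### Step functions -/

lemma sum_zmod_eq_range {M : Type*} [AddCommMonoid M] (N : ℕ) [NeZero N] (g : ℕ → M) :
    ∑ r : ZMod N, g r.val = ∑ k ∈ Finset.range N, g k := by
  refine Finset.sum_nbij' ZMod.val (fun k => (k : ZMod N)) ?_ ?_ ?_ ?_ ?_
  · intro r _; simpa using r.val_lt
  · intro k _; simp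
  · intro r _; simp
  · intro k hk; exact ZMod.val_cast_of_lt (by simpa using hk)
  · intro r _; rfl

/-- Integral over a period of a function given by a different formula on each cell of the grid. -/
lemma integral_cells {E : Type*} [NormedAddCommGroup E] [NormedSpace ℝ E] (N : ℕ) [NeZero N]
    (F : ZMod N → ℝ → E) (hF : ∀ r, Continuous (F r)) (hp : ∀ r, Function.Periodic (F r) 1) :
    ∫ s in (0:ℝ)..1, F ((⌊s * N + 1 / 2 - 0⌋ : ℤ) : ZMod N) s =
      ∑ r : ZMod N, ∫ s in (((r.val : ℝ) - 1 / 2) / N)..(((r.val : ℝ) + 1 / 2) / N), F r s := by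
  have hN : (0:ℝ) < N := by exact_mod_cast NeZero.pos N
  have hper : Function.Periodic (fun s : ℝ => F ((⌊s * N + 1 / 2 - 0⌋ : ℤ) : ZMod N) s) 1 := by
    intro s
    have : ⌊(s + 1) * N + 1 / 2 - 0⌋ = ⌊s * N + 1 / 2 - 0⌋ + (N : ℤ) := by
      rw [← Int.floor_add_intCast]; congr 1; push_cast; ring
    simp only [this]
    rw [hp]
    simp
  have h1 := hper.intervalIntegral_add_eq 0 (((0:ℕ) - 1 / 2) / N : ℝ)
  rw [zero_add] at h1
  rw [h1]
  let a : ℕ → ℝ := fun k => ((k:ℝ) - 1 / 2) / N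
  have hcell : ∀ k : ℕ, Set.EqOn (fun s : ℝ => F ((⌊s * N + 1 / 2 - 0⌋ : ℤ) : ZMod N) s)
      (F (k : ZMod N)) (Set.Ioo (a k) (a (k+1))) := by
    intro k s hs
    have h2 : ((k:ℝ) - 1/2) < s * N := by rw [← div_lt_iff₀ hN]; exact hs.1
    have h3 : s * N < ((k:ℝ) + 1 - 1/2) := by
      rw [← lt_div_iff₀ hN]; have := hs.2; simpa [a] using this
    have : ⌊s * N + 1 / 2 - 0⌋ = (k : ℤ) := by
      rw [Int.floor_eq_iff]; push_cast; constructor <;> linarith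
    simp only [this]
    simp
  have hle : ∀ k, a k ≤ a (k+1) := fun k => by
    simp only [a]; push_cast; gcongr; linarith
  have hint : ∀ k < N, IntervalIntegrable
      (fun s : ℝ => F ((⌊s * N + 1 / 2 - 0⌋ : ℤ) : ZMod N) s) MeasureTheory.volume
      (a k) (a (k+1)) := by
    intro k _
    refine ((hF (k : ZMod N)).intervalIntegrable _ _).congr_ae ?_
    rw [Set.uIoc_of_le (hle k), MeasureTheory.Measure.restrict_congr_set MeasureTheory.Ioo_ae_eq_Ioc.symm]
    exact (MeasureTheory.ae_restrict_mem measurableSet_Ioo).mono fun s hs => (hcell k hs).symm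
  have h2 := intervalIntegral.sum_integral_adjacent_intervals hint
  have e1 : a N = ((0:ℕ) - 1 / 2) / N + 1 := by simp only [a]; field_simp; push_cast; ring
  have e0 : a 0 = ((0:ℕ) - 1 / 2) / N := rfl
  rw [← e1, ← e0, ← h2]
  have h3 : ∀ k, ∫ s in a k..a (k+1), F ((⌊s * N + 1 / 2 - 0⌋ : ℤ) : ZMod N) s =
      ∫ s in a k..a (k+1), F (k : ZMod N) s := by
    intro k
    refine intervalIntegral.integral_congr_ae' ?_ ?_
    · rw [← MeasureTheory.ae_restrict_iff' measurableSet_Ioc,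
        MeasureTheory.Measure.restrict_congr_set MeasureTheory.Ioo_ae_eq_Ioc.symm]
      exact (MeasureTheory.ae_restrict_mem measurableSet_Ioo).mono fun s hs => hcell k hs
    · rw [Set.Ioc_eq_empty (not_lt.mpr (hle k))]; simp
  simp only [h3]
  rw [← sum_zmod_eq_range N (fun k => ∫ s in a k..a (k+1), F (k : ZMod N) s)]
  refine Finset.sum_congr rfl fun r _ => ?_
  simp only [a, ZMod.natCast_zmod_val]
  congr 2
  push_cast; ring

lemma stepf_l2 (N : ℕ) [NeZero N] (v c : ZMod N → ℂ) :
    ∫ t in (0:ℝ)..1, ‖stepf N 0 v t - stepf N 0 c t‖ ^ 2 = 1 / N * ∑ r, ‖v r - c r‖ ^ 2 := by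
  have hN : (N:ℝ) ≠ 0 := by exact_mod_cast NeZero.ne N
  have := integral_cells N (fun r _ => ‖v r - c r‖ ^ 2) (fun r => continuous_const)
    (fun r s => rfl)
  unfold stepf
  rw [this, Finset.mul_sum]
  refine Finset.sum_congr rfl fun r _ => ?_
  rw [intervalIntegral.integral_const, smul_eq_mul]
  congr 1
  ring

/-- Integral of a Fourier mode over a grid cell of length `1/N` centred at the origin, in terms of
the symbols of the derivative and of the centred difference quotient. -/
lemma cell_int (N : ℕ) [NeZero N] (m : ℤ) :
    (N : ℂ) * (∫ t in (0 - 1 / (2 * N) : ℝ)..(0 + 1 / (2 * N)), ew (-m) t) * Ds m = DN N m := by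
  have hN : (N : ℂ) ≠ 0 := by exact_mod_cast NeZero.ne N
  have h := intervalIntegral.integral_eq_sub_of_hasDerivAt
    (a := 0 - 1 / (2 * N)) (b := 0 + 1 / (2 * N)) (fun x _ => hasDerivAt_ew (-m) x)
    ((continuous_const.mul (continuous_ew (-m))).intervalIntegrable _ _)
  rw [ew_sym_diff, intervalIntegral.integral_const_mul] at h
  have hD : DN N (-m) = - DN N m := by
    unfold DN
    rw [show Real.pi * ((-m : ℤ) : ℝ) / N = -(Real.pi * m / N) by push_cast; ring, Real.sin_neg]
    ring
  rw [hD] at h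
  unfold Ds
  have hI := Complex.I_ne_zero
  simp only [ew_zero_arg, mul_one] at h
  push_cast at h ⊢
  generalize (∫ t in (0 - 1 / (2 * N) : ℝ)..(0 + 1 / (2 * N)), ew (-m) t) = κ at h ⊢
  have h2 : Complex.I * ((N : ℂ) * κ * (2 * Real.pi * m)) = Complex.I * DN N m := by
    calc _ = -(N * (2 * Real.pi * Complex.I * (-(m:ℂ)) * κ)) := by ring
      _ = _ := by rw [h]; field_simp
  exact mul_left_cancel₀ hI h2

/-- Central Fourier coefficients of the step function with values `synth N 0 u`: the coefficients `u`
times the Fourier transform of the normalised cell. -/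
lemma fc_stepf_synth (N : ℕ) [NeZero N] (u : ZMod N → ℂ) (k : ZMod N) :
    fc (stepf N 0 (synth N 0 u)) k.valMinAbs =
      (N : ℂ) * (∫ t in (0 - 1 / (2 * N) : ℝ)..(0 + 1 / (2 * N)), ew (-k.valMinAbs) t) * u k := by
  rw [fc_eq]
  have h := integral_cells N (fun r t => synth N 0 u r * ew (-k.valMinAbs) t)
    (fun r => continuous_const.mul (continuous_ew _))
    (fun r t => by simp only; rw [ew_periodic])
  unfold stepf
  rw [h]
  set κ := ∫ t in (0 - 1 / (2 * N) : ℝ)..(0 + 1 / (2 * N)), ew (-k.valMinAbs) t with hκ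
  have hcell : ∀ r : ZMod N, ∫ s in (((r.val : ℝ) - 1 / 2) / N)..(((r.val : ℝ) + 1 / 2) / N),
      synth N 0 u r * ew (-k.valMinAbs) s =
      synth N 0 u r * (ew (-k.valMinAbs) (((r.val:ℝ) + 0) / N) * κ) := by
    intro r
    have e : ew (-k.valMinAbs) (((r.val:ℝ) + 0) / N) * κ =
        ∫ s in (((r.val : ℝ) - 1 / 2) / N)..(((r.val : ℝ) + 1 / 2) / N), ew (-k.valMinAbs) s := by
      rw [hκ, ← intervalIntegral.integral_const_mul]
      simp only [← ew_add_arg]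
      rw [intervalIntegral.integral_comp_add_left (fun s => ew (-k.valMinAbs) s)]
      congr 1 <;> (field_simp; ring)
    rw [intervalIntegral.integral_const_mul, e]
  simp only [hcell]
  have hterm : ∀ r : ZMod N, synth N 0 u r * (ew (-k.valMinAbs) (((r.val:ℝ) + 0) / N) * κ) =
      κ * ∑ l : ZMod N, u l * ew (l.valMinAbs + -k.valMinAbs) (((r.val:ℝ) + 0) / N) := by
    intro r
    unfold synth
    rw [Finset.sum_mul, Finset.mul_sum]
    exact Finset.sum_congr rfl fun l _ => by rw [ew_add]; ring
  simp only [hterm]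
  rw [← Finset.mul_sum, Finset.sum_comm]
  simp only [← Finset.mul_sum, sum_ew_grid]
  have hz : ∀ l : ZMod N, ((l.valMinAbs + -k.valMinAbs : ℤ) : ZMod N) = 0 ↔ l = k := by
    intro l
    push_cast
    rw [← sub_eq_add_neg, sub_eq_zero]
  simp only [hz]
  simp
  ring

/-- A step function matching the central Fourier coefficients of `φ` has discrete Fourier
coefficients which agree with those of `φ` up to second order. -/
lemma step_coeff_close (N : ℕ) [NeZero N] (u : ZMod N → ℂ) (k : ZMod N) (z : ℂ)
    (h : fc (stepf N 0 (synth N 0 u)) k.valMinAbs = z) :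
    ‖z - u k‖ ≤ 32 / N ^ 2 * (jb k.valMinAbs ^ 3 * ‖z‖) := by
  have hN : (0:ℝ) < N := by exact_mod_cast NeZero.pos N
  have hNc : (N : ℂ) ≠ 0 := by exact_mod_cast NeZero.ne N
  rw [fc_stepf_synth] at h
  have hj := jb_pos k.valMinAbs
  by_cases hk : k.valMinAbs = 0
  · rw [hk] at h
    have : z = u k := by
      rw [← h]
      simp only [neg_zero, ew_zero, intervalIntegral.integral_const]
      simp
      field_simp
      norm_num
    rw [this, sub_self, norm_zero]
    positivity
  · have hc := cell_int N k.valMinAbs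
    have h1 : z * Ds k.valMinAbs = DN N k.valMinAbs * u k := by rw [← h, ← hc]; ring
    have h2 : (z - u k) * DN N k.valMinAbs = z * ((DN N k.valMinAbs - Ds k.valMinAbs : ℝ) : ℂ) := by
      push_cast
      rw [mul_sub, h1]; ring
    have h3 := congrArg norm h2
    rw [norm_mul, norm_mul, Complex.norm_real, Complex.norm_real, Real.norm_eq_abs,
      Real.norm_eq_abs] at h3
    have h4 := DN_sub_le N k.valMinAbs
    have h5 := DN_lower N k.valMinAbs (rep_bound N k)
    have h6 : (1:ℝ) ≤ |(k.valMinAbs : ℝ)| := by exact_mod_cast Int.one_le_abs hk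
    have h7 : 4 * ‖z - u k‖ ≤ ‖z‖ * (128 / N ^ 2 * jb k.valMinAbs ^ 3) := by
      calc 4 * ‖z - u k‖ ≤ ‖z - u k‖ * |DN N k.valMinAbs| := by
            rw [mul_comm]; gcongr; linarith
        _ = _ := h3
        _ ≤ _ := by gcongr
    calc _ = 4 * ‖z - u k‖ / 4 := by ring
      _ ≤ ‖z‖ * (128 / N ^ 2 * jb k.valMinAbs ^ 3) / 4 := by gcongr
      _ = _ := by ring

/-! ### Conclusion -/

/-- The matrix of the Nyström system as a linear map. -/
def nysL (V1 V2 : ℝ → ℝ → ℂ) (ε : ℝ) (N : ℕ) [NeZero N] : (ZMod N → ℂ) →ₗ[ℂ] (ZMod N → ℂ) :=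
  Matrix.toLin' (Matrix.of fun i j : ZMod N =>
    Wmat V1 V2 (1 / (N : ℝ)) ε ((i.val : ℕ) : ℤ) ((j.val : ℕ) : ℤ))

lemma nysL_apply (V1 V2 : ℝ → ℝ → ℂ) (ε : ℝ) (N : ℕ) [NeZero N] (v : ZMod N → ℂ) (i : ZMod N) :
    nysL V1 V2 ε N v i =
      ∑ j : ZMod N, Wmat V1 V2 (1 / (N : ℝ)) ε ((i.val : ℕ) : ℤ) ((j.val : ℕ) : ℤ) * v j := by
  simp [nysL, Matrix.mulVec, dotProduct]

lemma nys_iff (V1 V2 : ℝ → ℝ → ℂ) (ε : ℝ) (N : ℕ) [NeZero N] (φ : ℝ → ℂ) (v : ZMod N → ℂ) :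
    Nys V1 V2 ε N φ v ↔
      nysL V1 V2 ε N v = fun i => (1 / (N : ℂ)) * Wop V1 V2 φ (((i.val : ℝ) + ε) / N) := by
  rw [funext_iff]
  refine forall_congr' fun i => ?_
  rw [nysL_apply]
  simp [tg, div_eq_mul_inv]

section
variable {A1 K1 A2 K2 : ℝ → ℝ → ℂ} {a1 k1 a2 k2 : ℤ → ℤ → ℂ}

/-- The stability estimate for `TN` transported to the Nyström matrix. -/
lemma KData.nys_stable (D : KData A1 K1 A2 K2 a1 k1 a2 k2) (ε : ℝ)
    (hε : |ε| = 1 / 6) (β : ℂ) (hβ : ∀ n, ∑' q, a1 n q = if n = 0 then β else 0)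
    (N : ℕ) [NeZero N] (C : ℝ)
    (hC : ∀ u : ZMod N → ℂ,
      ∑ k, ‖u k‖ ^ 2 ≤ C * ∑ k, ‖TN N ε (wD a1 k1 a2 k2 N ε) u k‖ ^ 2) (u : ZMod N → ℂ) :
    ∑ k, ‖u k‖ ^ 2 ≤ C * (1 / N *
      ∑ i, ‖(N : ℂ) * nysL (logKer A1 K1) (logKer A2 K2) ε N (synth N 0 u) i‖ ^ 2) := by
  have hN : (N : ℝ) ≠ 0 := by exact_mod_cast NeZero.ne N
  simp only [nysL_apply, D.Wmat_TN N ε hε β hβ, synth_parseval]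
  refine (hC u).trans (le_of_eq ?_)
  field_simp

end

end

/-- for `ε = ±1/6`, second-order superconvergence of the Nyström solution
towards the step function `χ_h ∈ S_h` matching the central Fourier coefficients of `φ`:
`‖φ_h − χ_h‖₀ ≤ C h² ‖φ‖₃`. -/
theorem stmt_15
    (A1 K1 A2 K2 : ℝ → ℝ → ℂ) (hA1 : SPK A1) (hK1 : SPK K1) (hA2 : SPK A2) (hK2 : SPK K2)
    (α : ℂ) (hα : α ≠ 0) (hdiag : ∀ s : ℝ, A1 s s = α)
    (hinj : ∀ φ : ℝ → ℂ, ContDiff ℝ (⊤ : ℕ∞) φ → Function.Periodic φ 1 →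
      (∀ s, Wop (logKer A1 K1) (logKer A2 K2) φ s = 0) → ∀ s, φ s = 0)
    (ε : ℝ) (hε : ε = 1 / 6 ∨ ε = -(1 / 6)) :
    ∃ h0 > (0:ℝ), ∃ C > (0:ℝ), ∀ φ : ℝ → ℂ, ContDiff ℝ (⊤ : ℕ∞) φ → Function.Periodic φ 1 →
      ∀ (N : ℕ) [NeZero N], 1 / (N : ℝ) ≤ h0 →
        (∃! v : ZMod N → ℂ, Nys (logKer A1 K1) (logKer A2 K2) ε N φ v) ∧
        ∀ v : ZMod N → ℂ, Nys (logKer A1 K1) (logKer A2 K2) ε N φ v →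
          ∀ c : ZMod N → ℂ,
            (∀ m : ℤ, -((N : ℝ) / 2) < (m : ℝ) → (m : ℝ) ≤ (N : ℝ) / 2 →
              fc (stepf N 0 c) m = fc φ m) →
            Real.sqrt (∫ t in (0:ℝ)..1, ‖stepf N 0 v t - stepf N 0 c t‖ ^ 2) ≤
              C * (1 / (N : ℝ)) ^ 2 * sobNorm 3 φ := by
  have hε' : |ε| = 1 / 6 := by
    rcases hε with rfl | rfl
    · rw [abs_of_pos (by norm_num)]
    · rw [abs_neg, abs_of_pos (by norm_num)]
  obtain ⟨b1, hb1, eb1⟩ := hA1.expansion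
  obtain ⟨k1, hk1, ek1⟩ := hK1.expansion
  obtain ⟨b2, hb2, eb2⟩ := hA2.expansion
  obtain ⟨k2, hk2, ek2⟩ := hK2.expansion
  set z : ℂ := Complex.I / (2 * Real.pi) with hz
  have hz0 : z ≠ 0 := div_ne_zero Complex.I_ne_zero
    (mul_ne_zero two_ne_zero (by exact_mod_cast Real.pi_ne_zero))
  have D : KData A1 K1 A2 K2 (fun n q => z * b1 n q) k1 (fun n q => z * b2 n q) k2 :=
    ⟨hA1, hK1, hA2, hK2, Rapid2.const_mul hb1 z, hk1, Rapid2.const_mul hb2 z, hk2,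
      KExp.const_mul eb1 z, ek1, KExp.const_mul eb2 z, ek2⟩
  have hβ : ∀ n, ∑' q, z * b1 n q = if n = 0 then z * α else 0 := by
    intro n
    rw [tsum_mul_left, diag_coeff b1 α (hb1 2 2) eb1 hdiag n, mul_ite, mul_zero]
  obtain ⟨N0, Cs, hCs, hst⟩ := concrete_stability D.ha1 D.hk1 D.ha2 D.hk2 ε hε' (z * α)
    (mul_ne_zero hz0 hα) hβ (D.seq_injective hinj)
  obtain ⟨Cc, hCc, hcons⟩ := D.consistency ε hε'
  refine ⟨1 / ((N0 : ℝ) + 1), by positivity, √(128 * (Cs * Cc ^ 2 + 1024)), by positivity, ?_⟩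
  intro φ hφ hp N _ hN0
  have hN : (0:ℝ) < N := by exact_mod_cast NeZero.pos N
  have hNc : (N : ℂ) ≠ 0 := by exact_mod_cast NeZero.ne N
  have hNN : N0 ≤ N := by
    have := (one_div_le_one_div hN (by positivity)).mp hN0
    exact_mod_cast (by linarith : (N0 : ℝ) ≤ N)
  have hstab := D.nys_stable ε hε' (z * α) hβ N Cs (hst N hNN)
  have hbij : Function.Bijective (nysL (logKer A1 K1) (logKer A2 K2) ε N) := by
    have hi : Function.Injective (nysL (logKer A1 K1) (logKer A2 K2) ε N) := by
      rw [injective_iff_map_eq_zero]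
      intro v hv
      obtain ⟨u, rfl⟩ := synthL_surjective N 0 v
      have h := hstab u
      change nysL _ _ ε N (synth N 0 u) = 0 at hv
      simp only [hv, Pi.zero_apply, mul_zero, norm_zero] at h
      have h0 : ∑ k, ‖u k‖ ^ 2 = 0 := le_antisymm (by simpa using h) (by positivity)
      have : u = 0 := by
        ext k
        have := (Finset.sum_eq_zero_iff_of_nonneg (fun k _ => by positivity)).mp h0 k
          (Finset.mem_univ k)
        simpa using this
      rw [this, map_zero]
    exact ⟨hi, LinearMap.injective_iff_surjective.mp hi⟩
  refine ⟨?_, ?_⟩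
  · simp only [nys_iff]
    exact hbij.existsUnique _
  intro v hv c hc
  rw [nys_iff] at hv
  obtain ⟨u, rfl⟩ := synthL_surjective N 0 v
  obtain ⟨w, rfl⟩ := synthL_surjective N 0 c
  change nysL _ _ ε N (synth N 0 u) = _ at hv
  -- the discrete error against the central Fourier coefficients of `φ`
  have h1 : ∑ k, ‖u k - fc φ k.valMinAbs‖ ^ 2 ≤ Cs * ((Cc / N ^ 2) ^ 2 * energy φ) := by
    have h := hstab (u - fun k => fc φ k.valMinAbs)
    have hsub : synth N 0 (u - fun k => fc φ k.valMinAbs) =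
        synth N 0 u - synth N 0 (fun k => fc φ k.valMinAbs) :=
      map_sub (synthL N 0) u (fun k => fc φ k.valMinAbs)
    rw [hsub, map_sub, hv] at h
    refine h.trans ?_
    refine mul_le_mul_of_nonneg_left ?_ hCs.le
    rw [one_div, inv_mul_le_iff₀ hN]
    refine le_trans (le_of_eq ?_) (hcons φ hφ hp N)
    refine Finset.sum_congr rfl fun i _ => ?_
    rw [Pi.sub_apply, nysL_apply, ← norm_neg]
    congr 2
    field_simp
    ring
  have h2 : ∑ k, ‖fc φ k.valMinAbs - w k‖ ^ 2 ≤ (32 / N ^ 2) ^ 2 * energy φ := by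
    have hmem : ∀ k : ZMod N, ‖fc φ k.valMinAbs - w k‖ ^ 2 ≤
        (32 / (N:ℝ) ^ 2) ^ 2 * (jb k.valMinAbs ^ 3 * ‖fc φ k.valMinAbs‖) ^ 2 := by
      intro k
      have hk := k.valMinAbs_mem_Ioc
      have hl : (-(N : ℤ) : ℝ) < k.valMinAbs * 2 := by exact_mod_cast hk.1
      have hr : (k.valMinAbs * 2 : ℝ) ≤ N := by exact_mod_cast hk.2
      push_cast at hl
      rw [← mul_pow]
      gcongr
      exact step_coeff_close N w k _ (hc k.valMinAbs (by linarith) (by linarith))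
    have hin : Function.Injective (fun k : ZMod N => k.valMinAbs) := ZMod.injective_valMinAbs
    calc _ ≤ ∑ k : ZMod N, (32 / (N:ℝ) ^ 2) ^ 2 *
          (jb k.valMinAbs ^ 3 * ‖fc φ k.valMinAbs‖) ^ 2 := Finset.sum_le_sum fun k _ => hmem k
      _ ≤ _ := by
          rw [← Finset.mul_sum]
          gcongr
          rw [← tsum_fintype (L := .unconditional _)]
          exact tsum_comp_le_tsum_of_inj (energy_summable φ hφ hp) (fun _ => sq_nonneg _) hin
  have h3 : ∑ k, ‖u k - w k‖ ^ 2 ≤ 2 * (∑ k, ‖u k - fc φ k.valMinAbs‖ ^ 2) +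
      2 * ∑ k, ‖fc φ k.valMinAbs - w k‖ ^ 2 := by
    rw [Finset.mul_sum, Finset.mul_sum, ← Finset.sum_add_distrib]
    refine Finset.sum_le_sum fun k _ => ?_
    have ht := norm_sub_le_norm_sub_add_norm_sub (u k) (fc φ k.valMinAbs) (w k)
    have := norm_nonneg (u k - w k)
    nlinarith [sq_nonneg (‖u k - fc φ k.valMinAbs‖ - ‖fc φ k.valMinAbs - w k‖)]
  have hE := energy_le_sobNorm φ hφ hp
  have hS : 0 ≤ sobNorm 3 φ := Real.sqrt_nonneg _
  rw [stepf_l2]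
  have h4 : 1 / (N:ℝ) * ∑ r, ‖synthL N 0 u r - synthL N 0 w r‖ ^ 2 = ∑ k, ‖u k - w k‖ ^ 2 := by
    have e : ∀ r, synthL N 0 u r - synthL N 0 w r = synth N 0 (u - w) r := fun r =>
      (congrFun (map_sub (synthL N 0) u w) r).symm
    simp only [e, synth_parseval, Pi.sub_apply]
    field_simp
  rw [h4]
  refine Real.sqrt_le_iff.mpr ⟨by positivity, ?_⟩
  rw [mul_pow, mul_pow, Real.sq_sqrt (by positivity)]
  calc _ ≤ 2 * (Cs * ((Cc / N ^ 2) ^ 2 * energy φ)) + 2 * ((32 / N ^ 2) ^ 2 * energy φ) := by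
        linarith
    _ = 2 * (Cs * Cc ^ 2 + 1024) * ((1 / (N:ℝ)) ^ 2) ^ 2 * energy φ := by ring
    _ ≤ 2 * (Cs * Cc ^ 2 + 1024) * ((1 / (N:ℝ)) ^ 2) ^ 2 * (64 * sobNorm 3 φ ^ 2) := by gcongr
    _ = _ := by ring
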